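/- Let u be an AB-entropy solution of u_t + f(x,u)_x = 0 on ℝ × [0,∞). Then for every x ∈ ℝ the set C(u,x) is nonempty, i.e. there exists an AB-genuine/interface characteristic ζ : [0,T] → ℝ for u with ζ(T) = x. -/

import Mathlib

open MeasureTheory Set Filter

noncomputable section

/-- The discontinuous flux `f(x,u) = f_l(u)` for `x < 0`, `f_r(u)` for `x > 0`
(the value at the interface is taken to be `f_r(u)`). -/
def dflux (fl fr : ℝ → ℝ) (x u : ℝ) : ℝ := if x < 0 then fl u else fr u

/-- The connection function `c^{AB}`. -/
def cAB (A B : ℝ) (x : ℝ) : ℝ := if x ≤ 0 then A else B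

/-- An `AB`-entropy solution of `u_t + f(x,u)_x = 0` on `ℝ × [0,∞)` with
initial datum `u0`, for the flux `f(x,·) = fl` on `x<0` and `fr` on `x>0`,
relative to the connection `(A,B)`.  The structure bundles the solution `u`
(as a function of `(x,t)`), its one-sided spatial limits `um x t = u(x-,t)` and
`up x t = u(x+,t)` (for `t > 0`), the weak (distributional) formulation, the
Kružkov entropy inequalities away from the interface, the `AB`-interface
entropy inequality, `L¹_loc`-continuity in time and the initial condition. -/
structure ABSol (fl fr : ℝ → ℝ) (A B : ℝ) (u0 : ℝ → ℝ) where
  u : ℝ → ℝ → ℝ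
  meas : Measurable (Function.uncurry u)
  bdd : ∃ M : ℝ, ∀ x t, |u x t| ≤ M
  um : ℝ → ℝ → ℝ
  up : ℝ → ℝ → ℝ
  um_spec : ∀ x t, 0 < t →
    Tendsto (fun y => u y t) (nhdsWithin x (Iio x)) (nhds (um x t))
  up_spec : ∀ x t, 0 < t →
    Tendsto (fun y => u y t) (nhdsWithin x (Ioi x)) (nhds (up x t))
  weak : ∀ φ : ℝ → ℝ → ℝ,
    ContDiff ℝ 1 (fun p : ℝ × ℝ => φ p.1 p.2) →
    HasCompactSupport (fun p : ℝ × ℝ => φ p.1 p.2) →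
    (∀ x t, t ≤ 0 → φ x t = 0) →
    (∫ p : ℝ × ℝ, (u p.1 p.2 * deriv (fun s => φ p.1 s) p.2 +
        dflux fl fr p.1 (u p.1 p.2) * deriv (fun y => φ y p.2) p.1)) = 0
  kruzkov_l : ∀ (k : ℝ) (φ : ℝ → ℝ → ℝ),
    ContDiff ℝ 1 (fun p : ℝ × ℝ => φ p.1 p.2) →
    HasCompactSupport (fun p : ℝ × ℝ => φ p.1 p.2) →
    (∀ x t, 0 ≤ φ x t) →
    (∀ x t, 0 ≤ x ∨ t ≤ 0 → φ x t = 0) →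
    0 ≤ ∫ p : ℝ × ℝ, (|u p.1 p.2 - k| * deriv (fun s => φ p.1 s) p.2 +
        Real.sign (u p.1 p.2 - k) * (fl (u p.1 p.2) - fl k) *
          deriv (fun y => φ y p.2) p.1)
  kruzkov_r : ∀ (k : ℝ) (φ : ℝ → ℝ → ℝ),
    ContDiff ℝ 1 (fun p : ℝ × ℝ => φ p.1 p.2) →
    HasCompactSupport (fun p : ℝ × ℝ => φ p.1 p.2) →
    (∀ x t, 0 ≤ φ x t) →
    (∀ x t, x ≤ 0 ∨ t ≤ 0 → φ x t = 0) →
    0 ≤ ∫ p : ℝ × ℝ, (|u p.1 p.2 - k| * deriv (fun s => φ p.1 s) p.2 +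
        Real.sign (u p.1 p.2 - k) * (fr (u p.1 p.2) - fr k) *
          deriv (fun y => φ y p.2) p.1)
  interfaceEntropy : ∀ φ : ℝ → ℝ → ℝ,
    ContDiff ℝ 1 (fun p : ℝ × ℝ => φ p.1 p.2) →
    HasCompactSupport (fun p : ℝ × ℝ => φ p.1 p.2) →
    (∀ x t, 0 ≤ φ x t) →
    (∀ x t, t ≤ 0 → φ x t = 0) →
    0 ≤ ∫ p : ℝ × ℝ, (|u p.1 p.2 - cAB A B p.1| * deriv (fun s => φ p.1 s) p.2 +
        Real.sign (u p.1 p.2 - cAB A B p.1) *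
          (dflux fl fr p.1 (u p.1 p.2) - dflux fl fr p.1 (cAB A B p.1)) *
          deriv (fun y => φ y p.2) p.1)
  timeCont : ∀ (r t₀ : ℝ), 0 ≤ t₀ →
    Tendsto (fun t => ∫ x in Icc (-r) r, |u x t - u x t₀|)
      (nhdsWithin t₀ (Ici 0)) (nhds 0)
  init : ∀ᵐ x : ℝ ∂volume, u x 0 = u0 x

/-- `AB`-genuine/interface characteristic for the `AB`-entropy solution `sol`,
on the time interval `[0,T]`, where `γ = f_l(A) = f_r(B)`. -/
def IsABgic (T : ℝ) (fl fr : ℝ → ℝ) (γ : ℝ) {A B : ℝ} {u0 : ℝ → ℝ}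
    (sol : ABSol fl fr A B u0) (ζ : ℝ → ℝ) : Prop :=
  (∃ K : NNReal, LipschitzOnWith K ζ (Icc 0 T)) ∧
  (∀ᵐ t ∂(volume.restrict (Icc 0 T)),
    (ζ t < 0 → HasDerivAt ζ (deriv fl (sol.um (ζ t) t)) t ∧
      deriv fl (sol.um (ζ t) t) = deriv fl (sol.up (ζ t) t)) ∧
    (0 < ζ t → HasDerivAt ζ (deriv fr (sol.um (ζ t) t)) t ∧
      deriv fr (sol.um (ζ t) t) = deriv fr (sol.up (ζ t) t)) ∧
    (ζ t = 0 → fl (sol.um 0 t) = γ ∧ fr (sol.up 0 t) = γ))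

/-- `C(u,x)`: the set of `AB`-genuine/interface characteristics of `sol`
reaching `x` at time `T`. -/
def charSet (T : ℝ) (fl fr : ℝ → ℝ) (γ : ℝ) {A B : ℝ} {u0 : ℝ → ℝ}
    (sol : ABSol fl fr A B u0) (x : ℝ) : Set (ℝ → ℝ) :=
  {ζ | IsABgic T fl fr γ sol ζ ∧ ζ T = x}

/-- `C₀(u,x)`: the set of initial positions `ζ(0)` of characteristics in `C(u,x)`. -/
def charSet0 (T : ℝ) (fl fr : ℝ → ℝ) (γ : ℝ) {A B : ℝ} {u0 : ℝ → ℝ}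
    (sol : ABSol fl fr A B u0) (x : ℝ) : Set ℝ :=
  (fun ζ : ℝ → ℝ => ζ 0) '' charSet T fl fr γ sol x

/-- Membership in `L^∞(ℝ)`: measurable and (essentially) bounded. -/
def IsLinf (g : ℝ → ℝ) : Prop :=
  Measurable g ∧ ∃ M : ℝ, ∀ᵐ x : ℝ ∂volume, |g x| ≤ M

/-- `ω ∈ A^{[AB]}(T)`: the profile `ω` is attainable at time `T`. -/
def Attainable (T : ℝ) (fl fr : ℝ → ℝ) (A B : ℝ) (ω : ℝ → ℝ) : Prop :=
  ∃ u0 : ℝ → ℝ, IsLinf u0 ∧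
    ∃ sol : ABSol fl fr A B u0, ∀ᵐ x : ℝ ∂volume, sol.u x T = ω x

/-- `I_T^{[AB]}(ω)`: the set of (bounded) initial data whose `AB`-entropy
solution coincides a.e. with `ω` at time `T`. -/
def InitialSet (T : ℝ) (fl fr : ℝ → ℝ) (A B : ℝ) (ω : ℝ → ℝ) : Set (ℝ → ℝ) :=
  {u0 | IsLinf u0 ∧
    ∃ sol : ABSol fl fr A B u0, ∀ᵐ x : ℝ ∂volume, sol.u x T = ω x}

/-- `x` is a point of continuity of `ω`: the one-sided limits exist and coincide. -/
def ContinuityPt (ω : ℝ → ℝ) (x : ℝ) : Prop :=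
  ∃ l : ℝ, Tendsto ω (nhdsWithin x (Iio x)) (nhds l) ∧
    Tendsto ω (nhdsWithin x (Ioi x)) (nhds l)

def pdt (φ : ℝ × ℝ → ℝ) (p : ℝ × ℝ) : ℝ := deriv (fun s => φ (p.1, s)) p.2
def pdx (φ : ℝ × ℝ → ℝ) (p : ℝ × ℝ) : ℝ := deriv (fun y => φ (y, p.2)) p.1

lemma pdt_eq (φ : ℝ × ℝ → ℝ) (p : ℝ × ℝ) : pdt φ p = lineDeriv ℝ φ p (0, 1) := by
  unfold pdt lineDeriv
  have := deriv_comp_const_add (fun s => φ (p.1, s)) p.2 0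
  simp only [add_zero] at this
  rw [← this]
  congr 1; ext t
  congr 1; ext <;> simp

lemma pdx_eq (φ : ℝ × ℝ → ℝ) (p : ℝ × ℝ) : pdx φ p = lineDeriv ℝ φ p (1, 0) := by
  unfold pdx lineDeriv
  have := deriv_comp_const_add (fun s => φ (s, p.2)) p.1 0
  simp only [add_zero] at this
  rw [← this]
  congr 1; ext t
  congr 1; ext <;> simp

def LipT (a b : ℝ × ℝ → ℝ) (O : Set (ℝ × ℝ)) : Prop :=
  ∀ φ : ℝ × ℝ → ℝ, (∃ K, LipschitzWith K φ) → HasCompactSupport φ → tsupport φ ⊆ O →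
    (∀ p, 0 ≤ φ p) → 0 ≤ ∫ p, (a p * pdt φ p + b p * pdx φ p)

open Convolution in
lemma lineDeriv_moll {K : NNReal} {φ ρ : ℝ × ℝ → ℝ} (hφ : LipschitzWith K φ)
    (hρ : Continuous ρ) (hρc : HasCompactSupport ρ) (v p : ℝ × ℝ) :
    lineDeriv ℝ (ρ ⋆[ContinuousLinearMap.lsmul ℝ ℝ, volume] φ) p v
      = (ρ ⋆[ContinuousLinearMap.lsmul ℝ ℝ, volume] (fun q => lineDeriv ℝ φ q v)) p := by
  have hρi : Integrable ρ := hρ.integrable_of_hasCompactSupport hρc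
  have key := hasDerivAt_integral_of_dominated_loc_of_lip (μ := (volume : Measure (ℝ × ℝ)))
    (F := fun (t : ℝ) q => ρ q * φ (p + t • v - q)) (x₀ := 0) (s := univ)
    (F' := fun q => ρ q * lineDeriv ℝ φ (p - q) v)
    (bound := fun q => |ρ q| * (K * ‖v‖)) univ_mem ?_ ?_ ?_ ?_ ?_ ?_
  · have := key.2.deriv
    unfold lineDeriv
    simp only [convolution_def, ContinuousLinearMap.lsmul_apply, smul_eq_mul]
    exact this
  · refine Eventually.of_forall fun t => Continuous.aestronglyMeasurable ?_
    have := hφ.continuous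
    fun_prop
  · refine Continuous.integrable_of_hasCompactSupport ?_ ?_
    · have := hφ.continuous
      fun_prop
    · exact hρc.mul_right
  · have h1 : Measurable (fun q => lineDeriv ℝ φ q v) :=
      measurable_lineDeriv hφ.continuous
    have h2 : Measurable (fun q => lineDeriv ℝ φ (p - q) v) :=
      h1.comp (measurable_const.sub measurable_id)
    exact (hρ.measurable.mul h2).aestronglyMeasurable
  · refine Eventually.of_forall fun q => ?_
    refine LipschitzOnWith.of_dist_le_mul fun s _ t _ => ?_
    rw [Real.dist_eq, Real.dist_eq, ← mul_sub, abs_mul]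
    have h := hφ.dist_le_mul (p + s • v - q) (p + t • v - q)
    rw [Real.dist_eq] at h
    have h3 : dist (p + s • v - q) (p + t • v - q) = |s - t| * ‖v‖ := by
      rw [dist_eq_norm, show p + s • v - q - (p + t • v - q) = (s - t) • v by rw [sub_smul]; abel, norm_smul,
        Real.norm_eq_abs]
    rw [h3] at h
    have h4 : (Real.nnabs (|ρ q| * (K * ‖v‖)) : ℝ) = |ρ q| * (K * ‖v‖) := by
      rw [Real.coe_nnabs, abs_of_nonneg (by positivity)]
    rw [h4]
    nlinarith [abs_nonneg (ρ q)]
  · exact hρi.abs.mul_const _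
  · have h1 := hφ.ae_lineDifferentiableAt (μ := volume) v
    have h2 : ∀ᵐ q : ℝ × ℝ, LineDifferentiableAt ℝ φ (p - q) v :=
      (Measure.measurePreserving_sub_left volume p).quasiMeasurePreserving.ae h1
    filter_upwards [h2] with q hq
    have h3 := (hq.hasLineDerivAt)
    unfold HasLineDerivAt at h3
    have h5 := h3.const_mul (ρ q)
    refine h5.congr_of_eventuallyEq (Eventually.of_forall fun t => ?_)
    simp only
    congr 2
    abel

open Convolution in
lemma LipT_of_C1 {a b : ℝ × ℝ → ℝ} {O : Set (ℝ × ℝ)} (hO : IsOpen O)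
    (ham : Measurable a) (hbm : Measurable b) {C : ℝ} (ha : ∀ p, |a p| ≤ C) (hb : ∀ p, |b p| ≤ C)
    (h : ∀ φ : ℝ × ℝ → ℝ, ContDiff ℝ 1 φ → HasCompactSupport φ → tsupport φ ⊆ O →
      (∀ p, 0 ≤ φ p) → 0 ≤ ∫ p, (a p * pdt φ p + b p * pdx φ p)) : LipT a b O := by
  rintro φ ⟨K, hφ⟩ hc hs h0
  obtain ⟨δ, hδ, hδO⟩ := IsCompact.exists_cthickening_subset_open hc hO hs
  have hC : 0 ≤ C := (abs_nonneg _).trans (ha 0)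
  let bump : ℕ → ContDiffBump (0 : ℝ × ℝ) := fun n =>
    ⟨δ / 2 / (n + 2), δ / (n + 2), by positivity, by
      rw [div_right_comm]
      exact half_lt_self (by positivity)⟩
  let ρ : ℕ → ℝ × ℝ → ℝ := fun n => (bump n).normed volume
  let φn : ℕ → ℝ × ℝ → ℝ := fun n => (ρ n ⋆[ContinuousLinearMap.lsmul ℝ ℝ, volume] φ)
  have hρc : ∀ n, Continuous (ρ n) := fun n => (bump n).continuous_normed
  have hρs : ∀ n, HasCompactSupport (ρ n) := fun n => (bump n).hasCompactSupport_normed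
  have hloc : LocallyIntegrable φ volume := hφ.continuous.locallyIntegrable
  have hrout : ∀ n, (bump n).rOut < δ := fun n => by
    show δ / (n + 2) < δ
    rw [div_lt_iff₀ (by positivity)]
    nlinarith [(Nat.cast_nonneg n : (0 : ℝ) ≤ n)]
  -- generic support lemma
  have hsupp : ∀ n (g : ℝ × ℝ → ℝ), Function.support g ⊆ tsupport φ →
      Function.support (ρ n ⋆[ContinuousLinearMap.lsmul ℝ ℝ, volume] g) ⊆ Metric.cthickening δ (tsupport φ) := by
    intro n g hg
    refine (support_convolution_subset _).trans ?_
    rintro _ ⟨x, hx, y, hy, rfl⟩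
    have hx' : x ∈ Metric.ball (0 : ℝ × ℝ) (bump n).rOut := by
      rw [← (bump n).support_normed_eq (μ := volume)]; exact hx
    rw [Metric.mem_ball, dist_zero_right] at hx'
    refine Metric.mem_cthickening_of_dist_le _ y _ _ (hg hy) ?_
    simp only [dist_eq_norm, add_sub_cancel_right]
    exact (hx'.trans (hrout n)).le
  have hKc : IsCompact (Metric.cthickening δ (tsupport φ)) := hc.cthickening
  have hclosed : IsClosed (Metric.cthickening δ (tsupport φ)) := Metric.isClosed_cthickening
  have hld : ∀ v, Function.support (fun q => lineDeriv ℝ φ q v) ⊆ tsupport φ := by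
    intro v q hq
    by_contra hcon
    apply hq
    have : φ =ᶠ[nhds q] fun _ => 0 := by
      have : (tsupport φ)ᶜ ∈ nhds q := (isClosed_tsupport φ).isOpen_compl.mem_nhds hcon
      filter_upwards [this] with x hx
      exact image_eq_zero_of_notMem_tsupport hx
    have h2 := Filter.EventuallyEq.lineDeriv_eq (𝕜 := ℝ) (v := v) this
    simp only [h2]
    simp [lineDeriv]
  have hlb : ∀ v q, |lineDeriv ℝ φ q v| ≤ K * ‖v‖ := fun v q =>
    norm_lineDeriv_le_of_lipschitz ℝ hφ
  have hconv : ∀ v, ∀ᵐ x : ℝ × ℝ, Tendsto (fun n => (ρ n ⋆[ContinuousLinearMap.lsmul ℝ ℝ, volume]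
      (fun q => lineDeriv ℝ φ q v)) x) atTop (nhds (lineDeriv ℝ φ x v)) := by
    intro v
    refine ContDiffBump.ae_convolution_tendsto_right_of_locallyIntegrable (K := 2) ?_ ?_
      (hφ.locallyIntegrable_lineDeriv v)
    · show Tendsto (fun n : ℕ => δ / ((n : ℝ) + 2)) atTop (nhds 0)
      exact Tendsto.const_div_atTop (tendsto_atTop_add_const_right _ _ tendsto_natCast_atTop_atTop) _
    · refine Eventually.of_forall fun n => ?_
      show δ / (n + 2) ≤ 2 * (δ / 2 / (n + 2))
      apply le_of_eq; ring
  have hbd : ∀ v n x, |(ρ n ⋆[ContinuousLinearMap.lsmul ℝ ℝ, volume]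
      (fun q => lineDeriv ℝ φ q v)) x| ≤ K * ‖v‖ := by
    intro v n x
    have h1 := norm_integral_le_of_norm_le (μ := volume) (f := fun t => ρ n t * lineDeriv ℝ φ (x - t) v)
      (g := fun t => ρ n t * (K * ‖v‖)) (((hρc n).integrable_of_hasCompactSupport (hρs n)).mul_const _)
      (Eventually.of_forall fun t => by
        rw [norm_mul, Real.norm_eq_abs, Real.norm_eq_abs, abs_of_nonneg ((bump n).nonneg_normed t)]
        exact mul_le_mul_of_nonneg_left (hlb v _) ((bump n).nonneg_normed t))
    rw [integral_mul_const, (bump n).integral_normed, one_mul] at h1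
    simpa [convolution_def] using h1
  have hmeas : ∀ v, Measurable (fun q => lineDeriv ℝ φ q v) := fun v => measurable_lineDeriv hφ.continuous
  have hcont : ∀ n v, Continuous (ρ n ⋆[ContinuousLinearMap.lsmul ℝ ℝ, volume]
      (fun q => lineDeriv ℝ φ q v)) := fun n v =>
    (hρs n).continuous_convolution_left _ (hρc n) (hφ.locallyIntegrable_lineDeriv v)
  have hn : ∀ n, 0 ≤ ∫ p, (a p * pdt (φn n) p + b p * pdx (φn n) p) := by
    intro n
    have hts : tsupport (φn n) ⊆ Metric.cthickening δ (tsupport φ) :=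
      closure_minimal (hsupp n φ (subset_tsupport φ)) hclosed
    refine h (φn n) ?_ ?_ (hts.trans hδO) ?_
    · exact (hρs n).contDiff_convolution_left _ (bump n).contDiff_normed hloc
    · exact hKc.of_isClosed_subset (isClosed_tsupport _) hts
    · intro p
      simp only [φn, convolution_def, ContinuousLinearMap.lsmul_apply, smul_eq_mul]
      exact integral_nonneg fun t => mul_nonneg ((bump n).nonneg_normed t) (h0 _)
  have hlim : Tendsto (fun n => ∫ p, (a p * pdt (φn n) p + b p * pdx (φn n) p)) atTop
      (nhds (∫ p, (a p * pdt φ p + b p * pdx φ p))) := by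
    simp only [pdt_eq, pdx_eq]
    have hrw : ∀ n v p, lineDeriv ℝ (φn n) p v = (ρ n ⋆[ContinuousLinearMap.lsmul ℝ ℝ, volume]
      (fun q => lineDeriv ℝ φ q v)) p := fun n v p => lineDeriv_moll hφ (hρc n) (hρs n) v p
    simp only [hrw]
    refine tendsto_integral_of_dominated_convergence
      (fun p => (Metric.cthickening δ (tsupport φ)).indicator
        (fun _ => C * (K * ‖((0 : ℝ), (1 : ℝ))‖) + C * (K * ‖((1 : ℝ), (0 : ℝ))‖)) p) ?_ ?_ ?_ ?_
    · intro n
      exact ((ham.mul (hcont n _).measurable).add (hbm.mul (hcont n _).measurable)).aestronglyMeasurable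
    · rw [integrable_indicator_iff hclosed.measurableSet]
      exact integrableOn_const hKc.measure_lt_top.ne
    · intro n
      refine Eventually.of_forall fun p => ?_
      by_cases hp : p ∈ Metric.cthickening δ (tsupport φ)
      · rw [indicator_of_mem hp, Real.norm_eq_abs]
        refine (abs_add_le _ _).trans ?_
        rw [abs_mul, abs_mul]
        exact add_le_add (mul_le_mul (ha p) (hbd _ _ _) (abs_nonneg _) hC)
          (mul_le_mul (hb p) (hbd _ _ _) (abs_nonneg _) hC)
      · rw [indicator_of_notMem hp]
        have e : ∀ v, (ρ n ⋆[ContinuousLinearMap.lsmul ℝ ℝ, volume]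
            (fun q => lineDeriv ℝ φ q v)) p = 0 := fun v => by
          by_contra hne
          exact hp (hsupp n _ (hld v) hne)
        rw [e, e]; simp
    · filter_upwards [hconv (0, 1), hconv (1, 0)] with p h1 h2
      exact (h1.const_mul _).add (h2.const_mul _)
  exact ge_of_tendsto' hlim hn

lemma integrable_of_bdd_compact {g : ℝ × ℝ → ℝ} {S : Set (ℝ × ℝ)} {C : ℝ} (hg : Measurable g)
    (hC : ∀ p, |g p| ≤ C) (hS : IsCompact S) (h0 : ∀ p, p ∉ S → g p = 0) : Integrable g := by
  have h1 : IntegrableOn g S := by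
    refine Measure.integrableOn_of_bounded (M := C) hS.measure_lt_top.ne hg.aestronglyMeasurable ?_
    exact Eventually.of_forall hC
  rwa [integrableOn_iff_integrable_of_support_subset] at h1
  intro p hp
  by_contra h
  exact hp (h0 p h)

lemma measurable_pdt {φ : ℝ × ℝ → ℝ} (h : Continuous φ) : Measurable (pdt φ) := by
  have : pdt φ = fun p => lineDeriv ℝ φ p (0, 1) := funext (pdt_eq φ)
  rw [this]; exact measurable_lineDeriv h

lemma measurable_pdx {φ : ℝ × ℝ → ℝ} (h : Continuous φ) : Measurable (pdx φ) := by
  have : pdx φ = fun p => lineDeriv ℝ φ p (1, 0) := funext (pdx_eq φ)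
  rw [this]; exact measurable_lineDeriv h

lemma abs_pdt_le {K : NNReal} {φ : ℝ × ℝ → ℝ} (h : LipschitzWith K φ) (p) : |pdt φ p| ≤ K := by
  rw [pdt_eq]
  have := norm_lineDeriv_le_of_lipschitz ℝ h (x₀ := p) (v := (0, 1))
  simpa [Prod.norm_def] using this

lemma abs_pdx_le {K : NNReal} {φ : ℝ × ℝ → ℝ} (h : LipschitzWith K φ) (p) : |pdx φ p| ≤ K := by
  rw [pdx_eq]
  have := norm_lineDeriv_le_of_lipschitz ℝ h (x₀ := p) (v := (1, 0))
  simpa [Prod.norm_def] using this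

lemma integral_pdt_eq_zero {K : NNReal} {φ : ℝ × ℝ → ℝ} (h : LipschitzWith K φ)
    (hc : HasCompactSupport φ) : ∫ p, pdt φ p = 0 := by
  have h1 : LipschitzWith 0 (fun _ : ℝ × ℝ => (1 : ℝ)) := LipschitzWith.const _
  have := h1.integral_lineDeriv_mul_eq (μ := volume) h hc (0, -1)
  have e0 : ∀ x, lineDeriv ℝ (fun _ : ℝ × ℝ => (1 : ℝ)) x (0, -1) = 0 := fun x => by simp [lineDeriv]
  simp only [e0, zero_mul, integral_zero, mul_one] at this
  simp only [pdt_eq]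
  rw [show ((0:ℝ), (1:ℝ)) = -(0, -1) by simp]
  exact this.symm

lemma sign_mul_self' (w : ℝ) : Real.sign w * w = |w| := by
  rcases lt_trichotomy w 0 with h | h | h
  · rw [Real.sign_of_neg h, abs_of_neg h]; ring
  · simp [h]
  · rw [Real.sign_of_pos h, abs_of_pos h]; ring

lemma abs_sign_le (w : ℝ) : |Real.sign w| ≤ 1 := by
  rcases Real.sign_apply_eq w with h | h | h <;> simp [h]

lemma pdt_zero_of_min {φ : ℝ × ℝ → ℝ} (h0 : ∀ p, 0 ≤ φ p) {p} (hp : φ p = 0) : pdt φ p = 0 := by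
  unfold pdt
  apply IsLocalMin.deriv_eq_zero
  exact Eventually.of_forall fun s => by simpa [hp] using h0 (p.1, s)

lemma pdx_zero_of_min {φ : ℝ × ℝ → ℝ} (h0 : ∀ p, 0 ≤ φ p) {p} (hp : φ p = 0) : pdx φ p = 0 := by
  unfold pdx
  apply IsLocalMin.deriv_eq_zero
  exact Eventually.of_forall fun s => by simpa [hp] using h0 (s, p.2)

lemma ae_fst {P : ℝ → Prop} (h : ∀ᵐ x, P x) : ∀ᵐ p : ℝ × ℝ, P p.1 :=
  (Measure.quasiMeasurePreserving_fst (μ := volume) (ν := volume)).ae h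

lemma ae_snd {P : ℝ → Prop} (h : ∀ᵐ x, P x) : ∀ᵐ p : ℝ × ℝ, P p.2 :=
  (Measure.quasiMeasurePreserving_snd (μ := volume) (ν := volume)).ae h

lemma hasDerivAt_abs_sub {x x0 : ℝ} (h : x ≠ x0) :
    HasDerivAt (fun y => |y - x0|) (Real.sign (x - x0)) x := by
  have h1 := (hasDerivAt_abs (sub_ne_zero.2 h)).comp x ((hasDerivAt_id x).sub_const x0)
  rw [mul_one] at h1
  refine HasDerivAt.congr_deriv h1 ?_
  rcases lt_or_gt_of_ne h with h | h
  · rw [Real.sign_of_neg (by linarith), sign_neg (by linarith)]; simp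
  · rw [Real.sign_of_pos (by linarith), sign_pos (by linarith)]; simp

lemma ET_arith {w α F F0 e1 e2 δ η Kf κ s : ℝ} (hs : s * w = |w|) (hs1 : |s| ≤ 1) (hκ : α + F0 = -κ)
    (h1 : |e1| ≤ 2 * η) (h2 : |e2| ≤ 2 * η) (hF : |F - F0| ≤ Kf * |w|) (hKf : 0 ≤ Kf)
    (hη : 2 * η * (1 + Kf) ≤ κ / 4) (hδ : 0 < δ) (hδ2 : δ * Kf ≤ κ / 4) (hη0 : 0 < η) (hk : 0 < κ) :
    |w| * (α + e1 + F) + s * (F - F0) * (e2 - w) + δ * (α + e1 + F) ≤ - (δ * κ / 2) := by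
  have hw := abs_nonneg w
  have e : |w| * (α + e1 + F) + s * (F - F0) * (e2 - w) = |w| * (-κ + e1) + s * (F - F0) * e2 := by
    rw [← hκ, ← hs]; ring
  rw [e]
  have a1 : |w| * (-κ + e1) ≤ |w| * (-κ + 2 * η) :=
    mul_le_mul_of_nonneg_left (by linarith [(abs_le.1 h1).2]) hw
  have a2 : s * (F - F0) * e2 ≤ Kf * |w| * (2 * η) := by
    refine (le_abs_self _).trans ?_
    rw [abs_mul, abs_mul]
    have : |s| * |F - F0| ≤ Kf * |w| := by nlinarith [abs_nonneg s, abs_nonneg (F - F0)]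
    exact mul_le_mul this h2 (abs_nonneg _) (by positivity)
  have a3 : δ * (α + e1 + F) ≤ δ * (-κ + 2 * η + Kf * |w|) := by
    refine mul_le_mul_of_nonneg_left ?_ hδ.le
    linarith [(abs_le.1 h1).2, (abs_le.1 hF).2]
  have a4 : 2 * η ≤ κ / 4 := by nlinarith
  have a5 : δ * (2 * η) ≤ δ * (κ / 4) := mul_le_mul_of_nonneg_left a4 hδ.le
  have a6 : |w| * (2 * η * (1 + Kf)) ≤ |w| * (κ / 4) := mul_le_mul_of_nonneg_left hη hw
  have a7 : |w| * (δ * Kf) ≤ |w| * (κ / 4) := mul_le_mul_of_nonneg_left hδ2 hw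
  nlinarith

lemma ET {K KP : NNReal} {U u F : ℝ × ℝ → ℝ} {c P : ℝ → ℝ} {O : Set (ℝ × ℝ)} {x0 t0 α F0 Kf C : ℝ}
    (hO : IsOpen O) (hpO : (x0, t0) ∈ O) (hU : LipschitzWith K U) (hP : LipschitzWith KP P)
    (hP0 : P x0 = 0) (hPd : ∀ᵐ x, HasDerivAt P (c x) x)
    (hUd : ∀ᵐ p : ℝ × ℝ, p ∈ O → HasDerivAt (fun s => U (p.1, s)) (-F p) p.2 ∧
      HasDerivAt (fun y => U (y, p.2)) (u p) p.1)
    (hF : ∀ p ∈ O, |F p - F0| ≤ Kf * |u p - c p.1|) (hKf : 0 ≤ Kf)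
    (hum : Measurable u) (hFm : Measurable F) (hcm : Measurable c)
    (hC1 : ∀ p, |u p - c p.1| ≤ C) (hC2 : ∀ p, |F p - F0| ≤ C)
    (hL : LipT (fun p => |u p - c p.1|) (fun p => Real.sign (u p - c p.1) * (F p - F0)) O)
    (hsub : ∀ η > 0, ∃ r > 0, ∀ x t, |x - x0| + |t - t0| < r →
      U (x0, t0) + P x + α * (t - t0) - η * (|x - x0| + |t - t0|) ≤ U (x, t)) : 0 ≤ α + F0 := by
  by_contra hcon
  push Not at hcon
  obtain ⟨κ, hκ⟩ : ∃ κ, α + F0 = -κ := ⟨-(α + F0), by ring⟩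
  have hk : 0 < κ := by linarith
  have hC : 0 ≤ C := (abs_nonneg _).trans (hC1 0)
  obtain ⟨η, hη0, hη⟩ : ∃ η > 0, 2 * η * (1 + Kf) ≤ κ / 4 :=
    ⟨κ / 8 / (1 + Kf), by positivity, by field_simp; norm_num⟩
  obtain ⟨δ, hδ, hδ2⟩ : ∃ δ > 0, δ * Kf ≤ κ / 4 :=
    ⟨κ / 4 / (1 + Kf), by positivity, by
      rw [div_mul_eq_mul_div, div_le_iff₀ (by positivity)]; nlinarith⟩
  obtain ⟨r1, hr1, hr1'⟩ := hsub η hη0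
  obtain ⟨r2, hr2, hr2'⟩ := Metric.isOpen_iff.1 hO _ hpO
  obtain ⟨r, hr, hrr1, hrr2⟩ : ∃ r > 0, r ≤ r1 ∧ r ≤ r2 := ⟨min r1 r2, lt_min hr1 hr2, min_le_left _ _, min_le_right _ _⟩
  let N : ℝ × ℝ → ℝ := fun p => |p.1 - x0| + |p.2 - t0|
  have hNl : LipschitzWith 2 N := by
    refine LipschitzWith.of_dist_le_mul fun p q => ?_
    rw [Real.dist_eq]
    have h1 : |p.1 - q.1| ≤ dist p q := by rw [← Real.dist_eq, Prod.dist_eq]; exact le_max_left _ _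
    have h2 : |p.2 - q.2| ≤ dist p q := by rw [← Real.dist_eq, Prod.dist_eq]; exact le_max_right _ _
    have h3 : |(|p.1 - x0| - |q.1 - x0|)| ≤ |p.1 - q.1| := by
      have := abs_abs_sub_abs_le_abs_sub (p.1 - x0) (q.1 - x0); simpa using this
    have h4 : |(|p.2 - t0| - |q.2 - t0|)| ≤ |p.2 - q.2| := by
      have := abs_abs_sub_abs_le_abs_sub (p.2 - t0) (q.2 - t0); simpa using this
    have h5 : N p - N q = (|p.1 - x0| - |q.1 - x0|) + (|p.2 - t0| - |q.2 - t0|) := by simp only [N]; ring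
    rw [h5]
    refine (abs_add_le _ _).trans ?_
    push_cast; linarith
  have hN0 : ∀ p, 0 ≤ N p := fun p => by positivity
  have hNd : ∀ p, dist p (x0, t0) ≤ N p := fun p => by
    rw [Prod.dist_eq, Real.dist_eq, Real.dist_eq]
    exact max_le (le_add_of_nonneg_right (abs_nonneg _)) (le_add_of_nonneg_left (abs_nonneg _))
  let Λ : ℝ := 2 * (2 * K + |α| + KP)
  let ψ : ℝ × ℝ → ℝ := fun p => U (x0, t0) + P p.1 + α * (p.2 - t0) - 2 * η * N p - Λ * max (N p - r / 2) 0
  have hΛ : 0 ≤ Λ := by positivity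
  have hD : ∀ p, η * N p ≤ U p - ψ p := by
    intro p
    by_cases hp : N p < r
    · have h1 := hr1' p.1 p.2 (hp.trans_le hrr1)
      have h2 : 0 ≤ Λ * max (N p - r / 2) 0 := mul_nonneg hΛ (le_max_right _ _)
      simp only [ψ]
      change _ - η * N p ≤ U p at h1
      linarith
    · push Not at hp
      have h1 := hU.dist_le_mul p (x0, t0)
      have h2 := hP.dist_le_mul p.1 x0
      rw [Real.dist_eq] at h1 h2
      rw [hP0, sub_zero, Real.dist_eq] at h2
      have h3 : |p.1 - x0| ≤ N p := le_add_of_nonneg_right (abs_nonneg _)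
      have h4 : |p.2 - t0| ≤ N p := le_add_of_nonneg_left (abs_nonneg _)
      have h5 : Λ * (N p / 2) ≤ Λ * max (N p - r / 2) 0 :=
        mul_le_mul_of_nonneg_left ((by linarith : N p / 2 ≤ N p - r / 2).trans (le_max_left _ _)) hΛ
      have h6 : α * (p.2 - t0) ≤ |α| * N p := (le_abs_self _).trans (by
        rw [abs_mul]; exact mul_le_mul_of_nonneg_left h4 (abs_nonneg _))
      have h7 : (K : ℝ) * dist p (x0, t0) ≤ K * N p := mul_le_mul_of_nonneg_left (hNd p) K.2
      have h8 : (KP : ℝ) * |p.1 - x0| ≤ KP * N p := mul_le_mul_of_nonneg_left h3 KP.2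
      have h9 : 0 ≤ (K : ℝ) * N p := mul_nonneg K.2 (hN0 p)
      have h10 : 0 ≤ η * N p := mul_nonneg hη0.le (hN0 p)
      have h11 : Λ * (N p / 2) = 2 * (K * N p) + |α| * N p + KP * N p := by simp only [Λ]; ring
      simp only [ψ]
      linarith [(abs_le.1 h1).1, (abs_le.1 h2).2]
  let ε : ℝ := η * r / 2
  have hε : 0 < ε := by positivity
  let φ : ℝ × ℝ → ℝ := fun p => max (ε - (U p - ψ p)) 0
  have hψl : ∃ K', LipschitzWith K' ψ := by
    have l1 : LipschitzWith (KP * 1) (fun p : ℝ × ℝ => P p.1) := hP.comp LipschitzWith.prod_fst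
    have l2 : LipschitzWith (‖α‖₊ * 1) (fun p : ℝ × ℝ => α * (p.2 - t0)) := by
      have : LipschitzWith 1 (fun p : ℝ × ℝ => p.2 - t0) := by
        simpa using (LipschitzWith.prod_snd (α := ℝ) (β := ℝ)).sub (LipschitzWith.const t0)
      have h := (lipschitzWith_smul α).comp this
      exact h
    have l3 : LipschitzWith (‖2 * η‖₊ * 2) (fun p : ℝ × ℝ => 2 * η * N p) := by
      have h := (lipschitzWith_smul (2 * η)).comp hNl
      exact h
    have l4 : LipschitzWith (‖Λ‖₊ * 2) (fun p : ℝ × ℝ => Λ * max (N p - r / 2) 0) := by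
      have : LipschitzWith 2 (fun p : ℝ × ℝ => max (N p - r / 2) 0) := by
        have h := (hNl.sub (LipschitzWith.const (r / 2))).max_const 0
        simpa using h
      have h := (lipschitzWith_smul Λ).comp this
      exact h
    exact ⟨_, ((((LipschitzWith.const (U (x0, t0))).add l1).add l2).sub l3).sub l4⟩
  obtain ⟨Kψ, hKψ⟩ := hψl
  obtain ⟨Kφ, hKφ⟩ : ∃ K', LipschitzWith K' φ :=
    ⟨_, (((LipschitzWith.const ε).sub (hU.sub hKψ))).max_const 0⟩
  have hφ0 : ∀ p, 0 ≤ φ p := fun p => le_max_right _ _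
  have hφN : ∀ p, φ p ≠ 0 → N p < r / 2 := by
    intro p hp
    have : 0 < φ p := lt_of_le_of_ne (hφ0 p) (Ne.symm hp)
    have h2 : 0 < ε - (U p - ψ p) := by
      by_contra hh; push Not at hh
      simp only [φ, max_eq_right hh] at this; exact lt_irrefl _ this
    have h3 := hD p
    have : η * N p < η * (r / 2) := by simp only [ε] at h2; linarith
    exact lt_of_mul_lt_mul_left this hη0.le
  have hts : tsupport φ ⊆ Metric.closedBall (x0, t0) (r / 2) := by
    refine closure_minimal ?_ Metric.isClosed_closedBall
    intro p hp
    exact (hNd p).trans (hφN p hp).le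
  have hcomp : IsCompact (Metric.closedBall (x0, t0) (r / 2)) := isCompact_closedBall _ _
  have hφc : HasCompactSupport φ := hcomp.of_isClosed_subset (isClosed_tsupport _) hts
  have htsO : tsupport φ ⊆ O := by
    refine hts.trans (Subset.trans ?_ hr2')
    exact Metric.closedBall_subset_ball (by linarith)
  have main := hL φ ⟨Kφ, hKφ⟩ hφc htsO hφ0
  have hz := integral_pdt_eq_zero hKφ hφc
  have hoff : ∀ p, p ∉ Metric.closedBall (x0, t0) (r / 2) → φ p = 0 := fun p hp => by
    by_contra h; exact hp (hts (subset_tsupport _ h))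
  have hm1 := measurable_pdt hKφ.continuous
  have hm2 := measurable_pdx hKφ.continuous
  have ham : Measurable (fun p : ℝ × ℝ => u p - c p.1) := hum.sub (hcm.comp measurable_fst)
  have hsm : Measurable Real.sign := by
    unfold Real.sign
    exact Measurable.ite measurableSet_Iio measurable_const
      (Measurable.ite measurableSet_Ioi measurable_const measurable_const)
  have hint1 : Integrable (fun p => |u p - c p.1| * pdt φ p + Real.sign (u p - c p.1) * (F p - F0) * pdx φ p) := by
    refine integrable_of_bdd_compact (C := C * Kφ + 1 * C * Kφ) ?_ ?_ hcomp ?_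
    · have h1 : Measurable fun p : ℝ × ℝ => |u p - c p.1| := by
        simpa [Real.norm_eq_abs] using ham.norm
      exact (h1.mul hm1).add (((hsm.comp ham).mul (hFm.sub_const _)).mul hm2)
    · intro p
      refine (abs_add_le _ _).trans ?_
      rw [abs_mul, abs_mul, abs_mul, abs_abs]
      have b1 := abs_pdt_le hKφ p
      have b2 := abs_pdx_le hKφ p
      exact add_le_add (mul_le_mul (hC1 p) b1 (abs_nonneg _) hC)
        (mul_le_mul (mul_le_mul (abs_sign_le _) (hC2 p) (abs_nonneg _) zero_le_one) b2 (abs_nonneg _) (by simpa using hC))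
    · intro p hp
      rw [pdt_zero_of_min hφ0 (hoff p hp), pdx_zero_of_min hφ0 (hoff p hp)]; simp
  have hint2 : Integrable (fun p => δ * pdt φ p) := by
    refine (integrable_of_bdd_compact (C := Kφ) hm1 (abs_pdt_le hKφ) hcomp ?_).const_mul _
    intro p hp
    exact pdt_zero_of_min hφ0 (hoff p hp)
  let Ω : Set (ℝ × ℝ) := {p | U p - ψ p < ε}
  have hΩo : IsOpen Ω := isOpen_lt (hU.continuous.sub hKψ.continuous) continuous_const
  have hΩN : ∀ p ∈ Ω, N p < r / 2 := by
    intro p hp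
    apply hφN
    have : 0 < ε - (U p - ψ p) := sub_pos.2 hp
    simp only [φ]; rw [max_eq_left this.le]; exact this.ne'
  have hΩm : (x0, t0) ∈ Ω := by
    show U (x0, t0) - ψ (x0, t0) < ε
    have : max (N (x0, t0) - r / 2) 0 = 0 := by
      rw [max_eq_right]; simp only [N, sub_self, abs_zero]; linarith
    simp only [ψ, this]
    simp [N, hP0, hε]
  have hΩsub : Ω ⊆ Metric.closedBall (x0, t0) (r / 2) := fun p hp => (hNd p).trans (hΩN p hp).le
  have hbound : (fun p => |u p - c p.1| * pdt φ p + Real.sign (u p - c p.1) * (F p - F0) * pdx φ p + δ * pdt φ p)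
      ≤ᵐ[volume] fun p => Ω.indicator (fun _ => -(δ * κ / 2)) p := by
    have n1 : ∀ᵐ p : ℝ × ℝ, p.1 ≠ x0 := ae_fst (P := fun x => x ≠ x0) (Measure.ae_ne _ _)
    have n2 : ∀ᵐ p : ℝ × ℝ, p.2 ≠ t0 := ae_snd (P := fun x => x ≠ t0) (Measure.ae_ne _ _)
    filter_upwards [hUd, ae_fst hPd, n1, n2] with p hp hPp hn1 hn2
    by_cases hpΩ : p ∈ Ω
    · rw [indicator_of_mem hpΩ]
      have hpO' : p ∈ O := hr2' (Metric.closedBall_subset_ball (by linarith) (hΩsub hpΩ))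
      obtain ⟨d1, d2⟩ := hp hpO'
      have hev : ∀ᶠ q in nhds p, φ q = ε - (U q - (U (x0, t0) + P q.1 + α * (q.2 - t0) - 2 * η * N q)) := by
        filter_upwards [hΩo.mem_nhds hpΩ] with q hq
        have h1 : max (N q - r / 2) 0 = 0 := max_eq_right (by linarith [hΩN q hq])
        have h2 : 0 ≤ ε - (U q - ψ q) := (sub_pos.2 hq).le
        simp only [φ]; rw [max_eq_left h2]; simp only [ψ, h1]; ring
      have ct : Tendsto (fun s => (p.1, s)) (nhds p.2) (nhds p) := by
        have : Continuous fun s : ℝ => (p.1, s) := by fun_prop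
        exact this.tendsto p.2
      have cx : Tendsto (fun y => (y, p.2)) (nhds p.1) (nhds p) := by
        have : Continuous fun s : ℝ => (s, p.2) := by fun_prop
        exact this.tendsto p.1
      have e1 : pdt φ p = α + (-(2 * η * Real.sign (p.2 - t0))) + F p := by
        unfold pdt
        apply HasDerivAt.deriv
        have h := ((((((hasDerivAt_id p.2).sub_const t0).const_mul α).const_add (U (x0, t0) + P p.1)).sub
          (((hasDerivAt_abs_sub hn2).const_add (|p.1 - x0|)).const_mul (2 * η))))
        have h' := (d1.sub h).const_sub ε
        refine (h'.congr_of_eventuallyEq ((ct.eventually hev).mono fun s hs => ?_)).congr_deriv ?_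
        · simpa [N] using hs
        · ring
      have e2 : pdx φ p = (-(2 * η * Real.sign (p.1 - x0))) - (u p - c p.1) := by
        unfold pdx
        apply HasDerivAt.deriv
        have h := (((hPp.const_add (U (x0, t0))).add_const (α * (p.2 - t0))).sub
          (((hasDerivAt_abs_sub hn1).add_const (|p.2 - t0|)).const_mul (2 * η)))
        have h' := (d2.sub h).const_sub ε
        refine (h'.congr_of_eventuallyEq ((cx.eventually hev).mono fun s hs => ?_)).congr_deriv ?_
        · simpa [N] using hs
        · ring
      have hs2 : ∀ z : ℝ, |(-(2 * η * Real.sign z))| ≤ 2 * η := fun z => by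
        rw [abs_neg, abs_mul, abs_of_pos (by positivity : 0 < 2 * η)]
        exact mul_le_of_le_one_right (by positivity) (abs_sign_le z)
      rw [e1, e2]
      exact ET_arith (sign_mul_self' _) (abs_sign_le _) hκ (hs2 _) (hs2 _) (hF p hpO') hKf hη hδ hδ2 hη0 hk
    · rw [indicator_of_notMem hpΩ]
      have : φ p = 0 := max_eq_right (sub_nonpos.2 (not_lt.1 hpΩ))
      rw [pdt_zero_of_min hφ0 this, pdx_zero_of_min hφ0 this]; simp
  have hΩfin : volume Ω ≠ ⊤ := (lt_of_le_of_lt (measure_mono hΩsub) hcomp.measure_lt_top).ne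
  have hfinal := integral_mono_ae (hint1.add hint2)
    ((integrable_indicator_iff hΩo.measurableSet).2 (integrableOn_const hΩfin)) hbound
  rw [integral_indicator_const _ hΩo.measurableSet] at hfinal
  simp only [Pi.add_apply] at hfinal
  rw [integral_add hint1 hint2, integral_const_mul, hz, mul_zero, add_zero] at hfinal
  have hpos : 0 < volume.real Ω := ENNReal.toReal_pos (hΩo.measure_pos _ ⟨_, hΩm⟩).ne' hΩfin
  have : volume.real Ω • (-(δ * κ / 2)) < 0 := by
    rw [smul_eq_mul]; exact mul_neg_of_pos_of_neg hpos (by have := mul_pos hδ hk; linarith)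
  linarith

def ramp (c h z : ℝ) : ℝ := max 0 (min 1 ((z - c) / h))

lemma ramp_nonneg (c h z : ℝ) : 0 ≤ ramp c h z := le_max_left _ _
lemma ramp_le_one (c h z : ℝ) : ramp c h z ≤ 1 := max_le zero_le_one (min_le_left _ _)
lemma ramp_eq_zero {c h z : ℝ} (hh : 0 < h) (hz : z ≤ c) : ramp c h z = 0 := by
  unfold ramp
  have : (z - c) / h ≤ 0 := div_nonpos_of_nonpos_of_nonneg (by linarith) hh.le
  exact max_eq_left ((min_le_right _ _).trans this)
lemma ramp_eq_one {c h z : ℝ} (hh : 0 < h) (hz : c + h ≤ z) : ramp c h z = 1 := by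
  unfold ramp
  have : 1 ≤ (z - c) / h := by rw [le_div_iff₀ hh]; linarith
  rw [min_eq_left this]; simp
lemma ramp_mid {c h z : ℝ} (hh : 0 < h) (hz : c ≤ z) (hz2 : z ≤ c + h) : ramp c h z = (z - c) / h := by
  unfold ramp
  have h1 : (z - c) / h ≤ 1 := by rw [div_le_iff₀ hh]; linarith
  have h2 : 0 ≤ (z - c) / h := div_nonneg (by linarith) hh.le
  rw [min_eq_right h1, max_eq_right h2]
lemma ramp_anti {c c' h z : ℝ} (hh : 0 < h) (hc : c ≤ c') : ramp c' h z ≤ ramp c h z := by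
  unfold ramp; gcongr

lemma ramp_lip (c : ℝ) {h : ℝ} : ∃ K, LipschitzWith K (ramp c h) := by
  have l1 : LipschitzWith 1 (fun z : ℝ => z - c) := by
    simpa using LipschitzWith.id.sub (LipschitzWith.const c)
  have l2 : LipschitzWith (‖h⁻¹‖₊ * 1) (fun z : ℝ => (z - c) / h) := by
    have h' := (lipschitzWith_smul h⁻¹).comp l1
    have e : (fun z : ℝ => (z - c) / h) = (fun x => h⁻¹ • x) ∘ fun z => z - c := by
      funext z; simp [div_eq_inv_mul]
    rw [e]; exact h'
  exact ⟨_, (l2.const_min 1).const_max 0⟩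

lemma ramp_deriv (c : ℝ) {h : ℝ} (hh : 0 < h) :
    ∀ᵐ z, HasDerivAt (ramp c h) ((Ioc c (c + h)).indicator (fun _ => h⁻¹) z) z := by
  filter_upwards [Measure.ae_ne volume c, Measure.ae_ne volume (c + h)] with z h1 h2
  rcases lt_or_gt_of_ne h1 with h1 | h1
  · rw [indicator_of_notMem (fun hz => by linarith [hz.1])]
    refine (hasDerivAt_const z (0:ℝ)).congr_of_eventuallyEq ?_
    filter_upwards [Iio_mem_nhds h1] with y hy
    exact ramp_eq_zero hh (le_of_lt hy)
  rcases lt_or_gt_of_ne h2 with h2 | h2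
  · rw [indicator_of_mem (show z ∈ Ioc c (c + h) from ⟨h1, h2.le⟩)]
    have := ((hasDerivAt_id z).sub_const c).div_const h
    rw [one_div] at this
    refine this.congr_of_eventuallyEq ?_
    filter_upwards [Ioo_mem_nhds h1 h2] with y hy
    exact ramp_mid hh hy.1.le hy.2.le
  · rw [indicator_of_notMem (fun hz => by linarith [hz.2])]
    refine (hasDerivAt_const z (1:ℝ)).congr_of_eventuallyEq ?_
    filter_upwards [Ioi_mem_nhds h2] with y hy
    exact ramp_eq_one hh (le_of_lt hy)

def bx (c1 c2 h z : ℝ) : ℝ := ramp c1 h z - ramp c2 h z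

lemma bx_int {c1 c2 h C : ℝ} {g : ℝ → ℝ} (hh : 0 < h) (hg : Measurable g) (hC : ∀ z, |g z| ≤ C) :
    ∫ z, deriv (bx c1 c2 h) z * g z = h⁻¹ * (∫ z in c1..c1 + h, g z) - h⁻¹ * ∫ z in c2..c2 + h, g z := by
  have e : (fun z => deriv (bx c1 c2 h) z * g z) =ᵐ[volume] fun z =>
      (Ioc c1 (c1 + h)).indicator (fun z => h⁻¹ * g z) z - (Ioc c2 (c2 + h)).indicator (fun z => h⁻¹ * g z) z := by
    filter_upwards [ramp_deriv c1 hh, ramp_deriv c2 hh] with z h1 h2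
    have : deriv (bx c1 c2 h) z = _ := (h1.sub h2).deriv
    rw [this]
    by_cases m1 : z ∈ Ioc c1 (c1 + h) <;> by_cases m2 : z ∈ Ioc c2 (c2 + h) <;> simp [m1, m2]
  have hi : ∀ c, Integrable ((Ioc c (c + h)).indicator (fun z => h⁻¹ * g z)) := by
    intro c
    rw [integrable_indicator_iff measurableSet_Ioc]
    refine Measure.integrableOn_of_bounded (M := h⁻¹ * C) (by simp) (hg.const_mul _).aestronglyMeasurable ?_
    refine Eventually.of_forall fun z => ?_
    rw [Real.norm_eq_abs, abs_mul, abs_of_pos (inv_pos.2 hh)]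
    exact mul_le_mul_of_nonneg_left (hC z) (inv_pos.2 hh).le
  rw [integral_congr_ae e, integral_sub (hi c1) (hi c2), integral_indicator measurableSet_Ioc,
    integral_indicator measurableSet_Ioc, intervalIntegral.integral_of_le (by linarith),
    intervalIntegral.integral_of_le (by linarith), integral_const_mul, integral_const_mul]

def hs (n : ℕ) : ℝ := 1 / ((n : ℝ) + 1)
lemma hs_pos (n : ℕ) : 0 < hs n := by unfold hs; positivity
lemma hs_le (n : ℕ) : hs n ≤ 1 := by
  unfold hs; rw [div_le_one (by positivity)]; linarith [(Nat.cast_nonneg n : (0:ℝ) ≤ n)]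
lemma hs_tendsto : Tendsto hs atTop (nhds 0) := tendsto_one_div_add_atTop_nhds_zero_nat

lemma avg_right {g : ℝ → ℝ} {x l C : ℝ} (hg : Measurable g) (hC : ∀ z, |g z| ≤ C)
    (hl : Tendsto g (nhdsWithin x (Ioi x)) (nhds l)) :
    Tendsto (fun n => (hs n)⁻¹ * ∫ z in x..x + hs n, g z) atTop (nhds l) := by
  have e : ∀ n, (hs n)⁻¹ * (∫ z in x..x + hs n, g z) = ∫ θ in (0:ℝ)..1, g (x + hs n * θ) := by
    intro n
    have := intervalIntegral.integral_comp_add_mul g (hs_pos n).ne' x (a := 0) (b := 1)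
    rw [this]; simp
  simp only [e]
  have : l = ∫ θ in (0:ℝ)..1, l := by simp
  rw [this]
  refine intervalIntegral.tendsto_integral_filter_of_dominated_convergence (fun _ => C) ?_ ?_ ?_ ?_
  · exact Eventually.of_forall fun n => (hg.comp (by fun_prop)).aestronglyMeasurable
  · exact Eventually.of_forall fun n => Eventually.of_forall fun z _ => hC _
  · simp
  · refine Eventually.of_forall fun θ hθ => ?_
    rw [uIoc_of_le zero_le_one] at hθ
    refine hl.comp (tendsto_nhdsWithin_iff.2 ⟨?_, Eventually.of_forall fun n => ?_⟩)
    · simpa using ((hs_tendsto.mul_const θ).const_add x)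
    · simp only [mem_Ioi]; have := mul_pos (hs_pos n) hθ.1; linarith

lemma avg_left {g : ℝ → ℝ} {x l C : ℝ} (hg : Measurable g) (hC : ∀ z, |g z| ≤ C)
    (hl : Tendsto g (nhdsWithin x (Iio x)) (nhds l)) :
    Tendsto (fun n => (hs n)⁻¹ * ∫ z in x - hs n..x - hs n + hs n, g z) atTop (nhds l) := by
  have h1 : Tendsto (fun z => g (-z)) (nhdsWithin (-x) (Ioi (-x))) (nhds l) := by
    refine hl.comp (tendsto_nhdsWithin_iff.2 ⟨?_, ?_⟩)
    · have : Tendsto (fun z : ℝ => -z) (nhds (-x)) (nhds (- -x)) := continuous_neg.tendsto _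
      rw [neg_neg] at this
      exact this.mono_left nhdsWithin_le_nhds
    · filter_upwards [self_mem_nhdsWithin] with z hz
      simp only [mem_Ioi, mem_Iio] at *; linarith
  have := avg_right (hg.comp measurable_neg) (fun z => hC _) h1
  refine this.congr fun n => ?_
  simp only [Function.comp]
  have e := intervalIntegral.integral_comp_neg g (a := -x) (b := -x + hs n)
  rw [e]
  simp only [neg_neg, neg_add, sub_add_cancel]
  rfl

lemma bx_nonneg {c1 c2 h : ℝ} (hh : 0 < h) (hc : c1 ≤ c2) (z : ℝ) : 0 ≤ bx c1 c2 h z :=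
  sub_nonneg.2 (ramp_anti hh hc)
lemma bx_le_one {c1 c2 h : ℝ} (z : ℝ) : bx c1 c2 h z ≤ 1 := by
  unfold bx; linarith [ramp_le_one c1 h z, ramp_nonneg c2 h z]
lemma bx_abs {c1 c2 h : ℝ} (hh : 0 < h) (hc : c1 ≤ c2) (z : ℝ) : |bx c1 c2 h z| ≤ 1 := by
  rw [abs_of_nonneg (bx_nonneg hh hc z)]; exact bx_le_one z
lemma bx_zero {c1 c2 h z : ℝ} (hh : 0 < h) (hc : c1 ≤ c2) (hz : z ∉ Icc c1 (c2 + h)) : bx c1 c2 h z = 0 := by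
  unfold bx
  by_cases h1 : z < c1
  · rw [ramp_eq_zero hh h1.le, ramp_eq_zero hh (by linarith)]; simp
  · have : c2 + h < z := by
      by_contra h2; exact hz ⟨not_lt.1 h1, not_lt.1 h2⟩
    rw [ramp_eq_one hh (by linarith), ramp_eq_one hh this.le]; simp
lemma bx_lip (c1 c2 h : ℝ) : ∃ K, LipschitzWith K (bx c1 c2 h) := by
  obtain ⟨K1, h1⟩ := ramp_lip c1 (h := h)
  obtain ⟨K2, h2⟩ := ramp_lip c2 (h := h)
  exact ⟨_, h1.sub h2⟩
lemma bx_meas (c1 c2 h : ℝ) : Measurable (bx c1 c2 h) := (bx_lip c1 c2 h).choose_spec.continuous.measurable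

lemma prod_lip {f g : ℝ → ℝ} {Kf Kg : NNReal} (hf : LipschitzWith Kf f) (hg : LipschitzWith Kg g)
    (bf : ∀ z, |f z| ≤ 1) (bg : ∀ z, |g z| ≤ 1) : LipschitzWith (Kf + Kg) (fun p : ℝ × ℝ => f p.1 * g p.2) := by
  refine LipschitzWith.of_dist_le_mul fun p q => ?_
  have h1 := hf.dist_le_mul p.1 q.1
  have h2 := hg.dist_le_mul p.2 q.2
  rw [Real.dist_eq] at *
  have d1 : |p.1 - q.1| ≤ dist p q := by rw [← Real.dist_eq, Prod.dist_eq]; exact le_max_left _ _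
  have d2 : dist p.2 q.2 ≤ dist p q := by rw [Prod.dist_eq]; exact le_max_right _ _
  have e : f p.1 * g p.2 - f q.1 * g q.2 = (f p.1 - f q.1) * g p.2 + f q.1 * (g p.2 - g q.2) := by ring
  rw [e]
  refine (abs_add_le _ _).trans ?_
  rw [abs_mul, abs_mul]
  have b1 : |f p.1 - f q.1| * |g p.2| ≤ Kf * dist p q := by
    calc _ ≤ |f p.1 - f q.1| * 1 := mul_le_mul_of_nonneg_left (bg _) (abs_nonneg _)
      _ ≤ _ := by rw [mul_one]; exact h1.trans (mul_le_mul_of_nonneg_left d1 Kf.2)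
  have b2 : |f q.1| * |g p.2 - g q.2| ≤ Kg * dist p q := by
    calc _ ≤ 1 * |g p.2 - g q.2| := mul_le_mul_of_nonneg_right (bf _) (abs_nonneg _)
      _ ≤ _ := by rw [one_mul]; exact h2.trans (mul_le_mul_of_nonneg_left d2 Kg.2)
  push_cast; linarith

lemma trace_step {a b : ℝ × ℝ → ℝ} {C x1 x2 t1 t2 h : ℝ} (ham : Measurable a) (hbm : Measurable b)
    (ha : ∀ p, |a p| ≤ C) (hb : ∀ p, |b p| ≤ C) (hL : LipT a b {p | 0 < p.2}) (hx : x1 ≤ x2)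
    (ht1 : 0 < t1) (ht : t1 ≤ t2) (hh : 0 < h) :
    0 ≤ h⁻¹ * (∫ t in t1..t1 + h, ∫ x, a (x, t) * bx (x1 - h) x2 h x)
      - h⁻¹ * (∫ t in t2..t2 + h, ∫ x, a (x, t) * bx (x1 - h) x2 h x)
      + ∫ t, bx t1 t2 h t * (h⁻¹ * (∫ y in x1 - h..x1 - h + h, b (y, t)) - h⁻¹ * ∫ y in x2..x2 + h, b (y, t)) := by
  set χ := bx (x1 - h) x2 h with hχ
  set τ := bx t1 t2 h with hτ
  have hx' : x1 - h ≤ x2 := by linarith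
  obtain ⟨K1, l1⟩ := bx_lip (x1 - h) x2 h
  obtain ⟨K2, l2⟩ := bx_lip t1 t2 h
  have hC : 0 ≤ C := (abs_nonneg _).trans (ha 0)
  let φ : ℝ × ℝ → ℝ := fun p => χ p.1 * τ p.2
  have hφl : LipschitzWith (K1 + K2) φ := prod_lip l1 l2 (bx_abs hh hx') (bx_abs hh ht)
  have hφ0 : ∀ p, 0 ≤ φ p := fun p => mul_nonneg (bx_nonneg hh hx' _) (bx_nonneg hh ht _)
  let S : Set (ℝ × ℝ) := Icc (x1 - h) (x2 + h) ×ˢ Icc t1 (t2 + h)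
  have hS : IsCompact S := isCompact_Icc.prod isCompact_Icc
  have hoff : ∀ p, p ∉ S → φ p = 0 := by
    intro p hp
    by_cases h1 : p.1 ∈ Icc (x1 - h) (x2 + h)
    · have h2 : p.2 ∉ Icc t1 (t2 + h) := fun h2 => hp ⟨h1, h2⟩
      simp only [φ]; rw [hτ, bx_zero hh ht h2, mul_zero]
    · simp only [φ]; rw [hχ, bx_zero hh hx' h1, zero_mul]
  have hts : tsupport φ ⊆ S := closure_minimal (fun p hp => by
    by_contra hh; exact hp (hoff p hh)) hS.isClosed
  have hφc : HasCompactSupport φ := hS.of_isClosed_subset (isClosed_tsupport _) hts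
  have main := hL φ ⟨_, hφl⟩ hφc (hts.trans fun p hp => lt_of_lt_of_le ht1 hp.2.1) hφ0
  have hm1 := measurable_pdt hφl.continuous
  have hm2 := measurable_pdx hφl.continuous
  have i1 : Integrable (fun p => a p * pdt φ p) := by
    refine integrable_of_bdd_compact (C := C * (K1 + K2 : NNReal)) (ham.mul hm1) (fun p => ?_) hS fun p hp => ?_
    · rw [abs_mul]; exact mul_le_mul (ha p) (abs_pdt_le hφl p) (abs_nonneg _) hC
    · rw [pdt_zero_of_min hφ0 (hoff p hp), mul_zero]
  have i2 : Integrable (fun p => b p * pdx φ p) := by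
    refine integrable_of_bdd_compact (C := C * (K1 + K2 : NNReal)) (hbm.mul hm2) (fun p => ?_) hS fun p hp => ?_
    · rw [abs_mul]; exact mul_le_mul (hb p) (abs_pdx_le hφl p) (abs_nonneg _) hC
    · rw [pdx_zero_of_min hφ0 (hoff p hp), mul_zero]
  rw [integral_add i1 i2] at main
  rw [Measure.volume_eq_prod] at main i1 i2
  rw [integral_prod_symm _ i1, integral_prod_symm _ i2] at main
  have p1 : ∀ p, pdt φ p = χ p.1 * deriv τ p.2 := fun p => by
    unfold pdt; simp only [φ]; rw [deriv_const_mul_field]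
  have p2 : ∀ p, pdx φ p = deriv χ p.1 * τ p.2 := fun p => by
    unfold pdx; simp only [φ]; rw [deriv_mul_const_field]
  have e1 : ∫ t, ∫ x, a (x, t) * pdt φ (x, t) = h⁻¹ * (∫ t in t1..t1 + h, ∫ x, a (x, t) * χ x)
      - h⁻¹ * (∫ t in t2..t2 + h, ∫ x, a (x, t) * χ x) := by
    have : ∀ t, ∫ x, a (x, t) * pdt φ (x, t) = deriv τ t * ∫ x, a (x, t) * χ x := by
      intro t
      rw [← integral_const_mul]
      congr 1; funext x; rw [p1]; ring
    simp only [this]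
    refine bx_int (C := ∫ x, C * (Icc (x1 - h) (x2 + h)).indicator (fun _ => 1) x) hh ?_ ?_
    · have hm : StronglyMeasurable (fun q : ℝ × ℝ => a (q.2, q.1) * χ q.2) :=
        ((ham.comp measurable_swap).mul ((bx_meas _ _ _).comp measurable_snd)).stronglyMeasurable
      exact (hm.integral_prod_right (ν := volume)).measurable
    · intro t
      rw [← Real.norm_eq_abs]
      refine norm_integral_le_of_norm_le ?_ (Eventually.of_forall fun x => ?_)
      · refine Integrable.const_mul ?_ _
        rw [integrable_indicator_iff measurableSet_Icc]
        exact integrableOn_const (by simp)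
      · rw [norm_mul, Real.norm_eq_abs, Real.norm_eq_abs]
        refine mul_le_mul (ha _) ?_ (abs_nonneg _) hC
        by_cases hxm : x ∈ Icc (x1 - h) (x2 + h)
        · rw [indicator_of_mem hxm]; exact bx_abs hh hx' x
        · rw [indicator_of_notMem hxm, hχ, bx_zero hh hx' hxm]; simp
  have e2 : ∫ t, ∫ x, b (x, t) * pdx φ (x, t) = ∫ t, τ t * (h⁻¹ * (∫ y in x1 - h..x1 - h + h, b (y, t)) - h⁻¹ * ∫ y in x2..x2 + h, b (y, t)) := by
    congr 1; funext t
    rw [← bx_int (g := fun y => b (y, t)) (C := C) hh (hbm.comp (by fun_prop : Measurable fun y : ℝ => (y, t))) (fun z => hb _), ← integral_const_mul]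
    congr 1; funext x; rw [p2]; simp only [Function.comp]; ring
  rw [e1, e2] at main
  exact main

lemma trace_A {a : ℝ × ℝ → ℝ} {C x1 x2 h : ℝ} (ham : Measurable a)
    (ha : ∀ p, |a p| ≤ C) (hx : x1 ≤ x2) (hh : 0 < h) (t : ℝ) :
    |(∫ x, a (x, t) * bx (x1 - h) x2 h x) - ∫ x in x1..x2, a (x, t)| ≤ 2 * C * h := by
  have hx' : x1 - h ≤ x2 := by linarith
  have hC : 0 ≤ C := (abs_nonneg _).trans (ha 0)
  have hat : Measurable fun x => a (x, t) := ham.comp (by fun_prop)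
  have ind : ∀ c d : ℝ, Integrable ((Icc c d).indicator (fun _ => (1:ℝ))) := fun c d => by
    rw [integrable_indicator_iff measurableSet_Icc]
    exact integrableOn_const (by simp)
  have i1 : Integrable (fun x => a (x, t) * bx (x1 - h) x2 h x) := by
    refine Integrable.mono' ((ind (x1 - h) (x2 + h)).const_mul C) (hat.mul (bx_meas _ _ _)).aestronglyMeasurable
      (Eventually.of_forall fun x => ?_)
    rw [norm_mul, Real.norm_eq_abs, Real.norm_eq_abs]
    refine mul_le_mul (ha _) ?_ (abs_nonneg _) hC
    by_cases hxm : x ∈ Icc (x1 - h) (x2 + h)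
    · rw [indicator_of_mem hxm]; exact bx_abs hh hx' x
    · rw [indicator_of_notMem hxm, bx_zero hh hx' hxm]; simp
  have i2 : Integrable ((Ioc x1 x2).indicator fun x => a (x, t)) := by
    rw [integrable_indicator_iff measurableSet_Ioc]
    exact Measure.integrableOn_of_bounded (M := C) (by simp) hat.aestronglyMeasurable
      (Eventually.of_forall fun x => ha _)
  rw [intervalIntegral.integral_of_le hx, ← integral_indicator measurableSet_Ioc, ← integral_sub i1 i2,
    ← Real.norm_eq_abs]
  have hI : Integrable (fun x => C * ((Icc (x1 - h) x1).indicator (fun _ => (1:ℝ)) x + (Icc x2 (x2 + h)).indicator (fun _ => 1) x)) :=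
    ((ind _ _).add (ind _ _)).const_mul C
  refine (norm_integral_le_of_norm_le hI (Eventually.of_forall fun x => ?_)).trans ?_
  · have hA := ha (x, t)
    have nn : ∀ c d : ℝ, 0 ≤ (Icc c d).indicator (fun _ => (1:ℝ)) x := fun c d => indicator_nonneg (fun _ _ => zero_le_one) _
    rw [Real.norm_eq_abs]
    by_cases hm : x ∈ Ioc x1 x2
    · have : bx (x1 - h) x2 h x = 1 := by
        unfold bx; rw [ramp_eq_one hh (by linarith [hm.1]), ramp_eq_zero hh hm.2]; simp
      rw [this, indicator_of_mem hm, mul_one, sub_self, abs_zero]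
      exact mul_nonneg hC (add_nonneg (nn _ _) (nn _ _))
    · rw [indicator_of_notMem hm, sub_zero, abs_mul]
      refine mul_le_mul hA ?_ (abs_nonneg _) hC
      by_cases m1 : x ∈ Icc (x1 - h) x1
      · rw [indicator_of_mem m1]; linarith [bx_abs hh hx' x, nn x2 (x2 + h)]
      · by_cases m2 : x ∈ Icc x2 (x2 + h)
        · rw [indicator_of_mem m2]; linarith [bx_abs hh hx' x, nn (x1 - h) x1]
        · rw [bx_zero hh hx' (fun hm3 => ?_)]
          · rw [abs_zero]; exact add_nonneg (nn _ _) (nn _ _)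
          · by_cases c1 : x ≤ x1
            · exact m1 ⟨hm3.1, c1⟩
            · by_cases c2 : x ≤ x2
              · exact hm ⟨not_le.1 c1, c2⟩
              · exact m2 ⟨(not_le.1 c2).le, hm3.2⟩
  · rw [integral_const_mul, integral_add (ind _ _) (ind _ _), integral_indicator_const _ measurableSet_Icc,
      integral_indicator_const _ measurableSet_Icc]
    simp only [Measure.real, Real.volume_Icc, smul_eq_mul, mul_one]
    rw [ENNReal.toReal_ofReal (by linarith), ENNReal.toReal_ofReal (by linarith)]
    linarith

lemma trace_ineq {a b : ℝ × ℝ → ℝ} {bm bp : ℝ → ℝ} {C x1 x2 t1 t2 : ℝ} (ham : Measurable a) (hbm : Measurable b)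
    (ha : ∀ p, |a p| ≤ C) (hb : ∀ p, |b p| ≤ C) (hL : LipT a b {p | 0 < p.2}) (hx : x1 ≤ x2)
    (ht1 : 0 < t1) (ht : t1 ≤ t2)
    (hm : ∀ t, 0 < t → Tendsto (fun y => b (y, t)) (nhdsWithin x1 (Iio x1)) (nhds (bm t)))
    (hp : ∀ t, 0 < t → Tendsto (fun y => b (y, t)) (nhdsWithin x2 (Ioi x2)) (nhds (bp t)))
    (hA : ∀ s, 0 < s → Tendsto (fun t => ∫ x in x1..x2, a (x, t)) (nhdsWithin s (Ioi s)) (nhds (∫ x in x1..x2, a (x, s)))) :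
    0 ≤ (∫ x in x1..x2, a (x, t1)) - (∫ x in x1..x2, a (x, t2)) + ∫ t in t1..t2, (bm t - bp t) := by
  have hC : 0 ≤ C := (abs_nonneg _).trans (ha 0)
  let Aa : ℝ → ℝ := fun t => ∫ x in x1..x2, a (x, t)
  have hAm : Measurable Aa := by
    simp only [Aa, intervalIntegral.integral_of_le hx]
    have hm : StronglyMeasurable (fun q : ℝ × ℝ => a (q.2, q.1)) := (ham.comp measurable_swap).stronglyMeasurable
    exact (hm.integral_prod_right (ν := volume.restrict (Ioc x1 x2))).measurable
  have hAb : ∀ t, |Aa t| ≤ C * |x2 - x1| := fun t => by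
    rw [← Real.norm_eq_abs]
    exact intervalIntegral.norm_integral_le_of_norm_le_const fun x _ => ha _
  let I : ℝ → ℝ → ℝ := fun h t => ∫ x, a (x, t) * bx (x1 - h) x2 h x
  have hIm : ∀ h, Measurable (I h) := fun h => by
    have hm : StronglyMeasurable (fun q : ℝ × ℝ => a (q.2, q.1) * bx (x1 - h) x2 h q.2) :=
      ((ham.comp measurable_swap).mul ((bx_meas _ _ _).comp measurable_snd)).stronglyMeasurable
    exact (hm.integral_prod_right (ν := volume)).measurable
  have hIA : ∀ n s, |(hs n)⁻¹ * (∫ t in s..s + hs n, I (hs n) t) - (hs n)⁻¹ * (∫ t in s..s + hs n, Aa t)| ≤ 2 * C * hs n := by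
    intro n s
    have h0 := hs_pos n
    have ii : ∀ g : ℝ → ℝ, Measurable g → (∃ M, ∀ t, |g t| ≤ M) → IntervalIntegrable g volume s (s + hs n) := by
      rintro g hg ⟨M, hM⟩
      rw [intervalIntegrable_iff]
      exact Measure.integrableOn_of_bounded (M := M) (by simp [uIoc]) hg.aestronglyMeasurable
        (Eventually.of_forall fun x => hM _)
    have hIb : ∀ t, |I (hs n) t| ≤ 2 * C * hs n + C * |x2 - x1| := fun t => by
      have h1 := trace_A (C := C) ham ha hx h0 t
      have h2 := hAb t
      have : I (hs n) t = (I (hs n) t - Aa t) + Aa t := by ring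
      rw [this]
      exact (abs_add_le _ _).trans (add_le_add h1 h2)
    rw [← mul_sub, ← intervalIntegral.integral_sub (ii _ (hIm _) ⟨_, hIb⟩) (ii _ hAm ⟨_, hAb⟩), abs_mul, abs_of_pos (inv_pos.2 h0)]
    have := intervalIntegral.norm_integral_le_of_norm_le_const (a := s) (b := s + hs n) (f := fun t => I (hs n) t - Aa t)
      (C := 2 * C * hs n) (fun t _ => trace_A ham ha hx h0 t)
    rw [Real.norm_eq_abs, add_sub_cancel_left, abs_of_pos h0] at this
    rw [inv_mul_le_iff₀ h0]; linarith
  let Y : ℕ → ℝ := fun n => ∫ t, bx t1 t2 (hs n) t * ((hs n)⁻¹ * (∫ y in x1 - hs n..x1 - hs n + hs n, b (y, t)) - (hs n)⁻¹ * ∫ y in x2..x2 + hs n, b (y, t))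
  have hY : Tendsto Y atTop (nhds (∫ t in t1..t2, (bm t - bp t))) := by
    rw [intervalIntegral.integral_of_le ht, ← integral_indicator measurableSet_Ioc]
    have avb : ∀ n c t, |(hs n)⁻¹ * ∫ y in c..c + hs n, b (y, t)| ≤ C := fun n c t => by
      have h0 := hs_pos n
      have := intervalIntegral.norm_integral_le_of_norm_le_const (a := c) (b := c + hs n) (f := fun y => b (y, t))
        (C := C) (fun y _ => hb _)
      rw [Real.norm_eq_abs, add_sub_cancel_left, abs_of_pos h0] at this
      rw [abs_mul, abs_of_pos (inv_pos.2 h0), inv_mul_le_iff₀ h0]; linarith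
    have avm : ∀ n c, Measurable fun t => (hs n)⁻¹ * ∫ y in c..c + hs n, b (y, t) := fun n c => by
      simp only [intervalIntegral.integral_of_le (le_add_of_nonneg_right (hs_pos n).le : c ≤ c + hs n)]
      have hm : StronglyMeasurable (fun q : ℝ × ℝ => b (q.2, q.1)) := (hbm.comp measurable_swap).stronglyMeasurable
      exact (hm.integral_prod_right (ν := volume.restrict (Ioc c (c + hs n)))).measurable.const_mul _
    refine tendsto_integral_of_dominated_convergence (fun t => (Icc t1 (t2 + 1)).indicator (fun _ => 2 * C) t) ?_ ?_ ?_ ?_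
    · intro n
      exact ((bx_meas _ _ _).mul ((avm n _).sub (avm n _))).aestronglyMeasurable
    · rw [integrable_indicator_iff measurableSet_Icc]
      exact integrableOn_const (by simp)
    · intro n
      refine Eventually.of_forall fun t => ?_
      by_cases hm : t ∈ Icc t1 (t2 + 1)
      · rw [indicator_of_mem hm, norm_mul, Real.norm_eq_abs, Real.norm_eq_abs]
        have h1 := bx_abs (hs_pos n) ht t
        have h2 := avb n (x1 - hs n) t
        have h3 := avb n x2 t
        have h4 := (abs_sub _ _).trans (add_le_add h2 h3)
        calc _ ≤ 1 * (C + C) := mul_le_mul h1 h4 (abs_nonneg _) zero_le_one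
          _ = _ := by ring
      · rw [indicator_of_notMem hm, bx_zero (hs_pos n) ht]
        · simp
        · intro h; exact hm ⟨h.1, h.2.trans (by linarith [hs_le n])⟩
    · filter_upwards [Measure.ae_ne volume t1] with t hne
      by_cases c1 : t ≤ t1
      · rw [indicator_of_notMem (fun h => by linarith [h.1])]
        refine tendsto_const_nhds.congr fun n => ?_
        unfold bx
        rw [ramp_eq_zero (hs_pos n) c1, ramp_eq_zero (hs_pos n) (c1.trans ht)]; simp
      push Not at c1
      have ev1 : ∀ᶠ n in atTop, ramp t1 (hs n) t = 1 := by
        have : ∀ᶠ n in atTop, hs n < t - t1 := hs_tendsto.eventually (Iio_mem_nhds (by linarith))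
        filter_upwards [this] with n hn
        exact ramp_eq_one (hs_pos n) (by linarith)
      by_cases c2 : t ≤ t2
      · rw [indicator_of_mem (show t ∈ Ioc t1 t2 from ⟨c1, c2⟩)]
        have ht0 : 0 < t := ht1.trans c1
        have hbt : Measurable fun y => b (y, t) := hbm.comp (by fun_prop)
        have l := (avg_left (C := C) hbt (fun z => hb _) (hm t ht0)).sub (avg_right (C := C) hbt (fun z => hb _) (hp t ht0))
        refine l.congr' ?_
        filter_upwards [ev1] with n hn
        unfold bx
        rw [hn, ramp_eq_zero (hs_pos n) c2]; simp
      · push Not at c2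
        rw [indicator_of_notMem (fun h => by linarith [h.2])]
        have ev2 : ∀ᶠ n in atTop, ramp t2 (hs n) t = 1 := by
          have : ∀ᶠ n in atTop, hs n < t - t2 := hs_tendsto.eventually (Iio_mem_nhds (by linarith))
          filter_upwards [this] with n hn
          exact ramp_eq_one (hs_pos n) (by linarith)
        refine tendsto_const_nhds.congr' ?_
        filter_upwards [ev1, ev2] with n h1 h2
        unfold bx; rw [h1, h2]; simp
  have lim1 := avg_right hAm hAb (hA t1 ht1)
  have lim2 := avg_right hAm hAb (hA t2 (ht1.trans_le ht))
  have lim := ((lim1.sub lim2).add hY).add (hs_tendsto.const_mul (4 * C))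
  rw [mul_zero, add_zero] at lim
  refine ge_of_tendsto lim (Eventually.of_forall fun n => ?_)
  have st := trace_step ham hbm ha hb hL hx ht1 ht (hs_pos n)
  have a1 := (abs_le.1 (hIA n t1)).2
  have a2 := (abs_le.1 (hIA n t2)).1
  change 0 ≤ (hs n)⁻¹ * (∫ t in t1..t1 + hs n, I (hs n) t) - (hs n)⁻¹ * (∫ t in t2..t2 + hs n, I (hs n) t) + Y n at st
  linarith

section
section GG
variable {A B : ℝ} {fl fr u0 : ℝ → ℝ}

lemma cAB_meas : Measurable (cAB A B) := by
  unfold cAB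
  exact Measurable.ite measurableSet_Iic measurable_const measurable_const

lemma dflux_meas (hfl : Continuous fl) (hfr : Continuous fr) {w : ℝ × ℝ → ℝ} (hw : Measurable w) :
    Measurable fun p : ℝ × ℝ => dflux fl fr p.1 (w p) := by
  unfold dflux
  exact Measurable.ite (measurableSet_lt measurable_fst measurable_const)
    (hfl.measurable.comp hw) (hfr.measurable.comp hw)

lemma cont_bdd {f : ℝ → ℝ} (hf : Continuous f) (M : ℝ) : ∃ C, ∀ w, |w| ≤ M → |f w| ≤ C := by
  obtain ⟨C, hC⟩ := (isCompact_Icc (a := -M) (b := M)).exists_bound_of_continuousOn hf.continuousOn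
  exact ⟨C, fun w hw => hC w (abs_le.1 hw)⟩

lemma dflux_bdd (hfl : Continuous fl) (hfr : Continuous fr) (M : ℝ) :
    ∃ C, ∀ x w, |w| ≤ M → |dflux fl fr x w| ≤ C := by
  obtain ⟨C1, h1⟩ := cont_bdd hfl M
  obtain ⟨C2, h2⟩ := cont_bdd hfr M
  refine ⟨max C1 C2, fun x w hw => ?_⟩
  unfold dflux; split_ifs
  · exact (h1 w hw).trans (le_max_left _ _)
  · exact (h2 w hw).trans (le_max_right _ _)

variable (sol : ABSol fl fr A B u0)

lemma sol_meas_x (t : ℝ) : Measurable fun x => sol.u x t := sol.meas.comp (by fun_prop : Measurable fun x : ℝ => (x, t))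

lemma sol_ii (t x1 x2 : ℝ) : IntervalIntegrable (fun x => sol.u x t) volume x1 x2 := by
  obtain ⟨M, hM⟩ := sol.bdd
  rw [intervalIntegrable_iff]
  exact Measure.integrableOn_of_bounded (M := M) (by simp [uIoc]) (sol_meas_x sol t).aestronglyMeasurable
    (Eventually.of_forall fun x => hM _ _)

lemma sol_tc (x1 x2 s : ℝ) (hs0 : 0 ≤ s) :
    Tendsto (fun t => ∫ x in x1..x2, sol.u x t) (nhdsWithin s (Ici 0)) (nhds (∫ x in x1..x2, sol.u x s)) := by
  set r := max |x1| |x2|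
  have hsub : uIoc x1 x2 ⊆ Icc (-r) r := by
    refine uIoc_subset_uIcc.trans (uIcc_subset_Icc ?_ ?_)
    · exact abs_le.1 (le_max_left _ _)
    · exact abs_le.1 (le_max_right _ _)
  have h0 := sol.timeCont r s hs0
  rw [tendsto_iff_norm_sub_tendsto_zero]
  refine squeeze_zero (fun t => norm_nonneg _) (fun t => ?_) h0
  rw [← intervalIntegral.integral_sub (sol_ii sol t x1 x2) (sol_ii sol s x1 x2)]
  refine (intervalIntegral.norm_integral_le_integral_norm_uIoc).trans ?_
  refine setIntegral_mono_set ?_ ?_ hsub.eventuallyLE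
  · obtain ⟨M, hM⟩ := sol.bdd
    refine Measure.integrableOn_of_bounded (M := M + M) (by simp) ?_ (Eventually.of_forall fun x => ?_)
    · exact ((sol_meas_x sol t).sub (sol_meas_x sol s)).norm.aestronglyMeasurable
    · rw [norm_norm, Real.norm_eq_abs]
      exact (abs_sub _ _).trans (add_le_add (hM _ _) (hM _ _))
  · exact Eventually.of_forall fun x => norm_nonneg _

lemma sol_weakLip (hfl : Continuous fl) (hfr : Continuous fr) (σ : ℝ) :
    LipT (fun p => σ * sol.u p.1 p.2) (fun p => σ * dflux fl fr p.1 (sol.u p.1 p.2)) {p | 0 < p.2} := by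
  obtain ⟨M, hM⟩ := sol.bdd
  obtain ⟨C, hC⟩ := dflux_bdd hfl hfr M
  refine LipT_of_C1 (C := |σ| * max M C) (isOpen_lt continuous_const continuous_snd)
    (sol.meas.const_mul _) ((dflux_meas hfl hfr sol.meas).const_mul _) ?_ ?_ ?_
  · intro p; rw [abs_mul]; exact mul_le_mul_of_nonneg_left ((hM _ _).trans (le_max_left _ _)) (abs_nonneg _)
  · intro p; rw [abs_mul]; exact mul_le_mul_of_nonneg_left ((hC _ _ (hM _ _)).trans (le_max_right _ _)) (abs_nonneg _)
  · intro φ h1 h2 h3 h4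
    have := sol.weak (fun x t => φ (x, t)) h1 h2 (fun x t ht => by
      by_contra hne
      have : (0:ℝ) < t := h3 (subset_tsupport _ hne)
      linarith)
    have e : ∫ p : ℝ × ℝ, (σ * sol.u p.1 p.2 * pdt φ p + σ * dflux fl fr p.1 (sol.u p.1 p.2) * pdx φ p)
      = σ * ∫ p : ℝ × ℝ, (sol.u p.1 p.2 * deriv (fun s => φ (p.1, s)) p.2 +
        dflux fl fr p.1 (sol.u p.1 p.2) * deriv (fun y => φ (y, p.2)) p.1) := by
      rw [← integral_const_mul]
      congr 1; funext p; unfold pdt pdx; ring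
    rw [e, this, mul_zero]

/-- left flux -/
def fm (x t : ℝ) : ℝ := if x ≤ 0 then fl (sol.um x t) else fr (sol.um x t)
/-- right flux -/
def fp (x t : ℝ) : ℝ := dflux fl fr x (sol.up x t)

lemma fm_lim (hfl : Continuous fl) (hfr : Continuous fr) (x t : ℝ) (ht : 0 < t) :
    Tendsto (fun y => dflux fl fr y (sol.u y t)) (nhdsWithin x (Iio x)) (nhds (fm sol x t)) := by
  unfold fm
  split_ifs with h
  · refine ((hfl.tendsto _).comp (sol.um_spec x t ht)).congr' ?_
    filter_upwards [self_mem_nhdsWithin] with y hy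
    simp only [mem_Iio] at hy
    simp [dflux, hy.trans_le h]
  · refine ((hfr.tendsto _).comp (sol.um_spec x t ht)).congr' ?_
    have : Ioi (0:ℝ) ∈ nhdsWithin x (Iio x) := mem_nhdsWithin_of_mem_nhds (Ioi_mem_nhds (not_le.1 h))
    filter_upwards [this] with y hy
    simp only [mem_Ioi] at hy
    simp [dflux, hy.le, not_lt]

lemma fp_lim (hfl : Continuous fl) (hfr : Continuous fr) (x t : ℝ) (ht : 0 < t) :
    Tendsto (fun y => dflux fl fr y (sol.u y t)) (nhdsWithin x (Ioi x)) (nhds (fp sol x t)) := by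
  unfold fp dflux
  split_ifs with h
  · refine ((hfl.tendsto _).comp (sol.up_spec x t ht)).congr' ?_
    have : Iio (0:ℝ) ∈ nhdsWithin x (Ioi x) := mem_nhdsWithin_of_mem_nhds (Iio_mem_nhds h)
    filter_upwards [this] with y hy
    simp only [mem_Iio] at hy
    simp [hy]
  · refine ((hfr.tendsto _).comp (sol.up_spec x t ht)).congr' ?_
    filter_upwards [self_mem_nhdsWithin] with y hy
    simp only [mem_Ioi] at hy
    simp [not_lt.2 ((not_lt.1 h).trans hy.le)]

lemma gauss_green (hfl : Continuous fl) (hfr : Continuous fr) {x1 x2 t1 t2 : ℝ} (hx : x1 ≤ x2) (ht1 : 0 < t1) (ht : t1 ≤ t2) :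
    (∫ x in x1..x2, sol.u x t2) - (∫ x in x1..x2, sol.u x t1) = ∫ t in t1..t2, (fm sol x1 t - fp sol x2 t) := by
  obtain ⟨M, hM⟩ := sol.bdd
  obtain ⟨C, hC⟩ := dflux_bdd hfl hfr M
  have key : ∀ σ : ℝ, 0 ≤ (∫ x in x1..x2, σ * sol.u x t1) - (∫ x in x1..x2, σ * sol.u x t2) + ∫ t in t1..t2, (σ * fm sol x1 t - σ * fp sol x2 t) := by
    intro σ
    refine trace_ineq (C := |σ| * max M C) (a := fun p => σ * sol.u p.1 p.2) (b := fun p => σ * dflux fl fr p.1 (sol.u p.1 p.2))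
      (sol.meas.const_mul _) ((dflux_meas hfl hfr sol.meas).const_mul _) ?_ ?_ (sol_weakLip sol hfl hfr σ) hx ht1 ht ?_ ?_ ?_
    · intro p; rw [abs_mul]; exact mul_le_mul_of_nonneg_left ((hM _ _).trans (le_max_left _ _)) (abs_nonneg _)
    · intro p; rw [abs_mul]; exact mul_le_mul_of_nonneg_left ((hC _ _ (hM _ _)).trans (le_max_right _ _)) (abs_nonneg _)
    · intro t h; exact (fm_lim sol hfl hfr x1 t h).const_mul σ
    · intro t h; exact (fp_lim sol hfl hfr x2 t h).const_mul σ
    · intro s h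
      simp only [intervalIntegral.integral_const_mul]
      refine Tendsto.const_mul σ ?_
      refine (sol_tc sol x1 x2 s h.le).mono_left (nhdsWithin_mono _ ?_)
      intro z hz; exact h.le.trans (le_of_lt hz)
  have k1 := key 1
  have k2 := key (-1)
  simp only [neg_mul, one_mul, intervalIntegral.integral_neg] at k1 k2
  have e : ∫ t in t1..t2, (-fm sol x1 t - -fp sol x2 t) = - ∫ t in t1..t2, (fm sol x1 t - fp sol x2 t) := by
    rw [← intervalIntegral.integral_neg]; congr 1; funext t; ring
  rw [e] at k2
  linarith
end GG
end

section
section HJ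
variable {A B : ℝ} {fl fr u0 : ℝ → ℝ}

lemma ae_of_intervals {g : ℝ → ℝ} {C : ℝ} (hg : AEStronglyMeasurable g (volume.restrict (Ioi 0)))
    (hC : ∀ t, 0 < t → |g t| ≤ C) (h : ∀ t1 t2, 0 < t1 → t1 ≤ t2 → 0 ≤ ∫ t in t1..t2, g t) :
    ∀ᵐ t, 0 < t → 0 ≤ g t := by
  let G := (Ioi (0:ℝ)).indicator g
  have hGm : AEStronglyMeasurable G volume := (aestronglyMeasurable_indicator_iff measurableSet_Ioi).2 hg
  have hC0 : 0 ≤ C := (abs_nonneg _).trans (hC 1 one_pos)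
  have hGb : ∀ t, ‖G t‖ ≤ C := fun t => by
    by_cases ht : t ∈ Ioi (0:ℝ)
    · simp only [G]; rw [indicator_of_mem ht]; exact hC t ht
    · simp only [G]; rw [indicator_of_notMem ht]; simpa using hC0
  have hGl : LocallyIntegrable G := by
    rw [locallyIntegrable_iff]
    intro k hk
    exact Measure.integrableOn_of_bounded (M := C) hk.measure_lt_top.ne hGm (Eventually.of_forall fun t => hGb t)
  filter_upwards [LocallyIntegrable.ae_hasDerivAt_integral hGl] with t ht h0
  have h1 := ht t
  have e : G t = g t := indicator_of_mem (show t ∈ Ioi (0:ℝ) from h0) _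
  rw [← e]
  have h2 := h1.tendsto_slope
  have h3 : Tendsto (slope (fun x => ∫ s in t..x, G s) t) (nhdsWithin t (Ioi t)) (nhds (G t)) :=
    h2.mono_left (nhdsWithin_mono _ (fun z hz => ne_of_gt hz))
  refine ge_of_tendsto h3 ?_
  filter_upwards [self_mem_nhdsWithin] with x hx
  simp only [mem_Ioi] at hx
  rw [slope_def_field, intervalIntegral.integral_same, sub_zero]
  refine div_nonneg ?_ (by linarith)
  have : ∫ s in t..x, G s = ∫ s in t..x, g s := by
    refine intervalIntegral.integral_congr fun s hs => ?_
    rw [uIcc_of_le hx.le] at hs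
    exact indicator_of_mem (show s ∈ Ioi (0:ℝ) from h0.trans_le hs.1) _
  rw [this]; exact h t x h0 hx.le

variable (sol : ABSol fl fr A B u0)

lemma fm_bdd (hfl : Continuous fl) (hfr : Continuous fr) : ∃ C, ∀ x t, 0 < t → |fm sol x t| ≤ C ∧ |fp sol x t| ≤ C := by
  obtain ⟨M, hM⟩ := sol.bdd
  obtain ⟨C, hC⟩ := dflux_bdd hfl hfr M
  refine ⟨C, fun x t ht => ⟨?_, ?_⟩⟩
  · exact le_of_tendsto (fm_lim sol hfl hfr x t ht).abs (Eventually.of_forall fun y => hC _ _ (hM _ _))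
  · exact le_of_tendsto (fp_lim sol hfl hfr x t ht).abs (Eventually.of_forall fun y => hC _ _ (hM _ _))

lemma ptend_r (x : ℝ) : Tendsto (fun n => x + hs n) atTop (nhdsWithin x (Ioi x)) := by
  refine tendsto_nhdsWithin_iff.2 ⟨?_, Eventually.of_forall fun n => ?_⟩
  · simpa using hs_tendsto.const_add x
  · simp [hs_pos n]
lemma ptend_l (x : ℝ) : Tendsto (fun n => x - hs n) atTop (nhdsWithin x (Iio x)) := by
  refine tendsto_nhdsWithin_iff.2 ⟨?_, Eventually.of_forall fun n => ?_⟩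
  · simpa using hs_tendsto.const_sub x
  · simp [hs_pos n]

lemma lim_aesm {b : ℝ × ℝ → ℝ} (hb : Measurable b) {xs : ℕ → ℝ} {g : ℝ → ℝ}
    (h : ∀ t, 0 < t → Tendsto (fun n => b (xs n, t)) atTop (nhds (g t))) :
    AEStronglyMeasurable g (volume.restrict (Ioi 0)) := by
  refine aestronglyMeasurable_of_tendsto_ae atTop (f := fun n t => b (xs n, t)) (fun n => ?_) ?_
  · exact (hb.comp (by fun_prop : Measurable fun t : ℝ => (xs n, t))).aestronglyMeasurable
  · filter_upwards [ae_restrict_mem measurableSet_Ioi] with t ht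
    exact h t ht

lemma fm_meas (hfl : Continuous fl) (hfr : Continuous fr) (x : ℝ) : AEStronglyMeasurable (fm sol x) (volume.restrict (Ioi 0)) :=
  lim_aesm (dflux_meas hfl hfr sol.meas) fun t ht => (fm_lim sol hfl hfr x t ht).comp (ptend_l x)
lemma fp_meas (hfl : Continuous fl) (hfr : Continuous fr) (x : ℝ) : AEStronglyMeasurable (fp sol x) (volume.restrict (Ioi 0)) :=
  lim_aesm (dflux_meas hfl hfr sol.meas) fun t ht => (fp_lim sol hfl hfr x t ht).comp (ptend_r x)

lemma fm_eq_fp (hfl : Continuous fl) (hfr : Continuous fr) (x : ℝ) : ∀ᵐ t, 0 < t → fm sol x t = fp sol x t := by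
  obtain ⟨C, hC⟩ := fm_bdd sol hfl hfr
  have key : ∀ t1 t2, 0 < t1 → t1 ≤ t2 → ∫ t in t1..t2, (fm sol x t - fp sol x t) = 0 := fun t1 t2 h1 h2 => by
    rw [← gauss_green sol hfl hfr le_rfl h1 h2]; simp
  have k1 := ae_of_intervals (C := C + C) ((fm_meas sol hfl hfr x).sub (fp_meas sol hfl hfr x))
    (fun t ht => (abs_sub _ _).trans (add_le_add (hC x t ht).1 (hC x t ht).2)) (fun t1 t2 h1 h2 => (key t1 t2 h1 h2).ge)
  have k2 := ae_of_intervals (C := C + C) ((fp_meas sol hfl hfr x).sub (fm_meas sol hfl hfr x))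
    (fun t ht => (abs_sub _ _).trans (add_le_add (hC x t ht).2 (hC x t ht).1)) (fun t1 t2 h1 h2 => by
      have := key t1 t2 h1 h2
      have e : ∫ t in t1..t2, (fp sol x t - fm sol x t) = - ∫ t in t1..t2, (fm sol x t - fp sol x t) := by
        rw [← intervalIntegral.integral_neg]; congr 1; funext t; ring
      simp only [Pi.sub_apply]
      rw [e, this]; simp)
  filter_upwards [k1, k2] with t h1 h2 h0
  have h1 := h1 h0
  have h2 := h2 h0
  simp only [Pi.sub_apply] at h1 h2
  linarith

lemma tangent {a : ℝ} {f : ℝ → ℝ} (ha : 0 < a) (hf : ContDiff ℝ 2 f) (h2 : ∀ w, a ≤ deriv (deriv f) w) :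
    StrictMono (deriv f) ∧ ∀ v w, f v + deriv f v * (w - v) ≤ f w := by
  have hm : StrictMono (deriv f) := strictMono_of_deriv_pos fun x => ha.trans_le (h2 x)
  refine ⟨hm, fun v w => ?_⟩
  have hd : Differentiable ℝ f := hf.differentiable (by norm_num)
  rcases lt_trichotomy v w with h | h | h
  · obtain ⟨c, hc, e⟩ := exists_deriv_eq_slope f h hd.continuous.continuousOn (fun x _ => (hd x).differentiableWithinAt)
    have := hm hc.1
    rw [e, lt_div_iff₀ (by linarith)] at this; linarith
  · simp [h]
  · obtain ⟨c, hc, e⟩ := exists_deriv_eq_slope f h hd.continuous.continuousOn (fun x _ => (hd x).differentiableWithinAt)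
    have := hm hc.2
    rw [e, div_lt_iff₀ (by linarith)] at this; linarith

lemma sign_cont {f : ℝ → ℝ} (hf : Continuous f) (k : ℝ) : Continuous fun w => Real.sign (w - k) * (f w - f k) := by
  have e : (fun w => Real.sign (w - k) * (f w - f k)) = fun w => if k ≤ w then f w - f k else -(f w - f k) := by
    funext w
    rcases lt_trichotomy w k with h | h | h
    · rw [if_neg (not_le.2 h), Real.sign_of_neg (by linarith)]; ring
    · simp [h]
    · rw [if_pos h.le, Real.sign_of_pos (by linarith)]; ring
  rw [e]
  refine Continuous.if_le (by fun_prop) (by fun_prop) continuous_const continuous_id ?_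
  rintro w rfl; simp

lemma sign_meas : Measurable Real.sign := by
  unfold Real.sign
  exact Measurable.ite measurableSet_Iio measurable_const
    (Measurable.ite measurableSet_Ioi measurable_const measurable_const)

def ifa (p : ℝ × ℝ) : ℝ := |sol.u p.1 p.2 - cAB A B p.1|
def ifb (p : ℝ × ℝ) : ℝ := Real.sign (sol.u p.1 p.2 - cAB A B p.1) * (dflux fl fr p.1 (sol.u p.1 p.2) - dflux fl fr p.1 (cAB A B p.1))

lemma if_meas (hfl : Continuous fl) (hfr : Continuous fr) : Measurable (ifa sol) ∧ Measurable (ifb sol) := by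
  have hw : Measurable fun p : ℝ × ℝ => sol.u p.1 p.2 - cAB A B p.1 := sol.meas.sub (cAB_meas.comp measurable_fst)
  constructor
  · exact hw.norm
  · exact (sign_meas.comp hw).mul ((dflux_meas hfl hfr sol.meas).sub (dflux_meas hfl hfr (cAB_meas.comp measurable_fst)))

lemma if_bdd (hfl : Continuous fl) (hfr : Continuous fr) : ∃ C, ∀ p, |ifa sol p| ≤ C ∧ |ifb sol p| ≤ C := by
  obtain ⟨M, hM⟩ := sol.bdd
  let M' := max M (max |A| |B|)
  have hc : ∀ x, |cAB A B x| ≤ M' := fun x => by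
    unfold cAB; split_ifs
    · exact (le_max_left _ _).trans (le_max_right _ _)
    · exact (le_max_right _ _).trans (le_max_right _ _)
  have hu : ∀ x t, |sol.u x t| ≤ M' := fun x t => (hM x t).trans (le_max_left _ _)
  obtain ⟨C, hC⟩ := dflux_bdd hfl hfr M'
  refine ⟨max (M' + M') (1 * (C + C)), fun p => ⟨?_, ?_⟩⟩
  · unfold ifa; rw [abs_abs]
    exact ((abs_sub _ _).trans (add_le_add (hu _ _) (hc _))).trans (le_max_left _ _)
  · unfold ifb; rw [abs_mul]
    refine le_trans ?_ (le_max_right _ _)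
    exact mul_le_mul (abs_sign_le _) ((abs_sub _ _).trans (add_le_add (hC _ _ (hu _ _)) (hC _ _ (hc _)))) (abs_nonneg _) zero_le_one

lemma if_lip (hfl : Continuous fl) (hfr : Continuous fr) : LipT (ifa sol) (ifb sol) {p | 0 < p.2} := by
  obtain ⟨C, hC⟩ := if_bdd sol hfl hfr
  refine LipT_of_C1 (isOpen_lt continuous_const continuous_snd) (if_meas sol hfl hfr).1 (if_meas sol hfl hfr).2
    (fun p => (hC p).1) (fun p => (hC p).2) ?_
  intro φ h1 h2 h3 h4
  exact sol.interfaceEntropy (fun x t => φ (x, t)) h1 h2 (fun x t => h4 _) (fun x t ht => by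
      by_contra hne
      have : (0:ℝ) < t := h3 (subset_tsupport _ hne)
      linarith)

lemma kr_lip (hfr : Continuous fr) (k : ℝ) :
    LipT (fun p => |sol.u p.1 p.2 - k|) (fun p => Real.sign (sol.u p.1 p.2 - k) * (fr (sol.u p.1 p.2) - fr k)) {p | 0 < p.1 ∧ 0 < p.2} := by
  obtain ⟨M, hM⟩ := sol.bdd
  obtain ⟨C, hC⟩ := cont_bdd hfr M
  have hw : Measurable fun p : ℝ × ℝ => sol.u p.1 p.2 - k := sol.meas.sub_const _
  refine LipT_of_C1 (C := max (M + |k|) (1 * (C + |fr k|)))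
    ((isOpen_lt continuous_const continuous_fst).inter (isOpen_lt continuous_const continuous_snd)) hw.norm
    ((sign_meas.comp hw).mul ((hfr.measurable.comp sol.meas).sub_const _)) (fun p => ?_) (fun p => ?_) ?_
  · rw [abs_abs]
    exact ((abs_sub _ _).trans (add_le_add (hM _ _) le_rfl)).trans (le_max_left _ _)
  · refine le_trans ?_ (le_max_right _ _)
    rw [abs_mul]
    exact mul_le_mul (abs_sign_le _) ((abs_sub _ _).trans (add_le_add (hC _ (hM _ _)) le_rfl)) (abs_nonneg _) zero_le_one
  intro φ h1 h2 h3 h4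
  exact sol.kruzkov_r k (fun x t => φ (x, t)) h1 h2 (fun x t => h4 _) (fun x t ht => by
      by_contra hne
      have : (0:ℝ) < x ∧ (0:ℝ) < t := h3 (subset_tsupport _ hne)
      rcases ht with h | h <;> linarith)

lemma kl_lip (hfl : Continuous fl) (k : ℝ) :
    LipT (fun p => |sol.u p.1 p.2 - k|) (fun p => Real.sign (sol.u p.1 p.2 - k) * (fl (sol.u p.1 p.2) - fl k)) {p | p.1 < 0 ∧ 0 < p.2} := by
  obtain ⟨M, hM⟩ := sol.bdd
  obtain ⟨C, hC⟩ := cont_bdd hfl M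
  have hw : Measurable fun p : ℝ × ℝ => sol.u p.1 p.2 - k := sol.meas.sub_const _
  refine LipT_of_C1 (C := max (M + |k|) (1 * (C + |fl k|)))
    ((isOpen_lt continuous_fst continuous_const).inter (isOpen_lt continuous_const continuous_snd)) hw.norm
    ((sign_meas.comp hw).mul ((hfl.measurable.comp sol.meas).sub_const _)) (fun p => ?_) (fun p => ?_) ?_
  · rw [abs_abs]
    exact ((abs_sub _ _).trans (add_le_add (hM _ _) le_rfl)).trans (le_max_left _ _)
  · refine le_trans ?_ (le_max_right _ _)
    rw [abs_mul]
    exact mul_le_mul (abs_sign_le _) ((abs_sub _ _).trans (add_le_add (hC _ (hM _ _)) le_rfl)) (abs_nonneg _) zero_le_one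
  intro φ h1 h2 h3 h4
  exact sol.kruzkov_l k (fun x t => φ (x, t)) h1 h2 (fun x t => h4 _) (fun x t ht => by
      by_contra hne
      have : x < (0:ℝ) ∧ (0:ℝ) < t := h3 (subset_tsupport _ hne)
      rcases ht with h | h <;> linarith)

lemma interface_ge {a : ℝ} (ha : 0 < a) (hfl : ContDiff ℝ 2 fl) (hfr : ContDiff ℝ 2 fr)
    (hfl2 : ∀ w : ℝ, a ≤ deriv (deriv fl) w) (hfr2 : ∀ w : ℝ, a ≤ deriv (deriv fr) w)
    (hAB : fl A = fr B) (hA' : deriv fl A ≤ 0) (hB' : 0 ≤ deriv fr B) :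
    ∀ᵐ t, 0 < t → fl (sol.um 0 t) = fr (sol.up 0 t) ∧ fl A ≤ fr (sol.up 0 t) := by
  have cl := hfl.continuous
  have cr := hfr.continuous
  obtain ⟨C, hC⟩ := if_bdd sol cl cr
  let qm : ℝ → ℝ := fun t => Real.sign (sol.um 0 t - A) * (fl (sol.um 0 t) - fl A)
  let qp : ℝ → ℝ := fun t => Real.sign (sol.up 0 t - B) * (fr (sol.up 0 t) - fr B)
  have lm : ∀ t, 0 < t → Tendsto (fun y => ifb sol (y, t)) (nhdsWithin 0 (Iio 0)) (nhds (qm t)) := by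
    intro t ht
    refine (((sign_cont cl A).tendsto _).comp (sol.um_spec 0 t ht)).congr' ?_
    filter_upwards [self_mem_nhdsWithin] with y hy
    simp only [mem_Iio] at hy
    simp [ifb, dflux, cAB, hy, hy.le]
  have lp : ∀ t, 0 < t → Tendsto (fun y => ifb sol (y, t)) (nhdsWithin 0 (Ioi 0)) (nhds (qp t)) := by
    intro t ht
    refine (((sign_cont cr B).tendsto _).comp (sol.up_spec 0 t ht)).congr' ?_
    filter_upwards [self_mem_nhdsWithin] with y hy
    simp only [mem_Ioi] at hy
    simp [ifb, dflux, cAB, not_lt.2 hy.le, not_le.2 hy]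
  have key : ∀ t1 t2, 0 < t1 → t1 ≤ t2 → 0 ≤ ∫ t in t1..t2, (qm t - qp t) := by
    intro t1 t2 h1 h2
    have := trace_ineq (if_meas sol cl cr).1 (if_meas sol cl cr).2 (fun p => (hC p).1) (fun p => (hC p).2)
      (if_lip sol cl cr) (le_refl 0) h1 h2 lm lp (fun s _ => by simp)
    simpa using this
  have mm : AEStronglyMeasurable qm (volume.restrict (Ioi 0)) :=
    lim_aesm (if_meas sol cl cr).2 fun t ht => (lm t ht).comp (ptend_l 0)
  have mp : AEStronglyMeasurable qp (volume.restrict (Ioi 0)) :=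
    lim_aesm (if_meas sol cl cr).2 fun t ht => (lp t ht).comp (ptend_r 0)
  have k1 := ae_of_intervals (C := C + C) (mm.sub mp) (fun t ht => (abs_sub _ _).trans (add_le_add
    (le_of_tendsto (lm t ht).abs (Eventually.of_forall fun y => (hC _).2))
    (le_of_tendsto (lp t ht).abs (Eventually.of_forall fun y => (hC _).2)))) key
  filter_upwards [k1, fm_eq_fp sol cl cr 0] with t h1 h2 ht
  have h1 := h1 ht
  have h2 := h2 ht
  simp only [fm, fp, dflux, le_refl, if_true, lt_irrefl, if_false] at h2
  refine ⟨h2, ?_⟩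
  by_contra hlt
  push Not at hlt
  have t1 := (tangent ha hfl hfl2).2 A (sol.um 0 t)
  have t2 := (tangent ha hfr hfr2).2 B (sol.up 0 t)
  have c1 : A < sol.um 0 t := by
    by_contra h; push Not at h; nlinarith
  have c2 : sol.up 0 t < B := by
    by_contra h; push Not at h; nlinarith
  simp only [Pi.sub_apply, qm, qp] at h1
  rw [Real.sign_of_pos (by linarith), Real.sign_of_neg (by linarith)] at h1
  linarith
end HJ
end

section
section HJ2
variable {A B : ℝ} {fl fr u0 : ℝ → ℝ}
variable (sol : ABSol fl fr A B u0)

def UU (p : ℝ × ℝ) : ℝ := (∫ y in (0:ℝ)..p.1, sol.u y (max p.2 0)) - ∫ s in (0:ℝ)..(max p.2 0), fp sol 0 s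

lemma fp_ii (hfl : Continuous fl) (hfr : Continuous fr) (x : ℝ) {t1 t2 : ℝ} (h1 : 0 ≤ t1) (h2 : 0 ≤ t2) :
    IntervalIntegrable (fp sol x) volume t1 t2 := by
  obtain ⟨C, hC⟩ := fm_bdd sol hfl hfr
  have hsub : uIoc t1 t2 ⊆ Ioi 0 := fun s hs => (le_min h1 h2).trans_lt hs.1
  rw [intervalIntegrable_iff]
  have : IsFiniteMeasure (volume.restrict (uIoc t1 t2)) := ⟨by simp [uIoc]⟩
  refine Integrable.of_bound ((fp_meas sol hfl hfr x).mono_set hsub) C ?_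
  filter_upwards [ae_restrict_mem measurableSet_uIoc] with s hs
  exact (hC x s (hsub hs)).2

lemma UU_x (x1 x2 t : ℝ) : UU sol (x2, t) - UU sol (x1, t) = ∫ x in x1..x2, sol.u x (max t 0) := by
  have := intervalIntegral.integral_interval_sub_left (sol_ii sol (max t 0) 0 x2) (sol_ii sol (max t 0) 0 x1)
  unfold UU; simp only; linarith

lemma UU_t (hfl : Continuous fl) (hfr : Continuous fr) (x : ℝ) {t1 t2 : ℝ} (h1 : 0 < t1) (h2 : t1 ≤ t2) :
    UU sol (x, t2) - UU sol (x, t1) = - ∫ s in t1..t2, fp sol x s := by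
  have h0 : 0 < t2 := h1.trans_le h2
  unfold UU
  simp only [max_eq_left h1.le, max_eq_left h0.le]
  have e := intervalIntegral.integral_interval_sub_left (fp_ii sol hfl hfr 0 le_rfl h0.le) (fp_ii sol hfl hfr 0 le_rfl h1.le)
  have ii : ∀ y, IntervalIntegrable (fp sol y) volume t1 t2 := fun y => fp_ii sol hfl hfr y h1.le h0.le
  have cg : ∀ y, (fun t => fm sol y t) =ᵐ[volume.restrict (uIoc t1 t2)] fun t => fp sol y t := fun y => by
    rw [EventuallyEq, ae_restrict_iff' measurableSet_uIoc]
    filter_upwards [fm_eq_fp sol hfl hfr y] with t ht hm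
    rw [uIoc_of_le h2] at hm
    exact ht (h1.trans hm.1)
  rcases le_total 0 x with hx | hx
  · have g := gauss_green sol hfl hfr hx h1 h2
    have e2 : ∫ t in t1..t2, (fm sol 0 t - fp sol x t) = ∫ t in t1..t2, (fp sol 0 t - fp sol x t) := by
      refine intervalIntegral.integral_congr_ae_restrict ?_
      filter_upwards [cg 0] with t ht; rw [ht]
    rw [e2, intervalIntegral.integral_sub (ii 0) (ii x)] at g
    linarith
  · have g := gauss_green sol hfl hfr hx h1 h2
    have e2 : ∫ t in t1..t2, (fm sol x t - fp sol 0 t) = ∫ t in t1..t2, (fp sol x t - fp sol 0 t) := by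
      refine intervalIntegral.integral_congr_ae_restrict ?_
      filter_upwards [cg x] with t ht; rw [ht]
    rw [e2, intervalIntegral.integral_sub (ii x) (ii 0)] at g
    rw [intervalIntegral.integral_symm x 0, intervalIntegral.integral_symm x 0]
    linarith

lemma UU_tcont (hfl : Continuous fl) (hfr : Continuous fr) (x : ℝ) :
    Tendsto (fun t => UU sol (x, t)) (nhdsWithin 0 (Ioi 0)) (nhds (UU sol (x, 0))) := by
  obtain ⟨C, hC⟩ := fm_bdd sol hfl hfr
  have h1 := (sol_tc sol 0 x 0 le_rfl).mono_left (nhdsWithin_mono _ Ioi_subset_Ici_self)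
  have h2 : Tendsto (fun t => ∫ s in (0:ℝ)..t, fp sol 0 s) (nhdsWithin 0 (Ioi 0)) (nhds 0) := by
    rw [tendsto_zero_iff_norm_tendsto_zero]
    have h3 : Tendsto (fun t : ℝ => C * |t|) (nhdsWithin 0 (Ioi 0)) (nhds 0) := by
      have : Tendsto (fun t : ℝ => C * |t|) (nhds 0) (nhds (C * |0|)) := (by fun_prop : Continuous fun t : ℝ => C * |t|).tendsto 0
      simp only [abs_zero, mul_zero] at this
      exact this.mono_left nhdsWithin_le_nhds
    refine squeeze_zero' (Eventually.of_forall fun t => norm_nonneg _) ?_ h3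
    filter_upwards [self_mem_nhdsWithin] with t ht
    have := intervalIntegral.norm_integral_le_of_norm_le_const (a := 0) (b := t) (f := fp sol 0) (C := C) (fun s hs => by
      rw [uIoc_of_le (le_of_lt ht)] at hs
      exact (hC 0 s hs.1).2)
    simpa using this
  have := h1.sub h2
  refine (Tendsto.congr' ?_ this).trans_eq ?_
  · filter_upwards [self_mem_nhdsWithin] with t ht
    have : (0:ℝ) ≤ t := le_of_lt ht
    simp [UU, max_eq_left this]
  · simp [UU]

lemma UU_tlip (hfl : Continuous fl) (hfr : Continuous fr) {C : ℝ} (hC : ∀ x t, 0 < t → |fm sol x t| ≤ C ∧ |fp sol x t| ≤ C)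
    (x : ℝ) {t1 t2 : ℝ} (h1 : 0 ≤ t1) (h2 : t1 ≤ t2) : |UU sol (x, t2) - UU sol (x, t1)| ≤ C * (t2 - t1) := by
  have pos : ∀ t1 t2 : ℝ, 0 < t1 → t1 ≤ t2 → |UU sol (x, t2) - UU sol (x, t1)| ≤ C * (t2 - t1) := by
    intro t1 t2 h1 h2
    rw [UU_t sol hfl hfr x h1 h2, abs_neg]
    have := intervalIntegral.norm_integral_le_of_norm_le_const (a := t1) (b := t2) (f := fp sol x) (C := C) (fun s hs => by
      rw [uIoc_of_le h2] at hs
      exact (hC x s (h1.trans hs.1)).2)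
    rwa [abs_of_nonneg (by linarith)] at this
  rcases h1.eq_or_lt with rfl | h1
  · rcases h2.eq_or_lt with rfl | h2
    · simp
    · have l1 := ((UU_tcont sol hfl hfr x).const_sub (UU sol (x, t2))).abs
      have l2 : Tendsto (fun t : ℝ => C * (t2 - t)) (nhdsWithin 0 (Ioi 0)) (nhds (C * (t2 - 0))) :=
        ((by fun_prop : Continuous fun t : ℝ => C * (t2 - t)).tendsto 0).mono_left nhdsWithin_le_nhds
      refine le_of_tendsto_of_tendsto l1 l2 ?_
      filter_upwards [Ioo_mem_nhdsGT h2] with t ht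
      exact pos t t2 ht.1 ht.2.le
  · exact pos t1 t2 h1 h2

lemma UU_max (x t : ℝ) : UU sol (x, t) = UU sol (x, max t 0) := by simp [UU]

lemma UU_lip (hfl : Continuous fl) (hfr : Continuous fr) : ∃ K, LipschitzWith K (UU sol) := by
  obtain ⟨M, hM⟩ := sol.bdd
  obtain ⟨C, hC⟩ := fm_bdd sol hfl hfr
  have hM0 : 0 ≤ M := (abs_nonneg _).trans (hM 0 0)
  have hC0 : 0 ≤ C := (abs_nonneg _).trans (hC 0 1 one_pos).1
  refine ⟨⟨M + C, add_nonneg hM0 hC0⟩, LipschitzWith.of_dist_le_mul fun p q => ?_⟩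
  obtain ⟨x, t⟩ := p
  obtain ⟨y, s⟩ := q
  rw [Real.dist_eq]
  have d1 : |x - y| ≤ dist (x, t) (y, s) := by rw [← Real.dist_eq, Prod.dist_eq]; exact le_max_left _ _
  have d2 : |t - s| ≤ dist (x, t) (y, s) := by rw [← Real.dist_eq, Prod.dist_eq]; exact le_max_right _ _
  have e1 : |UU sol (x, t) - UU sol (y, t)| ≤ M * |x - y| := by
    rw [UU_x]
    exact intervalIntegral.norm_integral_le_of_norm_le_const (f := fun z => sol.u z (max t 0)) fun z _ => hM _ _
  have e2 : |UU sol (y, t) - UU sol (y, s)| ≤ C * |t - s| := by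
    rw [UU_max sol y t, UU_max sol y s]
    have hm : |max t 0 - max s 0| ≤ |t - s| := abs_max_sub_max_le_abs t s 0
    refine le_trans ?_ (mul_le_mul_of_nonneg_left hm hC0)
    rcases le_total (max s 0) (max t 0) with h | h
    · rw [abs_of_nonneg (sub_nonneg.2 h)]
      exact UU_tlip sol hfl hfr hC y (le_max_right _ _) h
    · rw [abs_sub_comm, abs_sub_comm (max t 0), abs_of_nonneg (sub_nonneg.2 h)]
      exact UU_tlip sol hfl hfr hC y (le_max_right _ _) h
  have e3 : UU sol (x, t) - UU sol (y, s) = (UU sol (x, t) - UU sol (y, t)) + (UU sol (y, t) - UU sol (y, s)) := by ring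
  rw [e3]
  refine (abs_add_le _ _).trans ?_
  have := mul_le_mul_of_nonneg_left d1 hM0
  have := mul_le_mul_of_nonneg_left d2 hC0
  change _ ≤ (M + C) * _
  linarith

lemma UU_right (x t : ℝ) (ht : 0 < t) : HasDerivWithinAt (fun y => UU sol (y, t)) (sol.up x t) (Ici x) x := by
  have h := intervalIntegral.integral_hasDerivWithinAt_of_tendsto_ae_right (sol_ii sol t 0 x) (s := Ici x) (t := Ioi x)
    ((sol_meas_x sol t).stronglyMeasurable.stronglyMeasurableAtFilter) ((sol.up_spec x t ht).mono_left inf_le_left)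
  have := h.sub_const (∫ s in (0:ℝ)..t, fp sol 0 s)
  refine this.congr (fun y _ => ?_) ?_ <;> simp [UU, max_eq_left ht.le]

lemma UU_left (x t : ℝ) (ht : 0 < t) : HasDerivWithinAt (fun y => UU sol (y, t)) (sol.um x t) (Iic x) x := by
  have hf : nhdsWithin x (Iic x) ⊓ ae volume ≤ nhdsWithin x (Iio x) := by
    rw [nhdsWithin, nhdsWithin, inf_assoc]
    refine inf_le_inf_left _ ?_
    rw [le_principal_iff]
    refine mem_inf_of_inter (mem_principal_self (Iic x)) (show {y | y ≠ x} ∈ ae volume from Measure.ae_ne volume x) ?_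
    rintro y ⟨h1, h2⟩
    exact lt_of_le_of_ne h1 h2
  have h := intervalIntegral.integral_hasDerivWithinAt_of_tendsto_ae_right (sol_ii sol t 0 x) (s := Iic x) (t := Iic x)
    ((sol_meas_x sol t).stronglyMeasurable.stronglyMeasurableAtFilter) ((sol.um_spec x t ht).mono_left hf)
  have := h.sub_const (∫ s in (0:ℝ)..t, fp sol 0 s)
  refine this.congr (fun y _ => ?_) ?_ <;> simp [UU, max_eq_left ht.le]

lemma UU_um_up {x t d : ℝ} (ht : 0 < t) (h : HasDerivAt (fun y => UU sol (y, t)) d x) : sol.um x t = d ∧ sol.up x t = d := by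
  constructor
  · exact (uniqueDiffWithinAt_Iic x).eq_deriv _ (UU_left sol x t ht) h.hasDerivWithinAt
  · exact (uniqueDiffWithinAt_Ici x).eq_deriv _ (UU_right sol x t ht) h.hasDerivWithinAt

lemma UU_dx (t : ℝ) (ht : 0 < t) : ∀ᵐ x, HasDerivAt (fun y => UU sol (y, t)) (sol.u x t) x := by
  obtain ⟨M, hM⟩ := sol.bdd
  have hGl : LocallyIntegrable (fun x => sol.u x t) := by
    rw [locallyIntegrable_iff]
    intro k hk
    exact Measure.integrableOn_of_bounded (M := M) hk.measure_lt_top.ne (sol_meas_x sol t).aestronglyMeasurable (Eventually.of_forall fun x => hM x t)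
  filter_upwards [LocallyIntegrable.ae_hasDerivAt_integral hGl] with x hx
  have := (hx 0).sub_const (∫ s in (0:ℝ)..t, fp sol 0 s)
  simpa [UU, max_eq_left ht.le] using this

lemma UU_dt (hfl : Continuous fl) (hfr : Continuous fr) (x : ℝ) :
    ∀ᵐ t, 0 < t → HasDerivAt (fun s => UU sol (x, s)) (-fp sol x t) t := by
  obtain ⟨C, hC⟩ := fm_bdd sol hfl hfr
  have hC0 : 0 ≤ C := (abs_nonneg _).trans (hC 0 1 one_pos).1
  let G := (Ioi (0:ℝ)).indicator (fp sol x)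
  have hGm : AEStronglyMeasurable G volume := (aestronglyMeasurable_indicator_iff measurableSet_Ioi).2 (fp_meas sol hfl hfr x)
  have hGb : ∀ t, ‖G t‖ ≤ C := fun t => by
    by_cases ht : t ∈ Ioi (0:ℝ)
    · simp only [G]; rw [indicator_of_mem ht]; exact (hC x t ht).2
    · simp only [G]; rw [indicator_of_notMem ht]; simpa using hC0
  have hGl : LocallyIntegrable G := by
    rw [locallyIntegrable_iff]
    intro k hk
    exact Measure.integrableOn_of_bounded (M := C) hk.measure_lt_top.ne hGm (Eventually.of_forall fun t => hGb t)
  filter_upwards [LocallyIntegrable.ae_hasDerivAt_integral hGl] with t ht h0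
  have h1 := ((ht (t / 2)).const_sub (UU sol (x, t / 2)))
  have e : G t = fp sol x t := indicator_of_mem (show t ∈ Ioi (0:ℝ) from h0) _
  rw [e] at h1
  refine h1.congr_of_eventuallyEq ?_
  filter_upwards [Ioi_mem_nhds (by linarith : t / 2 < t)] with s hs
  have hs : t / 2 < s := hs
  have := UU_t sol hfl hfr x (by linarith : 0 < t / 2) hs.le
  have e2 : ∫ r in t / 2..s, G r = ∫ r in t / 2..s, fp sol x r := by
    refine intervalIntegral.integral_congr fun r hr => ?_
    rw [uIcc_of_le hs.le] at hr
    exact indicator_of_mem (show r ∈ Ioi (0:ℝ) from (by linarith [hr.1] : (0:ℝ) < r)) _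
  rw [e2]; linarith

lemma UU_ae (hfl : Continuous fl) (hfr : Continuous fr) : ∀ᵐ p : ℝ × ℝ, 0 < p.2 →
    DifferentiableAt ℝ (UU sol) p ∧
    HasDerivAt (fun s => UU sol (p.1, s)) (-dflux fl fr p.1 (sol.u p.1 p.2)) p.2 ∧
      HasDerivAt (fun y => UU sol (y, p.2)) (sol.u p.1 p.2) p.1 := by
  obtain ⟨K, hK⟩ := UU_lip sol hfl hfr
  have hd := hK.ae_differentiableAt (μ := volume)
  let upm : ℝ × ℝ → ℝ := fun p => if 0 < p.2 then sol.up p.1 p.2 else 0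
  have mpos : MeasurableSet {p : ℝ × ℝ | 0 < p.2} := measurableSet_lt measurable_const measurable_snd
  have hupm : Measurable upm := by
    refine measurable_of_tendsto_metrizable (f := fun n (p : ℝ × ℝ) => if 0 < p.2 then sol.u (p.1 + hs n) p.2 else 0) (fun n => ?_) ?_
    · exact Measurable.ite mpos (sol.meas.comp (by fun_prop : Measurable fun p : ℝ × ℝ => (p.1 + hs n, p.2))) measurable_const
    · rw [tendsto_pi_nhds]
      intro p
      by_cases h : 0 < p.2
      · simp only [upm, h, if_true]
        exact (sol.up_spec p.1 p.2 h).comp (ptend_r p.1)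
      · simp [upm, h]
  have n1 : ∀ᵐ p : ℝ × ℝ, 0 < p.2 → pdt (UU sol) p = -dflux fl fr p.1 (upm p) := by
    rw [Measure.volume_eq_prod, Measure.ae_prod_iff_ae_ae]
    · refine Eventually.of_forall fun x => ?_
      filter_upwards [UU_dt sol hfl hfr x] with t ht h0
      have := (ht h0).deriv
      simp only [pdt, this, fp, upm, h0, if_true]
    · have : MeasurableSet {p : ℝ × ℝ | pdt (UU sol) p = -dflux fl fr p.1 (upm p)} :=
        measurableSet_eq_fun (measurable_pdt hK.continuous) (dflux_meas hfl hfr hupm).neg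
      have e : {p : ℝ × ℝ | 0 < p.2 → pdt (UU sol) p = -dflux fl fr p.1 (upm p)} = {p : ℝ × ℝ | 0 < p.2}ᶜ ∪ {p : ℝ × ℝ | pdt (UU sol) p = -dflux fl fr p.1 (upm p)} := by
        ext p; simp only [mem_ofPred_eq, mem_union, mem_compl_iff]; tauto
      rw [e]; exact mpos.compl.union this
  have m2 : MeasurableSet {p : ℝ × ℝ | 0 < p.2 → upm p = sol.u p.1 p.2 ∧ pdx (UU sol) p = sol.u p.1 p.2} := by
    have a1 : MeasurableSet {p : ℝ × ℝ | upm p = sol.u p.1 p.2} := measurableSet_eq_fun hupm sol.meas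
    have a2 : MeasurableSet {p : ℝ × ℝ | pdx (UU sol) p = sol.u p.1 p.2} := measurableSet_eq_fun (measurable_pdx hK.continuous) sol.meas
    have e : {p : ℝ × ℝ | 0 < p.2 → upm p = sol.u p.1 p.2 ∧ pdx (UU sol) p = sol.u p.1 p.2} =
        {p : ℝ × ℝ | 0 < p.2}ᶜ ∪ ({p : ℝ × ℝ | upm p = sol.u p.1 p.2} ∩ {p : ℝ × ℝ | pdx (UU sol) p = sol.u p.1 p.2}) := by
      ext p; simp only [mem_ofPred_eq, mem_union, mem_compl_iff, mem_inter_iff]; tauto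
    rw [e]; exact mpos.compl.union (a1.inter a2)
  have n2 : ∀ᵐ p : ℝ × ℝ, 0 < p.2 → upm p = sol.u p.1 p.2 ∧ pdx (UU sol) p = sol.u p.1 p.2 := by
    rw [Measure.volume_eq_prod, Measure.ae_prod_iff_ae_ae m2,
      Measure.ae_ae_comm (p := fun x t => (0 < (x, t).2 → upm (x, t) = sol.u (x, t).1 (x, t).2 ∧ pdx (UU sol) (x, t) = sol.u (x, t).1 (x, t).2)) m2]
    refine Eventually.of_forall fun t => ?_
    by_cases h0 : 0 < t
    · filter_upwards [UU_dx sol t h0] with x hx _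
      refine ⟨?_, hx.deriv⟩
      simp only [upm, h0, if_true]; exact (UU_um_up sol h0 hx).2
    · exact Eventually.of_forall fun x hx => absurd hx h0
  filter_upwards [hd, n1, n2] with p hp h1 h2 h0
  refine ⟨hp, ?_, ?_⟩
  · have hdd : DifferentiableAt ℝ (fun s => UU sol (p.1, s)) p.2 := by
      have hp' : DifferentiableAt ℝ (UU sol) ((fun s : ℝ => (p.1, s)) p.2) := hp
      exact DifferentiableAt.comp (f := fun s : ℝ => (p.1, s)) p.2 hp' (by fun_prop)
    have := hdd.hasDerivAt
    rw [show deriv (fun s => UU sol (p.1, s)) p.2 = _ from h1 h0, (h2 h0).1] at this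
    exact this
  · have hdd : DifferentiableAt ℝ (fun y => UU sol (y, p.2)) p.1 := by
      have hp' : DifferentiableAt ℝ (UU sol) ((fun y : ℝ => (y, p.2)) p.1) := hp
      exact DifferentiableAt.comp (f := fun y : ℝ => (y, p.2)) p.1 hp' (by fun_prop)
    have := hdd.hasDerivAt
    rw [show deriv (fun y => UU sol (y, p.2)) p.1 = _ from (h2 h0).2] at this
    exact this
end HJ2
end

structure Leg (f L g : ℝ → ℝ) : Prop where
  dfg : ∀ v, deriv f (g v) = v
  dL : ∀ v, HasDerivAt L (g v) v
  eqL : ∀ v, L v = v * g v - f (g v)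
  fen : ∀ p v, p * v - f p ≤ L v

lemma legendre {a : ℝ} {f : ℝ → ℝ} (ha : 0 < a) (hf : ContDiff ℝ 2 f) (h2 : ∀ w, a ≤ deriv (deriv f) w) :
    ∃ L g, Leg f L g := by
  obtain ⟨hm, ht⟩ := tangent ha hf h2
  have hd1 : ContDiff ℝ 1 (deriv f) := hf.deriv'
  have hdd : Differentiable ℝ (deriv f) := hd1.differentiable (by norm_num)
  have hmono : Monotone fun w => deriv f w - a * w := by
    refine monotone_of_deriv_nonneg (by fun_prop) fun w => ?_
    have : HasDerivAt (fun w => deriv f w - a * w) (deriv (deriv f) w - a * 1) w :=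
      (hdd w).hasDerivAt.sub ((hasDerivAt_id w).const_mul a)
    rw [this.deriv]; linarith [h2 w]
  have hsurj : Function.Surjective (deriv f) := by
    refine hdd.continuous.surjective ?_ ?_
    · refine tendsto_atTop_mono' _ (f₁ := fun w => a * w + deriv f 0) ?_ ?_
      · filter_upwards [eventually_ge_atTop 0] with w hw
        have := hmono hw; simp only [mul_zero, sub_zero] at this; linarith
      · exact tendsto_atTop_add_const_right _ _ (tendsto_id.const_mul_atTop ha)
    · have key : Tendsto (fun w => a * w + deriv f 0) atBot atBot :=
        tendsto_atBot_add_const_right _ _ (tendsto_id.const_mul_atBot ha)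
      refine tendsto_atBot_mono' _ ?_ key
      · filter_upwards [eventually_le_atBot 0] with w hw
        have := hmono hw; simp only [mul_zero, sub_zero] at this; linarith
  let e := hm.orderIsoOfSurjective _ hsurj
  let g : ℝ → ℝ := e.symm
  have hg : ∀ v, deriv f (g v) = v := fun v => e.apply_symm_apply v
  have hgc : Continuous g := e.symm.continuous
  have hgd : ∀ v, HasDerivAt g (deriv (deriv f) (g v))⁻¹ v := fun v =>
    HasDerivAt.of_local_left_inverse hgc.continuousAt (hdd (g v)).hasDerivAt (ha.trans_le (h2 (g v))).ne' (Eventually.of_forall hg)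
  refine ⟨fun v => v * g v - f (g v), g, hg, fun v => ?_, fun v => rfl, fun p v => ?_⟩
  · have hfd : HasDerivAt f v (g v) := by
      have := (hf.differentiable (by norm_num) (g v)).hasDerivAt; rwa [hg] at this
    have := ((hasDerivAt_id v).mul (hgd v)).sub (hfd.comp v (hgd v))
    refine this.congr_deriv ?_
    simp
  · have := ht (g v) p
    rw [hg] at this; nlinarith

lemma sub_line {f L g : ℝ → ℝ} (hL : Leg f L g) {U : ℝ × ℝ → ℝ} {K : NNReal} (hU : LipschitzWith K U)
    (hae : ∀ᵐ p : ℝ × ℝ, 0 < p.1 → 0 < p.2 → DifferentiableAt ℝ U p ∧ ∃ w, HasDerivAt (fun s => U (p.1, s)) (-f w) p.2 ∧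
      HasDerivAt (fun y => U (y, p.2)) w p.1) {x1 x2 t1 t2 : ℝ} (hx1 : 0 ≤ x1) (hx2 : 0 ≤ x2) (ht1 : 0 ≤ t1) (ht : t1 < t2) :
    U (x2, t2) ≤ U (x1, t1) + (t2 - t1) * L ((x2 - x1) / (t2 - t1)) := by
  set lam := (x2 - x1) / (t2 - t1) with hlam
  have hl : lam * (t2 - t1) = x2 - x1 := by rw [hlam]; field_simp [(sub_pos.2 ht).ne']
  set ξ0 := x1 - lam * t1 with hξ0
  have mp : MeasurePreserving (fun q : ℝ × ℝ => (q.1 + lam * q.2, q.2)) (volume.prod volume) (volume.prod volume) := by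
    have h1 : MeasurePreserving (fun q : ℝ × ℝ => (q.1, q.2 + lam * q.1)) (volume.prod volume) (volume.prod volume) := by
      refine (MeasurePreserving.id volume).skew_product (g := fun τ ξ => ξ + lam * τ) (by unfold Function.uncurry; fun_prop) ?_
      exact Eventually.of_forall fun τ => map_add_right_eq_self volume (lam * τ)
    exact Measure.measurePreserving_swap.comp (h1.comp Measure.measurePreserving_swap)
  have hae2 := mp.quasiMeasurePreserving.ae hae
  have hae3 := Measure.ae_ae_of_ae_prod hae2
  have key : ∀ᵐ ξ, ξ0 < ξ → U (ξ + lam * t2, t2) ≤ U (ξ + lam * t1, t1) + (t2 - t1) * L lam := by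
    filter_upwards [hae3] with ξ hξ hpos
    let w : ℝ → ℝ := fun τ => U (ξ + lam * τ, τ)
    have hwl : ∃ K', LipschitzWith K' w := by
      have a1 : LipschitzWith (‖lam‖₊) (fun τ : ℝ => lam * τ) := lipschitzWith_smul lam
      have a2 : LipschitzWith (0 + ‖lam‖₊) (fun τ : ℝ => ξ + lam * τ) := (LipschitzWith.const ξ).add a1
      exact ⟨_, hU.comp (a2.prodMk LipschitzWith.id)⟩
    obtain ⟨K', hw⟩ := hwl
    have hac : AbsolutelyContinuousOnInterval w t1 t2 := (hw.lipschitzOnWith).absolutelyContinuousOnInterval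
    have hint := hac.integral_deriv_eq_sub
    have hle : ∫ τ in t1..t2, deriv w τ ≤ ∫ τ in t1..t2, L lam := by
      refine intervalIntegral.integral_mono_ae_restrict ht.le hac.intervalIntegrable_deriv (by simp) ?_
      rw [EventuallyLE, ae_restrict_iff' measurableSet_Icc]
      filter_upwards [hξ, Measure.ae_ne volume t1] with τ hτ hne hmem
      have hτ1 : t1 < τ := lt_of_le_of_ne hmem.1 (Ne.symm hne)
      have hxp : 0 < ξ + lam * τ := by
        have h1 : 0 ≤ x1 + lam * (τ - t1) := by
          have : x1 + lam * (τ - t1) = ((t2 - τ) * x1 + (τ - t1) * x2) / (t2 - t1) := by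
            rw [hlam]; field_simp [(sub_pos.2 ht).ne']; ring
          rw [this]
          exact div_nonneg (add_nonneg (mul_nonneg (by linarith [hmem.2]) hx1) (mul_nonneg (by linarith) hx2)) (by linarith)
        have : ξ + lam * τ = (ξ - ξ0) + (x1 + lam * (τ - t1)) := by rw [hξ0]; ring
        rw [this]; linarith
      obtain ⟨hd, u, d1, d2⟩ := hτ hxp (ht1.trans_lt hτ1)
      have hF := hd.hasFDerivAt
      set F := fderiv ℝ U (ξ + lam * τ, τ) with hFdef
      have e1 : F (0, 1) = -f u := by
        have : HasDerivAt (fun s => U (ξ + lam * τ, s)) (F (0, 1)) τ :=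
          HasFDerivAt.comp_hasDerivAt (f := fun s : ℝ => (ξ + lam * τ, s)) τ hF ((hasDerivAt_const τ _).prodMk (hasDerivAt_id τ))
        exact this.unique d1
      have e2 : F (1, 0) = u := by
        have : HasDerivAt (fun y => U (y, τ)) (F (1, 0)) (ξ + lam * τ) :=
          HasFDerivAt.comp_hasDerivAt (f := fun y : ℝ => (y, τ)) (ξ + lam * τ) hF ((hasDerivAt_id _).prodMk (hasDerivAt_const _ _))
        exact this.unique d2
      have e3 : HasDerivAt w (F (lam, 1)) τ := by
        refine HasFDerivAt.comp_hasDerivAt (f := fun s : ℝ => (ξ + lam * s, s)) τ hF (HasDerivAt.prodMk ?_ (hasDerivAt_id _))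
        simpa using ((hasDerivAt_id τ).const_mul lam).const_add ξ
      have e4 : F (lam, 1) = lam * u - f u := by
        have : ((lam, 1) : ℝ × ℝ) = lam • (1, 0) + (0, 1) := by simp
        rw [this, map_add, map_smul, e1, e2, smul_eq_mul]; ring
      rw [e3.deriv, e4]
      have := hL.fen u lam; linarith
    rw [hint] at hle
    simp only [intervalIntegral.integral_const, smul_eq_mul, w] at hle
    linarith
  have hdense : ∃ᶠ ξ in nhdsWithin ξ0 (Ioi ξ0), U (ξ + lam * t2, t2) ≤ U (ξ + lam * t1, t1) + (t2 - t1) * L lam := by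
    intro hcon
    rw [eventually_nhdsWithin_iff, Metric.eventually_nhds_iff] at hcon
    obtain ⟨r, hr, hcon⟩ := hcon
    have : volume (Ioo ξ0 (ξ0 + r)) = 0 := by
      refine measure_mono_null ?_ (ae_iff.1 key)
      intro ξ hξ h
      refine hcon (y := ξ) ?_ hξ.1 (h hξ.1)
      rw [Real.dist_eq, abs_of_pos (by linarith [hξ.1])]; linarith [hξ.2]
    simp at this; linarith
  have hc := hU.continuous
  have l1 : Tendsto (fun ξ => U (ξ + lam * t2, t2) - (U (ξ + lam * t1, t1) + (t2 - t1) * L lam)) (nhdsWithin ξ0 (Ioi ξ0))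
      (nhds (U (ξ0 + lam * t2, t2) - (U (ξ0 + lam * t1, t1) + (t2 - t1) * L lam))) :=
    ((by fun_prop : Continuous fun ξ => U (ξ + lam * t2, t2) - (U (ξ + lam * t1, t1) + (t2 - t1) * L lam)).tendsto ξ0).mono_left nhdsWithin_le_nhds
  have := le_of_tendsto_of_frequently l1 (hdense.mono fun ξ h => sub_nonpos.2 h)
  rw [show ξ0 + lam * t2 = x2 by rw [hξ0]; linarith, show ξ0 + lam * t1 = x1 by rw [hξ0]; ring] at this
  linarith

structure SideSol (f L g : ℝ → ℝ) (W : ℝ → ℝ → ℝ) (K : ℝ) : Prop where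
  leg : Leg f L g
  lip : ∀ x s y t, |W x s - W y t| ≤ K * (|x - y| + |s - t|)
  sub : ∀ x1 x2 t1 t2, 0 ≤ x1 → 0 ≤ x2 → 0 ≤ t1 → t1 < t2 →
    W x2 t2 ≤ W x1 t1 + (t2 - t1) * L ((x2 - x1) / (t2 - t1))
  super : ∀ x0 t0 k α, 0 < x0 → 0 < t0 →
    (∀ η > 0, ∃ r > 0, ∀ x t, |x - x0| + |t - t0| < r →
      W x0 t0 + k * (x - x0) + α * (t - t0) - η * (|x - x0| + |t - t0|) ≤ W x t) → 0 ≤ α + f k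

lemma subdiff_of_fderiv {W : ℝ → ℝ → ℝ} {G : ℝ × ℝ → ℝ} {F : ℝ × ℝ →L[ℝ] ℝ} {x0 t0 : ℝ}
    (hG : HasFDerivAt G F (x0, t0)) (h : ∀ᶠ p : ℝ × ℝ in nhds (x0, t0), W x0 t0 + G (x0, t0) ≤ W p.1 p.2 + G p) :
    ∀ η > 0, ∃ r > 0, ∀ x t, |x - x0| + |t - t0| < r →
      W x0 t0 + (-F (1, 0)) * (x - x0) + (-F (0, 1)) * (t - t0) - η * (|x - x0| + |t - t0|) ≤ W x t := by
  intro η hη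
  have h1 := (hasFDerivAt_iff_isLittleO.1 hG).def hη
  obtain ⟨r, hr, hb⟩ := Metric.eventually_nhds_iff.1 (h1.and h)
  refine ⟨r, hr, fun x t hxt => ?_⟩
  have hn : ‖((x, t) : ℝ × ℝ) - (x0, t0)‖ ≤ |x - x0| + |t - t0| := by
    rw [Prod.mk_sub_mk, Prod.norm_def]
    exact max_le (by simp) (by simp)
  obtain ⟨h2, h3⟩ := hb (y := (x, t)) (by rw [dist_eq_norm]; exact hn.trans_lt hxt)
  have h4 : F ((x, t) - (x0, t0)) = F (1, 0) * (x - x0) + F (0, 1) * (t - t0) := by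
    have : ((x, t) : ℝ × ℝ) - (x0, t0) = (x - x0) • (1, 0) + (t - t0) • (0, 1) := by simp
    rw [this, map_add, map_smul, map_smul, smul_eq_mul, smul_eq_mul]; ring
  rw [h4, Real.norm_eq_abs] at h2
  have h5 := (le_abs_self _).trans (h2.trans (mul_le_mul_of_nonneg_left hn hη.le))
  simp only at h3
  linarith

lemma Leg.cont {f L g : ℝ → ℝ} (hL : Leg f L g) : Continuous L :=
  continuous_iff_continuousAt.2 fun v => (hL.dL v).continuousAt

lemma Leg.fderiv {f L g : ℝ → ℝ} (hL : Leg f L g) (x0 T : ℝ) {y s : ℝ} (hs : s < T) :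
    ∃ F : ℝ × ℝ →L[ℝ] ℝ, HasFDerivAt (fun p : ℝ × ℝ => (T - p.2) * L ((x0 - p.1) / (T - p.2))) F (y, s) ∧
      F (1, 0) = -g ((x0 - y) / (T - s)) ∧ F (0, 1) = f (g ((x0 - y) / (T - s))) := by
  have hT : T - s ≠ 0 := (sub_pos.2 hs).ne'
  set v := (x0 - y) / (T - s) with hv
  have hLd : Differentiable ℝ L := fun v => (hL.dL v).differentiableAt
  have hd : DifferentiableAt ℝ (fun p : ℝ × ℝ => (T - p.2) * L ((x0 - p.1) / (T - p.2))) (y, s) := by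
    have : DifferentiableAt ℝ (fun p : ℝ × ℝ => (x0 - p.1) / (T - p.2)) (y, s) :=
      by fun_prop (disch := exact hT)
    exact DifferentiableAt.mul (by fun_prop) ((hLd _).comp _ this)
  refine ⟨_, hd.hasFDerivAt, ?_, ?_⟩
  · have h1 := HasFDerivAt.comp_hasDerivAt (f := fun z : ℝ => (z, s)) y hd.hasFDerivAt ((hasDerivAt_id y).prodMk (hasDerivAt_const y s))
    have h2 : HasDerivAt (fun z => (T - s) * L ((x0 - z) / (T - s))) ((T - s) * (g v * (-1 / (T - s)))) y := by
      refine HasDerivAt.const_mul _ (HasDerivAt.comp (h₂ := L) y (hL.dL v) ?_)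
      exact ((hasDerivAt_id y).const_sub x0).div_const _
    rw [h1.unique h2]; field_simp
  · have h1 := HasFDerivAt.comp_hasDerivAt (f := fun z : ℝ => (y, z)) s hd.hasFDerivAt ((hasDerivAt_const s y).prodMk (hasDerivAt_id s))
    have h3 : HasDerivAt (fun z => T - z) (-1) s := (hasDerivAt_id s).const_sub T
    have h2 : HasDerivAt (fun z => (T - z) * L ((x0 - y) / (T - z)))
        ((-1) * L v + (T - s) * (g v * ((0 * (T - s) - (x0 - y) * (-1)) / (T - s) ^ 2))) s := by
      refine HasDerivAt.mul h3 (HasDerivAt.comp (h₂ := L) s (hL.dL v) ?_)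
      exact (hasDerivAt_const s (x0 - y)).div h3 hT
    rw [h1.unique h2, hL.eqL]
    have : (T - s) * (g v * ((0 * (T - s) - (x0 - y) * (-1)) / (T - s) ^ 2)) = v * g v := by
      rw [hv]; field_simp; ring
    rw [this]; ring

namespace SideSol
variable {f L g : ℝ → ℝ} {W : ℝ → ℝ → ℝ} {K : ℝ}

lemma K_nonneg (S : SideSol f L g W K) : 0 ≤ K := by
  have := (abs_nonneg _).trans (S.lip 1 0 0 0); simpa using this

lemma cont (S : SideSol f L g W K) : Continuous fun p : ℝ × ℝ => W p.1 p.2 := by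
  refine continuous_iff_continuousAt.2 fun q => ?_
  have : Tendsto (fun p : ℝ × ℝ => K * (|p.1 - q.1| + |p.2 - q.2|)) (nhds q) (nhds 0) := by
    have : Continuous (fun p : ℝ × ℝ => K * (|p.1 - q.1| + |p.2 - q.2|)) := by fun_prop
    simpa using this.tendsto q
  exact tendsto_iff_dist_tendsto_zero.2 (squeeze_zero (fun _ => dist_nonneg) (fun p => S.lip _ _ _ _) this)

lemma coer (S : SideSol f L g W K) : ∃ C, 0 ≤ C ∧ ∀ x0 T y s, s < T →
    W x0 T + |x0 - y| - C * (T - s) ≤ W y s + (T - s) * L ((x0 - y) / (T - s)) := by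
  have hK := S.K_nonneg
  refine ⟨K + |f (K + 1)| + |f (-(K + 1))|, by positivity, fun x0 T y s hs => ?_⟩
  have hT : 0 < T - s := sub_pos.2 hs
  have e : ∀ p, p * (x0 - y) - (T - s) * f p ≤ (T - s) * L ((x0 - y) / (T - s)) := fun p => by
    have := mul_le_mul_of_nonneg_left (S.leg.fen p ((x0 - y) / (T - s))) hT.le
    refine le_trans (le_of_eq ?_) this
    field_simp
  have h1 := (abs_le.1 (S.lip x0 T y s)).2
  rw [abs_of_pos hT] at h1
  have e1 := e (K + 1)
  have e2 := e (-(K + 1))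
  have b1 := mul_le_mul_of_nonneg_left (le_abs_self (f (K + 1))) hT.le
  have b2 := mul_le_mul_of_nonneg_left (le_abs_self (f (-(K + 1)))) hT.le
  have b3 := mul_nonneg hT.le (abs_nonneg (f (K + 1)))
  have b4 := mul_nonneg hT.le (abs_nonneg (f (-(K + 1))))
  rcases abs_cases (x0 - y) with ⟨h, _⟩ | ⟨h, _⟩ <;> rw [h] at h1 ⊢ <;> nlinarith

lemma phi_cont (S : SideSol f L g W K) (x0 T : ℝ) :
    ContinuousOn (fun p : ℝ × ℝ => W p.1 p.2 + (T - p.2) * L ((x0 - p.1) / (T - p.2))) {p | p.2 < T} := by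
  refine S.cont.continuousOn.add (ContinuousOn.mul (by fun_prop) (S.leg.cont.comp_continuousOn ?_))
  exact ContinuousOn.div (by fun_prop) (by fun_prop) fun p hp => (sub_pos.2 hp).ne'

lemma stepD (S : SideSol f L g W K) {x0 T : ℝ} (hx : 0 < x0) (hT : 0 < T) :
    ∃ y s, ((s = 0 ∧ 0 ≤ y) ∨ (y = 0 ∧ 0 ≤ s ∧ s < T)) ∧
      W y s + (T - s) * L ((x0 - y) / (T - s)) ≤ W x0 T := by
  by_contra hcon
  push Not at hcon
  obtain ⟨C, hC, hco⟩ := S.coer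
  have hK := S.K_nonneg
  set Φ : ℝ × ℝ → ℝ := fun p => W p.1 p.2 + (T - p.2) * L ((x0 - p.1) / (T - p.2)) with hΦ
  have hΦc : ContinuousOn Φ {p | p.2 < T} := S.phi_cont x0 T
  -- gap on the boundary
  have gap : ∃ ε > 0, ∀ y s, ((s = 0 ∧ 0 ≤ y) ∨ (y = 0 ∧ 0 ≤ s ∧ s < T)) → W x0 T + ε ≤ Φ (y, s) := by
    set R := x0 + 1 + C * T with hR
    set δ := min (T / 2) (x0 / (2 * (C + 1))) with hδ
    have hδ0 : 0 < δ := lt_min (by linarith) (by positivity)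
    have hδT : δ ≤ T / 2 := min_le_left _ _
    have hδx : C * δ ≤ x0 / 2 := by
      have : δ ≤ x0 / (2 * (C + 1)) := min_le_right _ _
      rw [le_div_iff₀ (by positivity)] at this
      nlinarith
    have hcomp : IsCompact (((fun y : ℝ => ((y, 0) : ℝ × ℝ)) '' Icc 0 R) ∪ ((fun s : ℝ => ((0, s) : ℝ × ℝ)) '' Icc 0 (T - δ))) :=
      (isCompact_Icc.image (by fun_prop)).union (isCompact_Icc.image (by fun_prop))
    obtain ⟨q, hq, hmin⟩ := hcomp.exists_isMinOn ⟨(0, 0), Or.inl ⟨0, ⟨le_rfl, by positivity⟩, rfl⟩⟩ (hΦc.mono (by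
      rintro p (⟨y, hy, rfl⟩ | ⟨s, hs, rfl⟩)
      · exact hT
      · show s < T
        linarith [hs.2]))
    have hqb : W x0 T < Φ q := by
      rcases hq with ⟨y, hy, rfl⟩ | ⟨s, hs, rfl⟩
      · exact hcon y 0 (Or.inl ⟨rfl, hy.1⟩)
      · exact hcon 0 s (Or.inr ⟨rfl, hs.1, by linarith [hs.2]⟩)
    refine ⟨min (Φ q - W x0 T) (min (x0 / 2) 1), lt_min (by linarith) (lt_min (by linarith) one_pos), ?_⟩
    rintro y s hb
    have m1 := min_le_left (Φ q - W x0 T) (min (x0 / 2) 1)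
    have m2 : min (Φ q - W x0 T) (min (x0 / 2) 1) ≤ x0 / 2 := (min_le_right _ _).trans (min_le_left _ _)
    have m3 : min (Φ q - W x0 T) (min (x0 / 2) 1) ≤ 1 := (min_le_right _ _).trans (min_le_right _ _)
    rcases hb with ⟨rfl, hy⟩ | ⟨rfl, hs, hsT⟩
    · by_cases hyR : y ≤ R
      · have : Φ q ≤ Φ (y, 0) := hmin (Or.inl ⟨y, ⟨hy, hyR⟩, rfl⟩)
        linarith
      · have h1 := hco x0 T y 0 hT
        have h2 := neg_le_abs (x0 - y)
        simp only [sub_zero] at h1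
        simp only [hΦ, sub_zero]
        push Not at hyR
        linarith
    · by_cases hsδ : s ≤ T - δ
      · have : Φ q ≤ Φ (0, s) := hmin (Or.inr ⟨s, ⟨hs, hsδ⟩, rfl⟩)
        linarith
      · have h1 := hco x0 T 0 s hsT
        rw [sub_zero, abs_of_pos hx] at h1
        simp only [hΦ, sub_zero]
        push Not at hsδ
        have : C * (T - s) ≤ C * δ := mul_le_mul_of_nonneg_left (by linarith) hC
        linarith
  obtain ⟨ε, hε, hgap⟩ := gap
  set M := ε + C * T with hM
  have hMp : 0 < M := by positivity
  -- choose sigma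
  obtain ⟨σ, hσ, hσT, hσM, hσε⟩ : ∃ σ > 0, σ < T ∧ σ ≤ M ∧ σ * (K + |L 0| + 1) < ε := by
    refine ⟨min (T / 2) (min M (ε / (2 * (K + |L 0| + 1)))), lt_min (by linarith) (lt_min hMp (by positivity)), (min_le_left _ _).trans_lt (by linarith), (min_le_right _ _).trans (min_le_left _ _), ?_⟩
    have : min (T / 2) (min M (ε / (2 * (K + |L 0| + 1)))) ≤ ε / (2 * (K + |L 0| + 1)) := (min_le_right _ _).trans (min_le_right _ _)
    have hp : 0 < K + |L 0| + 1 := by positivity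
    rw [le_div_iff₀ (by positivity)] at this
    nlinarith
  set ρ := σ ^ 2 with hρ
  have hρ0 : 0 < ρ := by positivity
  set Ψ : ℝ × ℝ → ℝ := fun p => Φ p + ρ / (T - p.2) with hΨ
  have hΨc : ContinuousOn Ψ {p | p.2 < T} :=
    hΦc.add (ContinuousOn.div (by fun_prop) (by fun_prop) fun p hp => (sub_pos.2 hp).ne')
  have hΨ0 : Ψ (x0, T - σ) < W x0 T + ε := by
    have h1 := (abs_le.1 (S.lip x0 (T - σ) x0 T)).2
    have h2 := mul_le_mul_of_nonneg_left (le_abs_self (L 0)) hσ.le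
    simp only [sub_self, abs_zero, zero_add, sub_sub_cancel_left, abs_neg, abs_of_pos hσ] at h1
    simp only [hΨ, hΦ, sub_self, zero_div, sub_sub_cancel, hρ]
    have : σ ^ 2 / σ = σ := by field_simp
    rw [this]; nlinarith
  set D : Set (ℝ × ℝ) := Icc 0 (x0 + M) ×ˢ Icc 0 (T - ρ / M) with hD
  have hDT : ∀ p ∈ D, p.2 < T := fun p hp => by
    have : p.2 ≤ T - ρ / M := hp.2.2
    have : 0 < ρ / M := by positivity
    linarith
  have hρM : ρ / M ≤ σ := by rw [div_le_iff₀ hMp, hρ]; nlinarith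
  have hmem : (x0, T - σ) ∈ D := ⟨⟨hx.le, by linarith⟩, ⟨by linarith, by linarith⟩⟩
  obtain ⟨⟨y, s⟩, hq, hmin⟩ := (isCompact_Icc.prod isCompact_Icc : IsCompact D).exists_isMinOn ⟨_, hmem⟩ (hΨc.mono hDT)
  have hqlt : Ψ (y, s) < W x0 T + ε := (hmin hmem).trans_lt hΨ0
  have hsT : s < T := hDT _ hq
  have hglob : ∀ p : ℝ × ℝ, 0 < p.1 → 0 < p.2 → p.2 < T → Ψ (y, s) ≤ Ψ p := by
    rintro ⟨y', s'⟩ h1 h2 h3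
    simp only at h1 h2 h3
    by_cases hp : (y', s') ∈ D
    · exact hmin hp
    refine hqlt.le.trans ?_
    have hc := hco x0 T y' s' h3
    have hCs : C * (T - s') ≤ C * T := mul_le_mul_of_nonneg_left (by linarith) hC
    have hTs : 0 < T - s' := sub_pos.2 h3
    have hpos : 0 < ρ / (T - s') := by positivity
    simp only [hΨ, hΦ]
    by_cases hy' : y' ≤ x0 + M
    · have : ¬ s' ≤ T - ρ / M := fun h => hp ⟨⟨h1.le, hy'⟩, ⟨h2.le, h⟩⟩
      push Not at this
      have h4 : M ≤ ρ / (T - s') := by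
        rw [le_div_iff₀ hTs]
        have : T - s' ≤ ρ / M := by linarith
        rw [le_div_iff₀ hMp] at this
        linarith
      have := abs_nonneg (x0 - y')
      linarith
    · push Not at hy'
      have := neg_le_abs (x0 - y')
      linarith
  have hTs : 0 < T - s := sub_pos.2 hsT
  have hpos : 0 < ρ / (T - s) := by positivity
  have hnb : ¬ ((s = 0 ∧ 0 ≤ y) ∨ (y = 0 ∧ 0 ≤ s ∧ s < T)) := fun hb => by
    have := hgap y s hb
    have h2 : Ψ (y, s) = Φ (y, s) + ρ / (T - s) := rfl
    linarith
  have hy0 : 0 < y := lt_of_le_of_ne hq.1.1 fun h => hnb (Or.inr ⟨h.symm, hq.2.1, hsT⟩)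
  have hs0 : 0 < s := lt_of_le_of_ne hq.2.1 fun h => hnb (Or.inl ⟨h.symm, hq.1.1⟩)
  obtain ⟨F, hF, hF1, hF2⟩ := S.leg.fderiv x0 T (y := y) hsT
  have hdG : HasDerivAt (fun z => ρ / (T - z)) (ρ / (T - s) ^ 2) s := by
    have h3 : HasDerivAt (fun z => T - z) (-1) s := (hasDerivAt_id s).const_sub T
    refine ((hasDerivAt_const s ρ).div h3 hTs.ne').congr_deriv ?_
    ring
  have hG2 := HasDerivAt.comp_hasFDerivAt (f := fun p : ℝ × ℝ => p.2) (y, s) hdG (hasFDerivAt_snd (𝕜 := ℝ) (p := (y, s)))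
  have hsum := hF.add hG2
  have hsup := S.super y s _ _ hy0 hs0 (subdiff_of_fderiv hsum (by
    have ho : IsOpen {p : ℝ × ℝ | 0 < p.1 ∧ 0 < p.2 ∧ p.2 < T} :=
      (isOpen_lt continuous_const continuous_fst).inter ((isOpen_lt continuous_const continuous_snd).inter (isOpen_lt continuous_snd continuous_const))
    filter_upwards [ho.mem_nhds (show (y, s) ∈ _ from ⟨hy0, hs0, hsT⟩)] with p hp
    have := hglob p hp.1 hp.2.1 hp.2.2
    simp only [hΨ, hΦ] at this
    simp only [Pi.add_apply, Function.comp_apply]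
    linarith))
  simp only [_root_.add_apply, hF1, hF2, _root_.smul_apply, ContinuousLinearMap.coe_snd', smul_eq_mul, mul_one, mul_zero, add_zero, neg_neg] at hsup
  have : 0 < ρ / (T - s) ^ 2 := by positivity
  linarith

end SideSol

lemma squeeze_deriv {lo w hi : ℝ → ℝ} {z d : ℝ} (hlo : HasDerivAt lo d z) (hhi : HasDerivAt hi d z)
    (h1 : ∀ᶠ y in nhds z, lo y ≤ w y) (h2 : ∀ᶠ y in nhds z, w y ≤ hi y) (h3 : hi z ≤ lo z) : HasDerivAt w d z := by
  have e1 := h1.self_of_nhds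
  have e2 := h2.self_of_nhds
  rw [hasDerivAt_iff_isLittleO] at *
  refine Asymptotics.isLittleO_iff.2 fun c hc => ?_
  filter_upwards [hlo.def hc, hhi.def hc, h1, h2] with y a1 a2 a3 a4
  rw [Real.norm_eq_abs] at *
  rw [abs_le] at *
  constructor <;> linarith [a1.1, a1.2, a2.1, a2.2]

namespace SideSol
variable {f L g : ℝ → ℝ} {W : ℝ → ℝ → ℝ} {K : ℝ}

lemma segment (S : SideSol f L g W K) {x1 x2 t1 t2 v : ℝ} (hx1 : 0 ≤ x1) (hx2 : 0 ≤ x2) (ht1 : 0 ≤ t1)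
    (hv : v * (t2 - t1) = x2 - x1) (he : W x1 t1 + (t2 - t1) * L v ≤ W x2 t2) {τ : ℝ} (h1 : t1 < τ) (h2 : τ < t2)
    (hz : 0 < x1 + v * (τ - t1)) : HasDerivAt (fun y => W y τ) (g v) (x1 + v * (τ - t1)) := by
  set z := x1 + v * (τ - t1) with hzd
  have p1 : 0 < τ - t1 := sub_pos.2 h1
  have p2 : 0 < t2 - τ := sub_pos.2 h2
  have ev : (z - x1) / (τ - t1) = v := by rw [hzd]; field_simp; ring
  have ev2 : (x2 - z) / (t2 - τ) = v := by
    rw [div_eq_iff p2.ne', hzd]; linarith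
  have hpos : ∀ᶠ y in nhds z, 0 < y := lt_mem_nhds hz
  refine squeeze_deriv (lo := fun y => W x2 t2 - (t2 - τ) * L ((x2 - y) / (t2 - τ)))
    (hi := fun y => W x1 t1 + (τ - t1) * L ((y - x1) / (τ - t1))) ?_ ?_ ?_ ?_ ?_
  · have h : HasDerivAt (fun y => (x2 - y) / (t2 - τ)) (-1 / (t2 - τ)) z := ((hasDerivAt_id z).const_sub x2).div_const _
    have hL := S.leg.dL ((x2 - z) / (t2 - τ))
    have := ((HasDerivAt.comp (h₂ := L) z hL h).const_mul (t2 - τ)).const_sub (W x2 t2)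
    refine this.congr_deriv ?_
    rw [ev2]; field_simp; try ring
  · have h : HasDerivAt (fun y => (y - x1) / (τ - t1)) (1 / (τ - t1)) z := ((hasDerivAt_id z).sub_const x1).div_const _
    have hL := S.leg.dL ((z - x1) / (τ - t1))
    have := ((HasDerivAt.comp (h₂ := L) z hL h).const_mul (τ - t1)).const_add (W x1 t1)
    refine this.congr_deriv ?_
    rw [ev]; field_simp; try ring
  · filter_upwards [hpos] with y hy
    have := S.sub y x2 τ t2 hy.le hx2 (by linarith) h2
    linarith
  · filter_upwards [hpos] with y hy
    exact S.sub x1 y t1 τ hx1 hy.le ht1 h1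
  · simp only [ev, ev2]; nlinarith

-- compactness near an interface point
lemma near (S : SideSol f L g W K) {s0 c γ : ℝ} (hs0 : 0 < s0) (hc : f c = γ)
    (hanti : ∀ s t, 0 ≤ s → s ≤ t → W 0 t + γ * t ≤ W 0 s + γ * s)
    (hgt : ∀ y, 0 ≤ y → W 0 s0 < W y 0 + s0 * L (-y / s0)) :
    ∃ r > 0, ∀ x s, 0 ≤ x → x < r → |s - s0| < r → W 0 s + c * x ≤ W x s := by
  obtain ⟨C, hC, hco⟩ := S.coer
  set R := 2 + C * (2 * s0) with hR
  have hev : ∀ᶠ q : ℝ × ℝ in nhds (0, s0), ∀ y ∈ Icc 0 R, W q.1 q.2 < W y 0 + q.2 * L ((q.1 - y) / q.2) := by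
    refine isCompact_Icc.eventually_forall_of_forall_eventually fun y hy => ?_
    have hcont : ContinuousAt (fun z : (ℝ × ℝ) × ℝ => W z.2 0 + z.1.2 * L ((z.1.1 - z.2) / z.1.2) - W z.1.1 z.1.2) ((0, s0), y) := by
      have c1 : Continuous fun z : (ℝ × ℝ) × ℝ => W z.2 0 := S.cont.comp (by fun_prop : Continuous fun z : (ℝ × ℝ) × ℝ => (z.2, (0:ℝ)))
      have c2 : Continuous fun z : (ℝ × ℝ) × ℝ => W z.1.1 z.1.2 := S.cont.comp (by fun_prop : Continuous fun z : (ℝ × ℝ) × ℝ => z.1)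
      have c3 : ContinuousAt (fun z : (ℝ × ℝ) × ℝ => (z.1.1 - z.2) / z.1.2) ((0, s0), y) :=
        ContinuousAt.div (by fun_prop) (by fun_prop) hs0.ne'
      have c4 : ContinuousAt (fun z : (ℝ × ℝ) × ℝ => L ((z.1.1 - z.2) / z.1.2)) ((0, s0), y) :=
        ContinuousAt.comp (g := L) S.leg.cont.continuousAt c3
      exact (c1.continuousAt.add (ContinuousAt.mul (by fun_prop) c4)).sub c2.continuousAt
    have h0 := hgt y hy.1
    have := hcont.eventually (lt_mem_nhds (a := 0) (by simp only [zero_sub]; linarith))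
    filter_upwards [this] with z hz
    linarith
  obtain ⟨r, hr, hb⟩ := Metric.eventually_nhds_iff.1 hev
  refine ⟨min r (min 1 s0), lt_min hr (lt_min one_pos hs0), fun x s hx hxr hsr => ?_⟩
  have hxr' := hxr.trans_le (min_le_left _ _)
  have hx1 : x < 1 := hxr.trans_le ((min_le_right _ _).trans (min_le_left _ _))
  have hss := abs_lt.1 (hsr.trans_le ((min_le_right _ _).trans (min_le_right _ _)))
  have hsp : 0 < s := by linarith [hss.1]
  have hball := hb (y := (x, s)) (by
    rw [Prod.dist_eq, Real.dist_eq, Real.dist_eq]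
    simp only [sub_zero, abs_of_nonneg hx]
    exact max_lt hxr' (hsr.trans_le (min_le_left _ _)))
  rcases hx.eq_or_lt with rfl | hx
  · simp
  obtain ⟨y, σ, hb1, hD⟩ := S.stepD hx hsp
  rcases hb1 with ⟨rfl, hy⟩ | ⟨rfl, h1, h2⟩
  · exfalso
    by_cases hyR : y ≤ R
    · have := hball y ⟨hy, hyR⟩
      simp only [sub_zero] at hD this
      linarith
    · have h3 := hco x s y 0 hsp
      have h4 := neg_le_abs (x - y)
      have h5 : C * (s - 0) ≤ C * (2 * s0) := mul_le_mul_of_nonneg_left (by linarith [hss.2]) hC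
      push Not at hyR
      linarith
  · have hp : 0 < s - σ := sub_pos.2 h2
    have h3 := mul_le_mul_of_nonneg_left (S.leg.fen c ((x - 0) / (s - σ))) hp.le
    have h4 : (s - σ) * (c * ((x - 0) / (s - σ)) - f c) = c * x - (s - σ) * γ := by
      rw [hc]; field_simp; ring
    have h5 := hanti σ s h1 h2.le
    nlinarith

end SideSol

lemma stepE {f1 L1 g1 f2 L2 g2 : ℝ → ℝ} {W1 W2 : ℝ → ℝ → ℝ} {K1 K2 c1 c2 γ T : ℝ}
    (S1 : SideSol f1 L1 g1 W1 K1) (S2 : SideSol f2 L2 g2 W2 K2) (hc1 : f1 c1 = γ) (hc2 : f2 c2 = γ)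
    (h12 : ∀ s, W1 0 s = W2 0 s) (hanti : ∀ s t, 0 ≤ s → s ≤ t → W1 0 t + γ * t ≤ W1 0 s + γ * s)
    (hIS : ∀ t0 α, 0 < t0 → (∀ η > 0, ∃ r > 0, ∀ x t, 0 ≤ x → x + |t - t0| < r →
      W1 0 t0 + c1 * x + α * (t - t0) - η * (x + |t - t0|) ≤ W1 x t ∧
      W2 0 t0 + c2 * x + α * (t - t0) - η * (x + |t - t0|) ≤ W2 x t) → 0 ≤ α + γ) (hT : 0 ≤ T) :
    ∃ s0, 0 ≤ s0 ∧ s0 ≤ T ∧ W1 0 s0 + γ * s0 = W1 0 T + γ * T ∧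
      (s0 = 0 ∨ (0 < s0 ∧ ∃ y, 0 < y ∧ W1 y 0 + s0 * L1 (-y / s0) ≤ W1 0 s0) ∨
        (0 < s0 ∧ ∃ y, 0 < y ∧ W2 y 0 + s0 * L2 (-y / s0) ≤ W2 0 s0)) := by
  set h : ℝ → ℝ := fun s => W1 0 s + γ * s with hh
  have hW1c : Continuous fun s => W1 0 s := S1.cont.comp (by fun_prop : Continuous fun s : ℝ => ((0:ℝ), s))
  have hhc : Continuous h := hW1c.add (by fun_prop)
  have hcomp : IsCompact (Icc 0 T ∩ h ⁻¹' {h T}) := isCompact_Icc.inter_right (isClosed_singleton.preimage hhc)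
  obtain ⟨s0, ⟨hs0, hs0h⟩, hmin⟩ := hcomp.exists_isMinOn ⟨T, ⟨hT, le_rfl⟩, rfl⟩ (continuous_id.continuousOn)
  refine ⟨s0, hs0.1, hs0.2, hs0h, ?_⟩
  rcases hs0.1.eq_or_lt with h0 | hpos
  · exact Or.inl h0.symm
  right
  by_contra hcon
  push Not at hcon
  obtain ⟨hcon1, hcon2⟩ := hcon
  have hstrict : ∀ s, 0 ≤ s → s < s0 → h s0 < h s := fun s hs hss => by
    refine lt_of_le_of_ne (hanti s s0 hs hss.le) fun he => ?_
    have : s0 ≤ s := hmin ⟨⟨hs, hss.le.trans hs0.2⟩, by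
      have e2 : h s0 = h T := hs0h
      show h s = h T
      rw [← he, e2]⟩
    linarith
  have h00 := hstrict 0 le_rfl hpos
  simp only [hh, mul_zero, add_zero] at h00
  have n1 : ∃ r > 0, ∀ x s, 0 ≤ x → x < r → |s - s0| < r → W1 0 s + c1 * x ≤ W1 x s := by
    refine S1.near hpos hc1 hanti fun y hy => ?_
    rcases hy.eq_or_lt with rfl | hy
    · have := S1.leg.fen c1 0
      have := mul_le_mul_of_nonneg_left this hpos.le
      simp only [neg_zero, zero_div]; rw [hc1] at this; linarith
    · exact hcon1 hpos y hy
  have n2 : ∃ r > 0, ∀ x s, 0 ≤ x → x < r → |s - s0| < r → W2 0 s + c2 * x ≤ W2 x s := by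
    refine S2.near hpos hc2 (by simpa only [h12] using hanti) fun y hy => ?_
    rcases hy.eq_or_lt with rfl | hy
    · have := S2.leg.fen c2 0
      have := mul_le_mul_of_nonneg_left this hpos.le
      rw [h12, h12] at h00
      simp only [neg_zero, zero_div]; rw [hc2] at this; linarith
    · exact hcon2 hpos y hy
  obtain ⟨r1, hr1, n1⟩ := n1
  obtain ⟨r2, hr2, n2⟩ := n2
  set r := min s0 (min r1 r2) with hr
  have hr0 : 0 < r := lt_min hpos (lt_min hr1 hr2)
  have hrs : r ≤ s0 := min_le_left _ _
  have hrr1 : r ≤ r1 := (min_le_right _ _).trans (min_le_left _ _)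
  have hrr2 : r ≤ r2 := (min_le_right _ _).trans (min_le_right _ _)
  obtain ⟨s, hs, hder⟩ : ∃ s ∈ Ioo (s0 - r) s0, deriv h s < 0 := by
    by_contra hno
    push Not at hno
    have hl : ∃ K', LipschitzWith K' h := by
      have a1 : LipschitzWith (Real.toNNReal K1) (fun s => W1 0 s) := by
        refine LipschitzWith.of_dist_le_mul fun s t => ?_
        have := S1.lip 0 s 0 t
        rw [Real.coe_toNNReal _ S1.K_nonneg, Real.dist_eq, Real.dist_eq]
        simpa using this
      have a2 : LipschitzWith (‖γ‖₊) (fun τ : ℝ => γ * τ) := lipschitzWith_smul γ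
      exact ⟨_, a1.add a2⟩
    obtain ⟨K', hl⟩ := hl
    have hac : AbsolutelyContinuousOnInterval h (s0 - r) s0 := (hl.lipschitzOnWith).absolutelyContinuousOnInterval
    have hint := hac.integral_deriv_eq_sub
    have : 0 ≤ ∫ τ in (s0 - r)..s0, deriv h τ := by
      refine intervalIntegral.integral_nonneg_of_ae_restrict (by linarith) ?_
      rw [EventuallyLE, ae_restrict_iff' measurableSet_Icc]
      filter_upwards [Measure.ae_ne volume (s0 - r), Measure.ae_ne volume s0] with τ e1 e2 hm
      exact hno τ ⟨lt_of_le_of_ne hm.1 (Ne.symm e1), lt_of_le_of_ne hm.2 e2⟩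
    have := hstrict (s0 - r) (by linarith) (by linarith)
    linarith
  have hd : HasDerivAt h (deriv h s) s := (differentiableAt_of_deriv_ne_zero hder.ne).hasDerivAt
  have hsp : 0 < s := by linarith [hs.1]
  have := hIS s (deriv h s - γ) hsp fun η hη => by
    have hlo := (hasDerivAt_iff_isLittleO.1 hd).def hη
    obtain ⟨r3, hr3, hb⟩ := Metric.eventually_nhds_iff.1 hlo
    refine ⟨min r3 (min r (min (s - (s0 - r)) (s0 - s))), lt_min hr3 (lt_min hr0 (lt_min (by linarith [hs.1]) (by linarith [hs.2]))), fun x t hx hxt => ?_⟩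
    have q0 := abs_nonneg (t - s)
    have q1 : |t - s| < r3 := by linarith [hxt.trans_le (min_le_left _ _)]
    have q2 := hxt.trans_le (min_le_right _ _)
    have q3 : x < r := by linarith [q2.trans_le (min_le_left _ _)]
    have q4 := q2.trans_le (min_le_right _ _)
    have q5 : |t - s| < s - (s0 - r) := by linarith [q4.trans_le (min_le_left _ _)]
    have q6 : |t - s| < s0 - s := by linarith [q4.trans_le (min_le_right _ _)]
    have q7 : |t - s0| < r := by
      rw [abs_lt] at *; constructor <;> linarith [q5.1, q5.2, q6.1, q6.2]
    have b := (abs_le.1 (hb (y := t) (by rw [Real.dist_eq]; exact q1))).1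
    simp only [hh, smul_eq_mul, Real.norm_eq_abs] at b
    have m1 := n1 x t hx (by linarith) (by linarith)
    have m2 := n2 x t hx (by linarith) (by linarith)
    have : 0 ≤ η * x := by positivity
    rw [← h12] at m2 ⊢
    constructor <;> nlinarith
  linarith

lemma f_lip {f : ℝ → ℝ} (hf : ContDiff ℝ 2 f) (M : ℝ) :
    ∃ Kf, 0 ≤ Kf ∧ ∀ v w, |v| ≤ M → |w| ≤ M → |f v - f w| ≤ Kf * |v - w| := by
  have hd : ContDiff ℝ 1 (deriv f) := hf.deriv'
  obtain ⟨C, hC⟩ := cont_bdd hd.continuous M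
  refine ⟨|C|, abs_nonneg _, fun v w hv hw => ?_⟩
  have := Convex.norm_image_sub_le_of_norm_deriv_le (f := f) (C := |C|) (s := Icc (-M) M) (x := w) (y := v)
    (fun x _ => hf.differentiable (by norm_num) x) (fun x hx => (hC x (abs_le.2 hx)).trans (le_abs_self _)) (convex_Icc _ _)
    (abs_le.1 hw) (abs_le.1 hv)
  simpa using this

lemma Leg.refl {f L g : ℝ → ℝ} (h : Leg f L g) : Leg (fun p => f (-p)) (fun v => L (-v)) (fun v => -g (-v)) where
  dfg v := by rw [deriv_comp_neg, neg_neg, h.dfg, neg_neg]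
  dL v := by
    have := HasDerivAt.comp (h₂ := L) v (h.dL (-v)) (hasDerivAt_neg v)
    exact this.congr_deriv (mul_neg_one _)
  eqL v := by rw [h.eqL]; simp
  fen p v := by have := h.fen (-p) (-v); linarith

section
variable {A B : ℝ} {fl fr u0 : ℝ → ℝ} (sol : ABSol fl fr A B u0)

lemma superG {f : ℝ → ℝ} (hf : ContDiff ℝ 2 f) (cl : Continuous fl) (cr : Continuous fr) {O : Set (ℝ × ℝ)} (hO : IsOpen O)
    (hO1 : ∀ p ∈ O, 0 < p.2) (hO2 : ∀ p ∈ O, ∀ w, dflux fl fr p.1 w = f w) {k α x0 t0 : ℝ} (hp : (x0, t0) ∈ O)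
    (hL : LipT (fun p => |sol.u p.1 p.2 - k|) (fun p => Real.sign (sol.u p.1 p.2 - k) * (f (sol.u p.1 p.2) - f k)) O)
    (h : ∀ η > 0, ∃ r > 0, ∀ x t, |x - x0| + |t - t0| < r →
      UU sol (x0, t0) + k * (x - x0) + α * (t - t0) - η * (|x - x0| + |t - t0|) ≤ UU sol (x, t)) : 0 ≤ α + f k := by
  obtain ⟨K, hK⟩ := UU_lip sol cl cr
  obtain ⟨M, hM⟩ := sol.bdd
  set M' := max M |k| with hM'
  have hu : ∀ p : ℝ × ℝ, |sol.u p.1 p.2| ≤ M' := fun p => (hM _ _).trans (le_max_left _ _)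
  have hk : |k| ≤ M' := le_max_right _ _
  obtain ⟨Kf, hKf, hfl⟩ := f_lip hf M'
  have hC1 : ∀ p : ℝ × ℝ, |sol.u p.1 p.2 - k| ≤ 2 * M' := fun p => (abs_sub _ _).trans (by linarith [hu p])
  have hP : LipschitzWith ‖k‖₊ (fun x => k * (x - x0)) := by
    refine LipschitzWith.of_dist_le_mul fun x y => ?_
    rw [Real.dist_eq, Real.dist_eq, ← mul_sub, abs_mul, coe_nnnorm, Real.norm_eq_abs, sub_sub_sub_cancel_right]
  refine ET (U := UU sol) (u := fun p => sol.u p.1 p.2) (F := fun p => f (sol.u p.1 p.2)) (c := fun _ => k) (P := fun x => k * (x - x0))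
    (C := max (2 * M') (Kf * (2 * M'))) hO hp hK hP (by simp) (Eventually.of_forall fun x => ?_) ?_ (Kf := Kf) (fun p _ => hfl _ _ (hu p) hk) hKf
    sol.meas (hf.continuous.measurable.comp sol.meas) measurable_const (fun p => (hC1 p).trans (le_max_left _ _)) (fun p => ?_) hL h
  · simpa using ((hasDerivAt_id x).sub_const x0).const_mul k
  · filter_upwards [UU_ae sol cl cr] with p hp hpO
    have := hp (hO1 p hpO)
    rw [hO2 p hpO] at this
    exact this.2
  · exact (hfl _ _ (hu p) hk).trans ((mul_le_mul_of_nonneg_left (hC1 p) hKf).trans (le_max_right _ _))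

lemma right_side {a : ℝ} (ha : 0 < a) (hfl : ContDiff ℝ 2 fl) (hfr : ContDiff ℝ 2 fr)
    (hfr2 : ∀ w : ℝ, a ≤ deriv (deriv fr) w) : ∃ L g K, SideSol fr L g (fun x t => UU sol (x, t)) K := by
  obtain ⟨L, g, hLg⟩ := legendre ha hfr hfr2
  have cl := hfl.continuous
  have cr := hfr.continuous
  obtain ⟨K, hK⟩ := UU_lip sol cl cr
  refine ⟨L, g, K, hLg, fun x s y t => ?_, fun x1 x2 t1 t2 h1 h2 h3 h4 => ?_, fun x0 t0 k α hx ht h => ?_⟩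
  · have := hK.dist_le_mul (x, s) (y, t)
    rw [Real.dist_eq, Prod.dist_eq] at this
    refine this.trans (mul_le_mul_of_nonneg_left ?_ K.2)
    simp only [Real.dist_eq]
    exact max_le (by linarith [abs_nonneg (s - t)]) (by linarith [abs_nonneg (x - y)])
  · refine sub_line hLg hK ?_ h1 h2 h3 h4
    filter_upwards [UU_ae sol cl cr] with p hp hp1 hp2
    obtain ⟨e1, e2, e3⟩ := hp hp2
    refine ⟨e1, _, ?_, e3⟩
    rwa [dflux, if_neg hp1.not_gt] at e2
  · exact superG sol hfr cl cr ((isOpen_lt continuous_const continuous_fst).inter (isOpen_lt continuous_const continuous_snd))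
      (fun p hp => hp.2) (fun p hp w => by rw [dflux, if_neg (not_lt.2 (le_of_lt hp.1))]) ⟨hx, ht⟩ (kr_lip sol cr k) h

lemma left_side {a : ℝ} (ha : 0 < a) (hfl : ContDiff ℝ 2 fl) (hfr : ContDiff ℝ 2 fr)
    (hfl2 : ∀ w : ℝ, a ≤ deriv (deriv fl) w) : ∃ L g K, SideSol (fun p => fl (-p)) L g (fun x t => UU sol (-x, t)) K := by
  obtain ⟨L, g, hLg⟩ := legendre ha hfl hfl2
  have cl := hfl.continuous
  have cr := hfr.continuous
  obtain ⟨K, hK⟩ := UU_lip sol cl cr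
  have hK' : LipschitzWith K (fun p : ℝ × ℝ => UU sol (-p.1, p.2)) := by
    refine LipschitzWith.of_dist_le_mul fun p q => ?_
    have := hK.dist_le_mul (-p.1, p.2) (-q.1, q.2)
    rwa [Prod.dist_eq, dist_neg_neg, ← Prod.dist_eq] at this
  refine ⟨_, _, K, hLg.refl, fun x s y t => ?_, fun x1 x2 t1 t2 h1 h2 h3 h4 => ?_, fun x0 t0 k α hx ht h => ?_⟩
  · have := hK'.dist_le_mul (x, s) (y, t)
    rw [Real.dist_eq, Prod.dist_eq] at this
    refine this.trans (mul_le_mul_of_nonneg_left ?_ K.2)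
    simp only [Real.dist_eq]
    exact max_le (by linarith [abs_nonneg (s - t)]) (by linarith [abs_nonneg (x - y)])
  · refine sub_line (U := fun p : ℝ × ℝ => UU sol (-p.1, p.2)) hLg.refl hK' ?_ h1 h2 h3 h4
    have mp : MeasurePreserving (fun q : ℝ × ℝ => (-q.1, q.2)) (volume.prod volume) (volume.prod volume) :=
      (Measure.measurePreserving_neg volume).prod (MeasurePreserving.id volume)
    have hae := mp.quasiMeasurePreserving.ae (UU_ae sol cl cr)
    filter_upwards [hae] with p hp hp1 hp2
    obtain ⟨e1, e2, e3⟩ := hp hp2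
    refine ⟨?_, -sol.u (-p.1) p.2, ?_, ?_⟩
    · exact DifferentiableAt.comp (g := UU sol) (f := fun q : ℝ × ℝ => (-q.1, q.2)) p e1 (by fun_prop)
    · simp only [neg_neg]
      rwa [dflux, if_pos (by simpa using hp1)] at e2
    · have := HasDerivAt.comp (h₂ := fun y => UU sol (y, p.2)) p.1 e3 (hasDerivAt_neg p.1)
      exact this.congr_deriv (mul_neg_one _)
  · refine superG sol (x0 := -x0) (t0 := t0) hfl cl cr ((isOpen_lt continuous_fst continuous_const).inter (isOpen_lt continuous_const continuous_snd))
      (fun p hp => hp.2) (fun p hp w => by exact if_pos hp.1) ⟨by simpa using hx, ht⟩ (kl_lip sol cl (-k)) fun η hη => ?_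
    obtain ⟨r, hr, hb⟩ := h η hη
    refine ⟨r, hr, fun x t hxt => ?_⟩
    have e : |(-x) - x0| = |x - -x0| := by rw [← abs_neg]; congr 1; ring
    have := hb (-x) t (by rwa [e])
    rw [e, neg_neg] at this
    linarith

lemma int_super (hfl : ContDiff ℝ 2 fl) (hfr : ContDiff ℝ 2 fr) (hAB : fl A = fr B) (t0 α : ℝ) (ht0 : 0 < t0)
    (h : ∀ η > 0, ∃ r > 0, ∀ x t, 0 ≤ x → x + |t - t0| < r →
      UU sol (0, t0) + B * x + α * (t - t0) - η * (x + |t - t0|) ≤ UU sol (x, t) ∧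
      UU sol (-0, t0) + (-A) * x + α * (t - t0) - η * (x + |t - t0|) ≤ UU sol (-x, t)) : 0 ≤ α + fl A := by
  have cl := hfl.continuous
  have cr := hfr.continuous
  obtain ⟨K, hK⟩ := UU_lip sol cl cr
  obtain ⟨M, hM⟩ := sol.bdd
  set M' := max M (max |A| |B|) with hM'
  have hu : ∀ p : ℝ × ℝ, |sol.u p.1 p.2| ≤ M' := fun p => (hM _ _).trans (le_max_left _ _)
  have hA : |A| ≤ M' := (le_max_left _ _).trans (le_max_right _ _)
  have hB : |B| ≤ M' := (le_max_right _ _).trans (le_max_right _ _)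
  have hc : ∀ x, |cAB A B x| ≤ M' := fun x => by unfold cAB; split_ifs <;> assumption
  obtain ⟨K1, hK1, hl1⟩ := f_lip hfl M'
  obtain ⟨K2, hK2, hl2⟩ := f_lip hfr M'
  set Kf := K1 + K2 with hKf
  set F : ℝ × ℝ → ℝ := fun p => if p.1 = 0 then fl A else dflux fl fr p.1 (sol.u p.1 p.2) with hF
  have hC1 : ∀ p : ℝ × ℝ, |sol.u p.1 p.2 - cAB A B p.1| ≤ 2 * M' := fun p => (abs_sub _ _).trans (by linarith [hu p, hc p.1])
  have hFl : ∀ p, |F p - fl A| ≤ Kf * |sol.u p.1 p.2 - cAB A B p.1| := fun p => by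
    have q := abs_nonneg (sol.u p.1 p.2 - cAB A B p.1)
    rcases lt_trichotomy p.1 0 with h | h | h
    · simp only [hF, if_neg h.ne, dflux, if_pos h, cAB, if_pos h.le]
      simp only [cAB, if_pos h.le] at q
      have := hl1 (sol.u p.1 p.2) A (hu p) hA
      nlinarith
    · simp only [hF, if_pos h, sub_self, abs_zero]; positivity
    · simp only [hF, if_neg h.ne', dflux, if_neg h.not_gt, cAB, if_neg h.not_ge]
      simp only [cAB, if_neg h.not_ge] at q
      have := hl2 (sol.u p.1 p.2) B (hu p) hB
      rw [hAB]
      nlinarith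
  have hFm : Measurable F := Measurable.ite (measurable_fst (measurableSet_singleton 0)) measurable_const (dflux_meas cl cr sol.meas)
  have hne : ∀ᵐ p : ℝ × ℝ, p.1 ≠ 0 := Measure.quasiMeasurePreserving_fst.ae (Measure.ae_ne volume (0:ℝ))
  set P : ℝ → ℝ := fun x => A * min x 0 + B * max x 0 with hPdef
  have hP : ∃ KP, LipschitzWith KP P := by
    have a1 : LipschitzWith (max 1 0) (fun x : ℝ => min x 0) := LipschitzWith.id.min (LipschitzWith.const 0)
    have a2 : LipschitzWith (max 1 0) (fun x : ℝ => max x 0) := LipschitzWith.id.max (LipschitzWith.const 0)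
    exact ⟨_, ((lipschitzWith_smul A).comp a1).add ((lipschitzWith_smul B).comp a2)⟩
  obtain ⟨KP, hP⟩ := hP
  refine ET (U := UU sol) (u := fun p => sol.u p.1 p.2) (F := F) (c := cAB A B) (P := P) (O := {p | 0 < p.2}) (x0 := 0) (t0 := t0)
    (C := max (2 * M') (Kf * (2 * M'))) (isOpen_lt continuous_const continuous_snd) ht0 hK hP (by simp [hPdef]) ?_ ?_ (Kf := Kf)
    (fun p _ => hFl p) (by positivity) sol.meas hFm cAB_meas (fun p => (hC1 p).trans (le_max_left _ _))
    (fun p => (hFl p).trans ((mul_le_mul_of_nonneg_left (hC1 p) (by positivity)).trans (le_max_right _ _))) ?_ ?_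
  · filter_upwards [Measure.ae_ne volume (0:ℝ)] with x hx
    rcases lt_or_gt_of_ne hx with h | h
    · have : HasDerivAt (fun y => A * y) (A * 1) x := (hasDerivAt_id x).const_mul A
      simp only [cAB, if_pos h.le]
      refine (this.congr_of_eventuallyEq ?_).congr_deriv (mul_one _)
      filter_upwards [gt_mem_nhds h] with y hy
      simp [hPdef, min_eq_left (le_of_lt hy), max_eq_right (le_of_lt hy)]
    · have : HasDerivAt (fun y => B * y) (B * 1) x := (hasDerivAt_id x).const_mul B
      simp only [cAB, if_neg h.not_ge]
      refine (this.congr_of_eventuallyEq ?_).congr_deriv (mul_one _)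
      filter_upwards [lt_mem_nhds h] with y hy
      simp [hPdef, min_eq_right (le_of_lt hy), max_eq_left (le_of_lt hy)]
  · filter_upwards [UU_ae sol cl cr, hne] with p hp hpn hpO
    simp only [hF, if_neg hpn]
    exact (hp hpO).2
  · intro φ h1 h2 h3 h4
    have := if_lip sol cl cr φ h1 h2 h3 h4
    refine this.trans_eq (integral_congr_ae ?_)
    filter_upwards [hne] with p hpn
    have e : dflux fl fr p.1 (cAB A B p.1) = fl A := by
      rcases lt_or_gt_of_ne hpn with h | h
      · simp [dflux, cAB, h, h.le]
      · simp [dflux, cAB, h.not_gt, h.not_ge, hAB]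
    simp only [ifa, ifb, hF, if_neg hpn, e]
  · intro η hη
    obtain ⟨r, hr, hb⟩ := h η hη
    refine ⟨r, hr, fun x t hxt => ?_⟩
    rw [sub_zero] at hxt ⊢
    rcases le_total 0 x with h | h
    · rw [abs_of_nonneg h] at hxt ⊢
      have := (hb x t h hxt).1
      simp only [hPdef, min_eq_right h, max_eq_left h]
      linarith
    · rw [abs_of_nonpos h] at hxt ⊢
      have := (hb (-x) t (by linarith) hxt).2
      rw [neg_neg, neg_zero] at this
      simp only [hPdef, min_eq_left h, max_eq_right h]
      linarith

lemma UU_anti {a : ℝ} (ha : 0 < a) (hfl : ContDiff ℝ 2 fl) (hfr : ContDiff ℝ 2 fr)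
    (hfl2 : ∀ w : ℝ, a ≤ deriv (deriv fl) w) (hfr2 : ∀ w : ℝ, a ≤ deriv (deriv fr) w)
    (hAB : fl A = fr B) (hA' : deriv fl A ≤ 0) (hB' : 0 ≤ deriv fr B) (s t : ℝ) (hs : 0 ≤ s) (hst : s ≤ t) :
    UU sol (0, t) + fl A * t ≤ UU sol (0, s) + fl A * s := by
  have cl := hfl.continuous
  have cr := hfr.continuous
  have ht := hs.trans hst
  have e := intervalIntegral.integral_interval_sub_left (fp_ii sol cl cr 0 le_rfl ht) (fp_ii sol cl cr 0 le_rfl hs)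
  have h1 : ∫ _ in s..t, fl A ≤ ∫ τ in s..t, fp sol 0 τ := by
    refine intervalIntegral.integral_mono_ae_restrict hst (by simp) (fp_ii sol cl cr 0 hs ht) ?_
    rw [EventuallyLE, ae_restrict_iff' measurableSet_Icc]
    filter_upwards [interface_ge sol ha hfl hfr hfl2 hfr2 hAB hA' hB', Measure.ae_ne volume (0:ℝ)] with τ h hne hm
    have := (h (lt_of_le_of_ne (hs.trans hm.1) (Ne.symm hne))).2
    simpa [fp, dflux] using this
  simp only [intervalIntegral.integral_const, smul_eq_mul] at h1
  simp only [UU, max_eq_left ht, max_eq_left hs, intervalIntegral.integral_same]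
  linarith
end

section
variable {A B : ℝ} {fl fr u0 : ℝ → ℝ} (sol : ABSol fl fr A B u0)

lemma cs_base (γ y : ℝ) : (charSet 0 fl fr γ sol y).Nonempty := by
  refine ⟨fun _ => y, ⟨⟨0, (LipschitzWith.const y).lipschitzOnWith⟩, ?_⟩, rfl⟩
  have : volume.restrict (Icc (0:ℝ) 0) = 0 := by simp
  rw [this]; simp

lemma cs_extend {γ s T x x' w : ℝ} (hs : 0 ≤ s) (hsT : s ≤ T) (h : (charSet s fl fr γ sol x).Nonempty)
    (hx' : x' = x + w * (T - s))
    (hgood : ∀ᵐ t, s < t → t < T →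
      (x + w * (t - s) < 0 → deriv fl (sol.um (x + w * (t - s)) t) = w ∧ deriv fl (sol.up (x + w * (t - s)) t) = w) ∧
      (0 < x + w * (t - s) → deriv fr (sol.um (x + w * (t - s)) t) = w ∧ deriv fr (sol.up (x + w * (t - s)) t) = w) ∧
      (x + w * (t - s) = 0 → fl (sol.um 0 t) = γ ∧ fr (sol.up 0 t) = γ)) :
    (charSet T fl fr γ sol x').Nonempty := by
  obtain ⟨ζ1, ⟨⟨K, hK⟩, hae⟩, hend⟩ := h
  set ζ : ℝ → ℝ := fun t => if t ≤ s then ζ1 t else x + w * (t - s) with hζ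
  have e1 : ∀ t, t ≤ s → ζ t = ζ1 t := fun t ht => if_pos ht
  have e2 : ∀ t, s ≤ t → ζ t = x + w * (t - s) := fun t ht => by
    rcases ht.eq_or_lt with rfl | ht
    · rw [e1 _ le_rfl, hend]; ring
    · exact if_neg ht.not_ge
  have hlip : ∀ a b, 0 ≤ a → a ≤ b → b ≤ T → |ζ a - ζ b| ≤ (K + |w|) * |a - b| := by
    have hle : ∀ a b, 0 ≤ a → a ≤ b → b ≤ s → |ζ a - ζ b| ≤ K * (b - a) := fun a b h0 hab hb => by
      rw [e1 a (hab.trans hb), e1 b hb]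
      have := hK.dist_le_mul a ⟨h0, hab.trans hb⟩ b ⟨h0.trans hab, hb⟩
      rwa [Real.dist_eq, Real.dist_eq, abs_sub_comm a b, abs_of_nonneg (by linarith : 0 ≤ b - a)] at this
    have hge : ∀ a b, s ≤ a → a ≤ b → |ζ a - ζ b| ≤ |w| * (b - a) := fun a b h0 hab => by
      rw [e2 a h0, e2 b (h0.trans hab), show x + w * (a - s) - (x + w * (b - s)) = w * (a - b) by ring, abs_mul, abs_sub_comm a b,
        abs_of_nonneg (by linarith : 0 ≤ b - a)]
    intro a b h0 hab hb
    have hw := abs_nonneg w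
    have hk : (0:ℝ) ≤ K := K.2
    rw [abs_sub_comm a b, abs_of_nonneg (by linarith : 0 ≤ b - a)]
    rcases le_total b s with hbs | hbs
    · have := hle a b h0 hab hbs
      nlinarith
    rcases le_total s a with hsa | hsa
    · have := hge a b hsa hab
      nlinarith
    · have r1 := hle a s h0 hsa le_rfl
      have r2 := hge s b le_rfl hbs
      have r3 := abs_sub_le (ζ a) (ζ s) (ζ b)
      nlinarith
  refine ⟨ζ, ⟨⟨K + ‖w‖₊, LipschitzOnWith.of_dist_le_mul fun a ha b hb => ?_⟩, ?_⟩, by rw [e2 T hsT, hx']⟩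
  · rw [Real.dist_eq, Real.dist_eq, NNReal.coe_add, coe_nnnorm, Real.norm_eq_abs]
    rcases le_total a b with hab | hab
    · exact hlip a b ha.1 hab hb.2
    · rw [abs_sub_comm, abs_sub_comm a b]; exact hlip b a hb.1 hab ha.2
  · rw [ae_restrict_iff' measurableSet_Icc] at hae ⊢
    filter_upwards [hae, hgood, Measure.ae_ne volume s, Measure.ae_ne volume T] with t h1 h2 hne hneT hm
    rcases lt_or_gt_of_ne hne with hts | hts
    · have hev : ζ =ᶠ[nhds t] ζ1 := by
        filter_upwards [gt_mem_nhds hts] with τ hτ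
        exact e1 τ (le_of_lt hτ)
      rw [e1 t hts.le]
      obtain ⟨a1, a2, a3⟩ := h1 ⟨hm.1, hts.le⟩
      exact ⟨fun h => ⟨(a1 h).1.congr_of_eventuallyEq hev, (a1 h).2⟩, fun h => ⟨(a2 h).1.congr_of_eventuallyEq hev, (a2 h).2⟩, a3⟩
    · have hev : ζ =ᶠ[nhds t] fun τ => x + w * (τ - s) := by
        filter_upwards [lt_mem_nhds hts] with τ hτ
        exact e2 τ (le_of_lt hτ)
      have hd : HasDerivAt ζ w t := by
        have : HasDerivAt (fun τ => x + w * (τ - s)) (w * 1) t := (((hasDerivAt_id t).sub_const s).const_mul w).const_add x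
        exact (this.congr_of_eventuallyEq hev).congr_deriv (mul_one _)
      rw [e2 t hts.le]
      obtain ⟨a1, a2, a3⟩ := h2 hts (lt_of_le_of_ne hm.2 hneT)
      refine ⟨fun h => ?_, fun h => ?_, a3⟩
      · rw [(a1 h).1, (a1 h).2]; exact ⟨hd, rfl⟩
      · rw [(a2 h).1, (a2 h).2]; exact ⟨hd, rfl⟩

lemma pos_aux {x1 x2 s T t : ℝ} (h1 : 0 ≤ x1) (h2 : 0 ≤ x2) (h12 : 0 < x1 + x2) (hs : s < t) (ht : t < T) :
    0 < x1 + (x2 - x1) / (T - s) * (t - s) := by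
  have hp : 0 < T - s := by linarith
  have e : x1 + (x2 - x1) / (T - s) * (t - s) = ((T - t) * x1 + (t - s) * x2) / (T - s) := by field_simp; ring
  rw [e]
  refine div_pos ?_ hp
  rcases h1.eq_or_lt with rfl | h
  · have := mul_pos (sub_pos.2 hs) (by linarith : 0 < x2)
    linarith
  · have := mul_pos (sub_pos.2 ht) h
    have := mul_nonneg (sub_pos.2 hs).le h2
    linarith

lemma cs_right {γ : ℝ} {L g : ℝ → ℝ} {K : ℝ} (S : SideSol fr L g (fun x t => UU sol (x, t)) K) {x1 x2 s T : ℝ}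
    (h1 : 0 ≤ x1) (h2 : 0 ≤ x2) (h12 : 0 < x1 + x2) (hs : 0 ≤ s) (hsT : s < T)
    (he : UU sol (x1, s) + (T - s) * L ((x2 - x1) / (T - s)) ≤ UU sol (x2, T))
    (h : (charSet s fl fr γ sol x1).Nonempty) : (charSet T fl fr γ sol x2).Nonempty := by
  have hp : 0 < T - s := by linarith
  have hv : (x2 - x1) / (T - s) * (T - s) = x2 - x1 := by field_simp
  refine cs_extend sol hs hsT.le h (w := (x2 - x1) / (T - s)) (by rw [hv]; ring) (Eventually.of_forall fun t t1 t2 => ?_)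
  have hz := pos_aux h1 h2 h12 t1 t2
  obtain ⟨m1, m2⟩ := UU_um_up sol (hs.trans_lt t1) (S.segment h1 h2 hs hv he t1 t2 hz)
  refine ⟨fun h => absurd h hz.not_gt, fun _ => ?_, fun h => absurd h hz.ne'⟩
  rw [m1, m2, S.leg.dfg]; exact ⟨rfl, rfl⟩

lemma cs_left {γ : ℝ} {L g : ℝ → ℝ} {K : ℝ} (S : SideSol (fun p => fl (-p)) L g (fun x t => UU sol (-x, t)) K) {x1 x2 s T : ℝ}
    (h1 : 0 ≤ x1) (h2 : 0 ≤ x2) (h12 : 0 < x1 + x2) (hs : 0 ≤ s) (hsT : s < T)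
    (he : UU sol (-x1, s) + (T - s) * L ((x2 - x1) / (T - s)) ≤ UU sol (-x2, T))
    (h : (charSet s fl fr γ sol (-x1)).Nonempty) : (charSet T fl fr γ sol (-x2)).Nonempty := by
  have hp : 0 < T - s := by linarith
  have hv : (x2 - x1) / (T - s) * (T - s) = x2 - x1 := by field_simp
  refine cs_extend sol hs hsT.le h (w := -((x2 - x1) / (T - s))) (by rw [neg_mul, hv]; ring) (Eventually.of_forall fun t t1 t2 => ?_)
  have hz := pos_aux h1 h2 h12 t1 t2
  have hd := S.segment h1 h2 hs hv he t1 t2 hz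
  have hdf := S.leg.dfg ((x2 - x1) / (T - s))
  rw [deriv_comp_neg] at hdf
  set v := (x2 - x1) / (T - s)
  have ez : -x1 + -v * (t - s) = -(x1 + v * (t - s)) := by ring
  rw [ez]
  set z := x1 + v * (t - s)
  have hd2 : HasDerivAt (fun y => UU sol (y, t)) (-g v) (-z) := by
    have hd' : HasDerivAt (fun y => UU sol (-y, t)) (g v) (-(-z)) := by rwa [neg_neg]
    have := HasDerivAt.comp (h₂ := fun y => UU sol (-y, t)) (-z) hd' (hasDerivAt_neg (-z))
    refine (this.congr_of_eventuallyEq (Eventually.of_forall fun y => ?_)).congr_deriv (mul_neg_one _)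
    simp
  obtain ⟨m1, m2⟩ := UU_um_up sol (hs.trans_lt t1) hd2
  refine ⟨fun _ => ?_, fun h => absurd h (by linarith), fun h => absurd h (by linarith)⟩
  rw [m1, m2]
  constructor <;> linarith
end

/-- existence of an AB-genuine/interface characteristic reaching
any point `x` at time `T` (Proposition 4.1 (i) of the paper). -/
theorem charSet_nonempty
    {T a θl θr A B : ℝ} {fl fr : ℝ → ℝ}
    (hT : 0 < T)
    (hflC : ContDiff ℝ 2 fl) (hfrC : ContDiff ℝ 2 fr)
    (ha : 0 < a)
    (hfl2 : ∀ w : ℝ, a ≤ deriv (deriv fl) w)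
    (hfr2 : ∀ w : ℝ, a ≤ deriv (deriv fr) w)
    (hf0 : fl 0 = fr 0) (hf1 : fl 1 = fr 1)
    (hθl : deriv fl θl = 0) (hθr : deriv fr θr = 0)
    (hθl0 : 0 ≤ θl) (hθr1 : θr ≤ 1)
    (hAB : fl A = fr B) (hA' : deriv fl A ≤ 0) (hB' : 0 ≤ deriv fr B)
    {u0 : ℝ → ℝ} (hu0 : IsLinf u0) (sol : ABSol fl fr A B u0) :
    ∀ x : ℝ, (charSet T fl fr (fl A) sol x).Nonempty := by
  have cl := hflC.continuous
  have cr := hfrC.continuous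
  obtain ⟨L1, g1, K1, S1⟩ := right_side sol ha hflC hfrC hfr2
  obtain ⟨L2, g2, K2, S2⟩ := left_side sol ha hflC hfrC hfl2
  have hanti := UU_anti sol ha hflC hfrC hfl2 hfr2 hAB hA' hB'
  have interface : ∀ t, 0 ≤ t → (charSet t fl fr (fl A) sol 0).Nonempty := by
    intro T hT
    obtain ⟨s0, h0, h1, he, hcase⟩ := stepE (c1 := B) (c2 := -A) (γ := fl A) (T := T) S1 S2 hAB.symm (by simp) (by simp) hanti
      (int_super sol hflC hfrC hAB) hT
    have hs0 : (charSet s0 fl fr (fl A) sol 0).Nonempty := by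
      rcases hcase with h | ⟨hp, y, hy, h⟩ | ⟨hp, y, hy, h⟩
      · rw [h]; exact cs_base sol _ _
      · exact cs_right sol S1 hy.le le_rfl (by linarith) le_rfl hp (by simpa using h) (cs_base sol _ _)
      · have := cs_left sol (γ := fl A) (x1 := y) (x2 := 0) S2 hy.le le_rfl (by linarith) le_rfl hp (by simpa using h) (cs_base sol _ _)
        rwa [neg_zero] at this
    refine cs_extend sol h0 h1 hs0 (w := 0) (by ring) ?_
    filter_upwards [UU_dt sol cl cr 0, interface_ge sol ha hflC hfrC hfl2 hfr2 hAB hA' hB'] with t d1 d2 t1 t2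
    have tp : 0 < t := h0.trans_lt t1
    have hd : HasDerivAt (fun s => UU sol (0, s)) (-fl A) t := by
      have : HasDerivAt (fun s => (UU sol (0, T) + fl A * T) - fl A * s) (-(fl A * 1)) t :=
        ((hasDerivAt_id t).const_mul (fl A)).const_sub _
      refine (this.congr_of_eventuallyEq ?_).congr_deriv (by ring)
      filter_upwards [Ioo_mem_nhds t1 t2] with s hs
      have := hanti s0 s h0 hs.1.le
      have := hanti s T (h0.trans hs.1.le) hs.2.le
      linarith
    have e := (d1 tp).unique hd
    simp only [fp, dflux, lt_irrefl, if_false, neg_inj] at e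
    have e2 := (d2 tp).1
    simp only [zero_mul, add_zero, lt_irrefl, false_imp_iff, true_and, true_imp_iff]
    exact ⟨e2.trans e, e⟩
  intro x
  rcases lt_trichotomy x 0 with hx | hx | hx
  · obtain ⟨y, s, hb, hD⟩ := S2.stepD (x0 := -x) (by linarith : 0 < -x) hT
    have := hb
    have key : (charSet T fl fr (fl A) sol (- -x)).Nonempty := by
      rcases hb with ⟨rfl, hy⟩ | ⟨rfl, h1, h2⟩
      · exact cs_left sol S2 hy (by linarith) (by linarith) le_rfl hT hD (cs_base sol _ _)
      · exact cs_left sol S2 le_rfl (by linarith) (by linarith) h1 h2 hD (by rw [neg_zero]; exact interface s h1)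
    rwa [neg_neg] at key
  · rw [hx]; exact interface T hT.le
  · obtain ⟨y, s, hb, hD⟩ := S1.stepD hx hT
    rcases hb with ⟨rfl, hy⟩ | ⟨rfl, h1, h2⟩
    · exact cs_right sol S1 hy hx.le (by linarith) le_rfl hT hD (cs_base sol _ _)
    · exact cs_right sol S1 le_rfl hx.le (by linarith) h1 h2 hD (interface s h1)
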